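/- Let G be a k-connected maximal 1-plane graph on n vertices with 3 ≤ k ≤ 5, where G is immovable if k = 3, n ≥ 5 if k = 3, and n ≥ 6 if k ≥ 4. Then every blue vertex of the dual graph G_P^* is adjacent to at most 5 − k blue vertices of G_P^*. -/

import Mathlib

open Set

/-- A drawing of a simple graph in the plane: each vertex is assigned a distinct point,
and each edge a continuous arc (an injective continuous curve) joining its endpoints. -/
structure Drawing {V : Type} (G : SimpleGraph V) where
  pos : V → ℝ × ℝ
  pos_inj : Function.Injective pos
  arc : ∀ ⦃u v : V⦄, G.Adj u v → Set (ℝ × ℝ)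
  arc_symm : ∀ ⦃u v : V⦄ (h : G.Adj u v), arc h.symm = arc h
  arc_isArc : ∀ ⦃u v : V⦄ (h : G.Adj u v), ∃ γ : ℝ → ℝ × ℝ,
    ContinuousOn γ (Set.Icc 0 1) ∧ Set.InjOn γ (Set.Icc 0 1) ∧
    γ 0 = pos u ∧ γ 1 = pos v ∧ arc h = γ '' Set.Icc (0 : ℝ) 1

namespace Drawing

variable {V : Type} {G : SimpleGraph V} (D : Drawing G)

/-- The interior of the arc of an edge (the arc minus its endpoints). -/
def arcInt ⦃u v : V⦄ (h : G.Adj u v) : Set (ℝ × ℝ) :=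
  D.arc h \ {D.pos u, D.pos v}

/-- The interior of the drawing of an abstract edge `e : Sym2 V`. -/
def edgeInt (e : Sym2 V) : Set (ℝ × ℝ) :=
  {p | ∃ (u v : V) (h : G.Adj u v), e = s(u, v) ∧ p ∈ D.arcInt h}

/-- Two edges cross if they are distinct and their interiors meet. -/
def Cross (e f : Sym2 V) : Prop :=
  e ≠ f ∧ (D.edgeInt e ∩ D.edgeInt f).Nonempty

/-- The set of crossing points of the drawing. -/
def crossingSet : Set (ℝ × ℝ) :=
  {p | ∃ e f : Sym2 V, e ≠ f ∧ p ∈ D.edgeInt e ∧ p ∈ D.edgeInt f}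

/-- A good drawing: no vertex lies on the arc of a non-incident edge, any two distinct
edges meet in at most one interior point, and edges sharing an endpoint do not cross. -/
def IsGood : Prop :=
  (∀ (w : V) ⦃u v : V⦄ (h : G.Adj u v), D.pos w ∈ D.arc h → w = u ∨ w = v) ∧
  (∀ e f : Sym2 V, e ≠ f → (D.edgeInt e ∩ D.edgeInt f).Subsingleton) ∧
  (∀ ⦃u v w : V⦄ (h₁ : G.Adj u v) (h₂ : G.Adj u w), v ≠ w →
    D.arcInt h₁ ∩ D.arcInt h₂ = ∅)

/-- A drawing is 1-planar if every edge is crossed at most once. -/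
def IsOnePlanar : Prop :=
  ∀ e : Sym2 V, {f : Sym2 V | D.Cross e f}.Subsingleton

/-- The number of crossings of the drawing (each unordered pair of crossing edges
contributes one crossing). -/
noncomputable def crNum : ℕ :=
  Set.ncard {p : Sym2 V × Sym2 V | D.Cross p.1 p.2} / 2

/-- The subset of the plane covered by the drawing. -/
def drawingSet : Set (ℝ × ℝ) :=
  Set.range D.pos ∪ ⋃ (u : V) (v : V) (h : G.Adj u v), D.arc h

/-- A face of the drawing: a connected component of the complement of the drawing. -/
def IsFace (F : Set (ℝ × ℝ)) : Prop :=
  ∃ p ∉ D.drawingSet, F = connectedComponentIn D.drawingSetᶜ p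

/-- The set `∂(F)` of vertices on the boundary of a face `F`. -/
def faceVerts (F : Set (ℝ × ℝ)) : Set V :=
  {v | D.pos v ∈ frontier F}

/-- A true face of the planarization `G^×`: a face of the drawing whose boundary
contains no crossing point (i.e. it is incident with no fake vertex). -/
def IsTrueFace (F : Set (ℝ × ℝ)) : Prop :=
  D.IsFace F ∧ ∀ p ∈ D.crossingSet, p ∉ frontier F

/-- Two faces are adjacent if their boundaries share a common edge of the planarization,
i.e. they share a boundary point that is neither a vertex nor a crossing point. -/
def FaceAdj (F₁ F₂ : Set (ℝ × ℝ)) : Prop :=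
  F₁ ≠ F₂ ∧ ∃ p, p ∈ frontier F₁ ∧ p ∈ frontier F₂ ∧
    p ∉ Set.range D.pos ∧ p ∉ D.crossingSet

/-- The planarization `G^×` (crossings made into vertices of degree `4`) is a
triangulation: every face of the drawing has exactly three vertices of `G^×`
(true vertices or crossing points) on its boundary. -/
def PlanarizationIsTriangulation : Prop :=
  ∀ F : Set (ℝ × ℝ), D.IsFace F →
    ((Set.range D.pos ∪ D.crossingSet) ∩ frontier F).ncard = 3

/-- A maximal 1-plane graph: the drawing is good and 1-planar, and no edge between two
distinct non-adjacent vertices can be added to the drawing so that the result is still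
a good 1-planar drawing. -/
def IsMaximalOnePlane : Prop :=
  D.IsGood ∧ D.IsOnePlanar ∧
  ∀ u v : V, u ≠ v → ¬G.Adj u v →
    ∀ D' : Drawing (G ⊔ SimpleGraph.fromEdgeSet {s(u, v)}),
      D'.pos = D.pos →
      (∀ ⦃x y : V⦄ (h : G.Adj x y),
        D'.arc ((SimpleGraph.sup_adj _ _ _ _).mpr (Or.inl h)) = D.arc h) →
      ¬(D'.IsGood ∧ D'.IsOnePlanar)

/-- A maximal 1-plane graph is immovable if its number of crossings does not exceed that
of any good 1-planar drawing obtained from it by redrawing exactly one edge. -/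
def Immovable : Prop :=
  ∀ D' : Drawing G, D'.IsGood → D'.IsOnePlanar → D'.pos = D.pos →
    (∃ (u v : V) (_ : G.Adj u v), ∀ ⦃x y : V⦄ (h' : G.Adj x y),
      s(x, y) ≠ s(u, v) → D'.arc h' = D.arc h') →
    D.crNum ≤ D'.crNum

/-- The drawing induced on a subgraph. -/
def restrict {H : SimpleGraph V} (hle : H ≤ G) : Drawing H where
  pos := D.pos
  pos_inj := D.pos_inj
  arc := fun _ _ h => D.arc (hle h)
  arc_symm := fun _ _ h => D.arc_symm (hle h)
  arc_isArc := fun _ _ h => D.arc_isArc (hle h)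

/-- `H` is a planar skeleton `G_P` of the 1-plane graph `(G, D)`: it is obtained from `G`
by removing exactly one edge from each pair of crossing edges. -/
def IsPlanarSkeleton {H : SimpleGraph V} (_ : H ≤ G) : Prop :=
  (∀ e f : Sym2 V, D.Cross e f → (e ∈ H.edgeSet ↔ f ∉ H.edgeSet)) ∧
  ∀ e ∈ G.edgeSet, (¬∃ f, D.Cross e f) → e ∈ H.edgeSet

/-- `c_G(v)`: the number of crossing edges of the drawing incident with `v`. -/
noncomputable def cDeg (v : V) : ℕ :=
  Set.ncard {w : V | G.Adj v w ∧ ∃ f, D.Cross s(v, w) f}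

end Drawing

/-- The crossing number of a graph: the least number of crossings in a good drawing. -/
noncomputable def crossingNumber {V : Type} (G : SimpleGraph V) : ℕ :=
  sInf {n | ∃ D : Drawing G, D.IsGood ∧ D.crNum = n}

/-- A graph is `k`-connected if it stays connected after deleting any set of fewer than
`k` vertices. -/
def KConnected {V : Type} (G : SimpleGraph V) (k : ℕ) : Prop :=
  ∀ S : Set V, S.ncard < k → (G.induce Sᶜ).Connected

/-- A graph is 1-planar if it admits a good 1-planar drawing. -/
def Is1Planar {V : Type} (G : SimpleGraph V) : Prop :=
  ∃ D : Drawing G, D.IsGood ∧ D.IsOnePlanar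

/-- A maximal 1-planar graph: 1-planar, and adding any edge between distinct
non-adjacent vertices destroys 1-planarity. -/
def IsMaximal1Planar {V : Type} (G : SimpleGraph V) : Prop :=
  Is1Planar G ∧ ∀ u v : V, u ≠ v → ¬G.Adj u v →
    ¬Is1Planar (G ⊔ SimpleGraph.fromEdgeSet {s(u, v)})

namespace OPl

/-- Coordinates of a point of the plane as a complex number. -/
def cx (z : ℝ × ℝ) : ℂ := ⟨z.1, z.2⟩

lemma cx_eq (z : ℝ × ℝ) : cx z = Complex.equivRealProdCLM.symm z := by
  simp [cx, Complex.ext_iff]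

lemma continuous_cx : Continuous cx := by
  have : cx = fun z => Complex.equivRealProdCLM.symm z := funext cx_eq
  rw [this]; exact Complex.equivRealProdCLM.symm.continuous

lemma cx_inj {z w : ℝ × ℝ} (h : cx z = cx w) : z = w := by
  simp only [cx_eq] at h
  exact Complex.equivRealProdCLM.symm.injective h

lemma cx_sub_ne {z w : ℝ × ℝ} (h : z ≠ w) : cx z - cx w ≠ 0 :=
  fun h' => h (cx_inj (sub_eq_zero.mp h'))

def HasLog (f : ℝ × ℝ → ℂ) (K : Set (ℝ × ℝ)) : Prop :=
  ∃ φ : ℝ × ℝ → ℂ, ContinuousOn φ K ∧ ∀ z ∈ K, f z = Complex.exp (φ z)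

lemma HasLog.mono {f : ℝ × ℝ → ℂ} {K L : Set (ℝ × ℝ)} (h : HasLog f K) (hL : L ⊆ K) :
    HasLog f L := by
  obtain ⟨φ, h1, h2⟩ := h
  exact ⟨φ, h1.mono hL, fun z hz => h2 z (hL hz)⟩

/-- Two logarithms of the same function differ by a constant on a preconnected set. -/
lemma log_const {φ ψ : ℝ × ℝ → ℂ} {S : Set (ℝ × ℝ)} (hS : IsPreconnected S)
    (hφ : ContinuousOn φ S) (hψ : ContinuousOn ψ S)
    (h : ∀ z ∈ S, Complex.exp (φ z) = Complex.exp (ψ z)) {x y : ℝ × ℝ} (hx : x ∈ S) (hy : y ∈ S) :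
    φ x - ψ x = φ y - ψ y := by
  have hxx := h x hx
  have key := Complex.isCoveringMap_exp.eqOn_of_comp_eqOn (g₁ := φ)
    (g₂ := fun z => ψ z + (φ x - ψ x)) hS hφ (hψ.add continuousOn_const)
    (fun z hz => by
      apply Subtype.ext
      simp only [Function.comp]
      rw [Complex.exp_add, Complex.exp_sub, hxx, div_self (Complex.exp_ne_zero _), mul_one, h z hz])
    hx (by ring)
  have := key hy
  simp only at this
  rw [this]; ring

lemma glue {f φ ψ : ℝ × ℝ → ℂ} {A B : Set (ℝ × ℝ)} (hA : IsClosed A) (hB : IsClosed B)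
    (hφ : ContinuousOn φ A) (hψ : ContinuousOn ψ B)
    (h1 : ∀ z ∈ A, f z = Complex.exp (φ z)) (h2 : ∀ z ∈ B, f z = Complex.exp (ψ z))
    (h : ∀ z ∈ A ∩ B, φ z = ψ z) : HasLog f (A ∪ B) := by
  classical
  refine ⟨A.piecewise φ ψ, ?_, ?_⟩
  · apply ContinuousOn.union_of_isClosed _ _ hA hB
    · exact hφ.congr (fun z hz => by simp [hz])
    · refine hψ.congr (fun z hz => ?_)
      by_cases hzA : z ∈ A
      · simp [hzA, h z ⟨hzA, hz⟩]
      · simp [hzA]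
  · intro z hz
    by_cases hzA : z ∈ A
    · simp [hzA, h1 z hzA]
    · simp [hzA, h2 z (hz.resolve_left hzA)]

lemma HasLog.union {f : ℝ × ℝ → ℂ} {A B : Set (ℝ × ℝ)} (hA : IsClosed A) (hB : IsClosed B)
    (hAB : IsPreconnected (A ∩ B)) (h1 : HasLog f A) (h2 : HasLog f B) : HasLog f (A ∪ B) := by
  obtain ⟨φ, hφ, h1⟩ := h1
  obtain ⟨ψ, hψ, h2⟩ := h2
  rcases (A ∩ B).eq_empty_or_nonempty with h0 | ⟨x, hx⟩
  · exact glue hA hB hφ hψ h1 h2 (by simp [h0])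
  · refine glue hA hB hφ (ψ := fun z => ψ z + (φ x - ψ x)) (hψ.add continuousOn_const) h1 ?_ ?_
    · intro z hz
      rw [Complex.exp_add, Complex.exp_sub, ← h1 x hx.1, ← h2 x hx.2, h2 z hz, div_self, mul_one]
      rw [h2 x hx.2]; exact Complex.exp_ne_zero _
    · intro z hz
      have := log_const hAB (hφ.mono inter_subset_left) (hψ.mono inter_subset_right)
        (fun w hw => by rw [← h1 w hw.1, ← h2 w hw.2]) hx hz
      simp only [this]; ring

/-- The quotient function `(z - p) / (z - q)`. -/
noncomputable def ratio (p q : ℝ × ℝ) (z : ℝ × ℝ) : ℂ := (cx z - cx p) / (cx z - cx q)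

lemma ratio_ne {p q z : ℝ × ℝ} (hp : z ≠ p) (hq : z ≠ q) : ratio p q z ≠ 0 :=
  div_ne_zero (cx_sub_ne hp) (cx_sub_ne hq)

lemma continuousOn_ratio {p q : ℝ × ℝ} {K : Set (ℝ × ℝ)} (hq : q ∉ K) :
    ContinuousOn (ratio p q) K := by
  apply ContinuousOn.div
  · exact (continuous_cx.sub continuous_const).continuousOn
  · exact (continuous_cx.sub continuous_const).continuousOn
  · intro z hz; exact cx_sub_ne (fun h => hq (h ▸ hz))

lemma hasLog_ratio_of_preconnected {K S : Set (ℝ × ℝ)} (hK : IsClosed K) (hS : IsPreconnected S)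
    (hSK : Disjoint S K) {p q : ℝ × ℝ} (hp : p ∈ S) (hq : q ∈ S) : HasLog (ratio p q) K := by
  have hne : ∀ x ∈ S, ∀ z ∈ K, cx z - cx x ≠ 0 := fun x hx z hz =>
    cx_sub_ne (fun h => Set.disjoint_left.mp hSK hx (h ▸ hz))
  refine hS.induction₂ (fun p q => HasLog (ratio p q) K) ?_ ?_ ?_ hp hq
  · intro x hx
    have hxK : x ∉ K := Set.disjoint_left.mp hSK hx
    -- a ball in the complex coordinates
    have hKo : Kᶜ ∈ nhds x := hK.isOpen_compl.mem_nhds hxK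
    have : ∃ r > 0, ∀ z, ‖cx z - cx x‖ < r → z ∉ K := by
      have h1 : Filter.comap cx (nhds (cx x)) = nhds x := by
        have : Topology.IsInducing cx := by
          have : cx = fun z => Complex.equivRealProdCLM.symm z := funext cx_eq
          rw [this]; exact Complex.equivRealProdCLM.symm.toHomeomorph.isInducing
        exact (this.nhds_eq_comap x).symm
      rw [← h1, (Metric.nhds_basis_ball.comap cx).mem_iff] at hKo
      obtain ⟨r, hr, h⟩ := hKo
      refine ⟨r, hr, fun z hz => h ?_⟩
      simpa [dist_eq_norm] using hz
    obtain ⟨r, hr, hball⟩ := this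
    have hev : ∀ᶠ y in nhds x, ‖cx y - cx x‖ < r := by
      have : Filter.Tendsto (fun y => ‖cx y - cx x‖) (nhds x) (nhds 0) := by
        have h := (continuous_cx.sub (continuous_const (y := cx x))).norm.tendsto x
        simpa using h
      exact this.eventually (gt_mem_nhds hr)
    refine Filter.Eventually.mono (Filter.Eventually.filter_mono nhdsWithin_le_nhds hev) (fun y hy => ?_)
    have hyK : y ∉ K := hball y hy
    have hslit : ∀ z ∈ K, ratio x y z ∈ Complex.slitPlane ∧ ratio x y z ≠ 0 := by
      intro z hz
      have h1 : cx z - cx x ≠ 0 := hne x hx z hz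
      have h2 : cx z - cx y ≠ 0 := cx_sub_ne (fun h => hyK (h ▸ hz))
      have hzr : r ≤ ‖cx z - cx x‖ := by
        by_contra h; exact hball z (not_le.mp h) hz
      have hlt : ‖(cx z - cx y) / (cx z - cx x) - 1‖ < 1 := by
        have : (cx z - cx y) / (cx z - cx x) - 1 = -((cx y - cx x) / (cx z - cx x)) := by
          field_simp; ring
        rw [this, norm_neg, norm_div, div_lt_one (norm_pos_iff.mpr h1)]
        linarith
      have hre : 0 < ((cx z - cx y) / (cx z - cx x)).re := by
        have := (Complex.abs_re_le_norm ((cx z - cx y) / (cx z - cx x) - 1)).trans_lt hlt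
        rw [abs_lt] at this
        simp only [Complex.sub_re, Complex.one_re] at this
        linarith [this.1]
      have hinv : ratio x y z = ((cx z - cx y) / (cx z - cx x))⁻¹ := by
        simp [ratio]
      refine ⟨?_, div_ne_zero h1 h2⟩
      rw [hinv]
      left
      rw [Complex.inv_re]
      exact div_pos hre (Complex.normSq_pos.mpr (div_ne_zero h2 h1))
    refine ⟨fun z => Complex.log (ratio x y z), ?_, ?_⟩
    · exact ContinuousOn.clog (continuousOn_ratio hyK) (fun z hz => (hslit z hz).1)
    · intro z hz
      exact (Complex.exp_log (hslit z hz).2).symm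
  · rintro x y w hx hy hw ⟨φ, hφ, h1⟩ ⟨ψ, hψ, h2⟩
    refine ⟨fun z => φ z + ψ z, hφ.add hψ, fun z hz => ?_⟩
    rw [Complex.exp_add, ← h1 z hz, ← h2 z hz]
    have := hne x hx z hz
    have := hne y hy z hz
    have := hne w hw z hz
    simp only [ratio]; field_simp
  · rintro x y hx hy ⟨φ, hφ, h1⟩
    refine ⟨fun z => - φ z, hφ.neg, fun z hz => ?_⟩
    rw [Complex.exp_neg, ← h1 z hz]
    simp [ratio]

/-- Continuous nonvanishing functions on simply connected spaces have logarithms. -/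
lemma exists_log {X : Type} [TopologicalSpace X] [SimplyConnectedSpace X]
    [LocallyPathConnectedSpace X] (g : X → ℂ) (hg : Continuous g) (h0 : ∀ x, g x ≠ 0) (x0 : X) :
    ∃ φ : X → ℂ, Continuous φ ∧ ∀ x, g x = Complex.exp (φ x) := by
  obtain ⟨F, ⟨-, hF⟩, -⟩ := Complex.isCoveringMap_exp.existsUnique_continuousMap_lifts
    (⟨fun x => ⟨g x, h0 x⟩, by fun_prop⟩ : C(X, {z : ℂ // z ≠ 0})) x0 (Complex.log (g x0))
    (Subtype.ext (Complex.exp_log (h0 x0)))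
  refine ⟨F, F.continuous, fun x => ?_⟩
  have := congrFun hF x
  exact (congrArg Subtype.val this).symm

lemma isCompact_arc {γ : ℝ → ℝ × ℝ} {a b : ℝ} (hγ : ContinuousOn γ (Icc a b)) :
    IsCompact (γ '' Icc a b) := isCompact_Icc.image_of_continuousOn hγ

lemma hasLog_arc {γ : ℝ → ℝ × ℝ} {a b : ℝ} (hγ : ContinuousOn γ (Icc a b))
    (hinj : InjOn γ (Icc a b)) {f : ℝ × ℝ → ℂ} (hf : ContinuousOn f (γ '' Icc a b))
    (h0 : ∀ z ∈ γ '' Icc a b, f z ≠ 0) : HasLog f (γ '' Icc a b) := by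
  rcases lt_or_ge b a with hab | hab
  · rw [Icc_eq_empty (not_le.mpr hab), image_empty]
    exact ⟨0, continuousOn_empty _, by simp⟩
  have hc : Continuous (IccExtend hab ((Icc a b).domRestrict (fun t => f (γ t)))) := by
    apply Continuous.Icc_extend'
    exact (continuousOn_iff_continuous_domRestrict.mp (hf.comp hγ (mapsTo_image _ _)))
  obtain ⟨φ, hφ, h⟩ := exists_log _ hc (fun x => h0 _ (mem_image_of_mem _ (projIcc a b hab x).2)) 0
  let δ := Function.invFunOn γ (Icc a b)
  have hδ : ∀ t ∈ Icc a b, δ (γ t) = t := fun t ht => hinj.leftInvOn_invFunOn ht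
  refine ⟨fun z => φ (δ z), ?_, ?_⟩
  · apply hφ.comp_continuousOn
    -- inverse of a continuous injection on a compact set
    rw [continuousOn_iff_isClosed]
    intro t ht
    refine ⟨γ '' (t ∩ Icc a b), ?_, ?_⟩
    · exact ((isCompact_Icc.inter_left ht).image_of_continuousOn
        (hγ.mono inter_subset_right)).isClosed
    · ext z
      constructor
      · rintro ⟨hz, ⟨s, hs, rfl⟩⟩
        refine ⟨⟨s, ⟨?_, hs⟩, rfl⟩, mem_image_of_mem _ hs⟩
        simpa [hδ s hs] using hz
      · rintro ⟨⟨s, ⟨hs, hs'⟩, rfl⟩, hz⟩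
        exact ⟨by simpa [hδ s hs'] using hs, hz⟩
  · rintro _ ⟨s, hs, rfl⟩
    simp only
    rw [hδ s hs, ← h s, IccExtend_of_mem _ _ hs]; rfl

lemma winding_zero {g : ℝ × ℝ → ℂ} (hg : Continuous g) (h0 : ∀ z, g z ≠ 0) (x0 : ℝ × ℝ) (m : ℤ)
    (r : ℝ) (hr : ∀ z : ℝ × ℝ, r ≤ ‖z‖ → g z = (cx z - cx x0) ^ m) : m = 0 := by
  obtain ⟨φ, hφ, h⟩ := exists_log g hg h0 0
  -- circle parametrisation
  set R : ℝ := |r| + ‖x0‖ + 1 with hR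
  have hRpos : 0 < R := by positivity
  let c : ℝ → ℝ × ℝ := fun θ => (x0.1 + 2 * R * Real.cos θ, x0.2 + 2 * R * Real.sin θ)
  have hc : Continuous c := by fun_prop
  have hcx : ∀ θ, cx (c θ) - cx x0 = Complex.exp (Real.log (2 * R) + θ * Complex.I) := by
    intro θ
    rw [Complex.exp_add, ← Complex.ofReal_exp, Real.exp_log (by positivity), Complex.exp_mul_I,
      ← Complex.ofReal_cos, ← Complex.ofReal_sin]
    apply Complex.ext
    · simp only [cx, c, Complex.sub_re, Complex.mul_re, Complex.ofReal_re, Complex.ofReal_im,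
        Complex.add_re, Complex.I_re, Complex.I_im, Complex.add_im, Complex.mul_im]
      ring
    · simp only [cx, c, Complex.sub_im, Complex.mul_re, Complex.ofReal_re, Complex.ofReal_im,
        Complex.add_re, Complex.I_re, Complex.I_im, Complex.add_im, Complex.mul_im]
      ring
  have hnorm : ∀ θ, r ≤ ‖c θ‖ := by
    intro θ
    have h2 : ∀ (u v : ℝ), |u + v| ≥ |v| - |u| := fun u v => by
      have := abs_sub_abs_le_abs_sub v (-u); rw [abs_neg] at this
      have e : v - -u = u + v := by ring
      rw [e] at this; linarith
    have hx1 : |x0.1| ≤ ‖x0‖ := by simpa using norm_fst_le x0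
    have hx2 : |x0.2| ≤ ‖x0‖ := by simpa using norm_snd_le x0
    have hc1 : |(c θ).1| ≤ ‖c θ‖ := by simpa using norm_fst_le (c θ)
    have hc2 : |(c θ).2| ≤ ‖c θ‖ := by simpa using norm_snd_le (c θ)
    have a1 := h2 x0.1 (2 * R * Real.cos θ)
    have a2 := h2 x0.2 (2 * R * Real.sin θ)
    have hcs : 1 ≤ |Real.cos θ| + |Real.sin θ| := by
      have h1 := Real.sin_sq_add_cos_sq θ
      rw [← sq_abs (Real.sin θ), ← sq_abs (Real.cos θ)] at h1
      nlinarith [abs_nonneg (Real.sin θ), abs_nonneg (Real.cos θ), Real.abs_sin_le_one θ,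
        Real.abs_cos_le_one θ]
    have e1 : |2 * R * Real.cos θ| = 2 * R * |Real.cos θ| := by
      rw [abs_mul, abs_of_pos (by positivity : 0 < 2 * R)]
    have e2 : |2 * R * Real.sin θ| = 2 * R * |Real.sin θ| := by
      rw [abs_mul, abs_of_pos (by positivity : 0 < 2 * R)]
    have hsum : 2 * R * |Real.cos θ| + 2 * R * |Real.sin θ| ≥ 2 * R := by nlinarith
    have : |r| ≤ ‖c θ‖ := by
      simp only [c] at *
      linarith
    exact (le_abs_self r).trans this
  -- compare the two lifts on the line
  have key := Complex.isCoveringMap_exp.eqOn_of_comp_eqOn (A := ℝ) (s := univ)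
    (g₁ := fun θ => φ (c θ))
    (g₂ := fun θ => (m : ℂ) * (Real.log (2 * R) + θ * Complex.I) +
      (φ (c 0) - m * Real.log (2 * R)))
    isPreconnected_univ (hφ.comp hc).continuousOn (by fun_prop)
    (fun θ _ => by
      apply Subtype.ext
      simp only [Function.comp]
      have h1 : ∀ θ, Complex.exp (φ (c θ)) =
          Complex.exp (m * (Real.log (2 * R) + θ * Complex.I)) := by
        intro θ
        rw [← h, hr _ (hnorm θ), hcx, Complex.exp_int_mul]
      have h2 := h1 0
      simp only [Complex.ofReal_zero, zero_mul, add_zero] at h2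
      rw [Complex.exp_add, Complex.exp_sub, h2, div_self (Complex.exp_ne_zero _), mul_one, h1 θ])
    (a := 0) (mem_univ _) (by simp)
  have k := key (mem_univ (2 * Real.pi))
  have hcc : c (2 * Real.pi) = c 0 := by simp [c]
  simp only [hcc] at k
  have k2 : (m : ℂ) * ((2 * Real.pi : ℝ) * Complex.I) = 0 := by linear_combination -k
  have hpi : ((2 * Real.pi : ℝ) : ℂ) * Complex.I ≠ 0 := by
    simp [Real.pi_ne_zero]
  exact_mod_cast (mul_eq_zero.mp k2).resolve_right hpi

end OPl

namespace OPl

lemma eilenberg {K : Set (ℝ × ℝ)} (hK : IsClosed K) {ι : Type} [Fintype ι] [DecidableEq ι]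
    (x : ι → ℝ × ℝ) (m : ι → ℤ) (hx : ∀ i, x i ∉ K)
    (hlog : HasLog (fun z => ∏ i, (cx z - cx (x i)) ^ m i) K) (j : ι)
    (hb : Bornology.IsBounded (connectedComponentIn Kᶜ (x j)))
    (hj : ∀ i, i ≠ j → x i ∉ connectedComponentIn Kᶜ (x j)) : m j = 0 := by
  classical
  obtain ⟨φ, hφ, hφ2⟩ := hlog
  obtain ⟨Φ, hΦ⟩ := ContinuousMap.exists_restrict_eq hK (⟨K.domRestrict φ, hφ.domRestrict⟩ : C(K, ℂ))
  have hΦ2 : ∀ z ∈ K, Φ z = φ z := fun z hz => by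
    have := congrArg (fun f => f ⟨z, hz⟩) hΦ
    simpa using this
  set U := connectedComponentIn Kᶜ (x j) with hU
  have hUo : IsOpen U := hK.isOpen_compl.connectedComponentIn
  have hxj : x j ∈ U := mem_connectedComponentIn (hx j)
  have hUK : U ⊆ Kᶜ := connectedComponentIn_subset _ _
  have hfr : frontier U ⊆ K := by
    intro z hz
    by_contra hzK
    have hV : IsOpen (connectedComponentIn Kᶜ z) := hK.isOpen_compl.connectedComponentIn
    have hzV : z ∈ connectedComponentIn Kᶜ z := mem_connectedComponentIn hzK
    obtain ⟨w, hw, hwU⟩ := mem_closure_iff.mp (frontier_subset_closure hz) _ hV hzV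
    have e1 := connectedComponentIn_eq hw
    have e2 := connectedComponentIn_eq hwU
    rw [← hU] at e2
    rw [e1, ← e2] at hzV
    rw [hUo.frontier_eq] at hz
    exact hz.2 hzV
  have hcl : closure U ⊆ U ∪ K := by
    intro z hz
    by_cases h : z ∈ U
    · exact Or.inl h
    · exact Or.inr (hfr (by rw [hUo.frontier_eq]; exact ⟨hz, h⟩))
  let g : ℝ × ℝ → ℂ := fun z => if z ∈ U then
    Complex.exp (Φ z) * ∏ i ∈ Finset.univ.erase j, (cx z - cx (x i)) ^ (- m i)
    else (cx z - cx (x j)) ^ m j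
  have hg : Continuous g := by
    apply continuous_if
    · intro z hz
      have hzK := hfr hz
      rw [hΦ2 z hzK, ← hφ2 z hzK]
      simp only []
      rw [← Finset.mul_prod_erase _ _ (Finset.mem_univ j), mul_assoc,
        ← Finset.prod_mul_distrib, Finset.prod_eq_one, mul_one]
      intro i hi
      rw [← zpow_add₀, add_neg_cancel, zpow_zero]
      exact cx_sub_ne (fun h => hx i (h ▸ hzK))
    · apply ContinuousOn.mul
      · exact (Complex.continuous_exp.comp Φ.continuous).continuousOn
      · apply continuousOn_finsetProd
        intro i hi
        apply ContinuousOn.zpow₀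
        · exact (continuous_cx.sub continuous_const).continuousOn
        · intro z hz
          left
          refine cx_sub_ne (fun h => ?_)
          rcases hcl hz with h' | h'
          · exact hj i (Finset.ne_of_mem_erase hi) (h ▸ h')
          · exact hx i (h ▸ h')
    · apply ContinuousOn.zpow₀
      · exact (continuous_cx.sub continuous_const).continuousOn
      · intro z hz
        left
        have hz' : z ∈ Uᶜ := by
          have : IsClosed Uᶜ := hUo.isClosed_compl
          have e : closure {x | x ∉ U} = Uᶜ := this.closure_eq
          rwa [e] at hz
        exact cx_sub_ne (fun h => hz' (h ▸ hxj))
  have hg0 : ∀ z, g z ≠ 0 := by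
    intro z
    by_cases hz : z ∈ U
    · simp only [g, hz, if_true]
      apply mul_ne_zero (Complex.exp_ne_zero _)
      apply Finset.prod_ne_zero_iff.mpr
      intro i hi
      exact zpow_ne_zero _ (cx_sub_ne (fun h => hj i (Finset.ne_of_mem_erase hi) (h ▸ hz)))
    · simp only [g, hz, if_false]
      exact zpow_ne_zero _ (cx_sub_ne (fun h => hz (h ▸ hxj)))
  obtain ⟨r, hr⟩ := hb.exists_norm_le
  refine winding_zero hg hg0 (x j) (m j) (r + 1) (fun z hz => ?_)
  have : z ∉ U := fun h => by linarith [hr z h]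
  simp [g, this]

lemma isConnected_norm_gt (r : ℝ) (hr : 0 ≤ r) : IsPreconnected {z : ℝ × ℝ | r < ‖z‖} := by
  have h1 : IsPreconnected (Metric.sphere (0 : ℝ × ℝ) 1 ×ˢ Ioi r) :=
    (isConnected_sphere (by rw [rank_prod', Module.rank_self]; norm_num) 0 zero_le_one).isPreconnected.prod isPreconnected_Ioi
  have h2 := h1.image (fun q : (ℝ × ℝ) × ℝ => q.2 • q.1) (by fun_prop)
  convert h2 using 1
  ext z
  constructor
  · intro hz
    have hz' : r < ‖z‖ := hz
    have hpos : 0 < ‖z‖ := hr.trans_lt hz'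
    refine ⟨(‖z‖⁻¹ • z, ‖z‖), ⟨?_, hz'⟩, ?_⟩
    · simp only [mem_sphere_iff_norm, sub_zero, norm_smul, norm_inv, norm_norm]
      exact inv_mul_cancel₀ hpos.ne'
    · simp only [smul_smul, mul_inv_cancel₀ hpos.ne', one_smul]
  · rintro ⟨⟨w, t⟩, ⟨hw, ht⟩, rfl⟩
    simp only [mem_sphere_iff_norm, sub_zero] at hw
    have ht' : r < t := ht
    simp only [mem_ofPred_eq, norm_smul, hw, mul_one, Real.norm_eq_abs]
    exact ht'.trans_le (le_abs_self t)

lemma unbounded_unique {K : Set (ℝ × ℝ)} (hK : IsCompact K) {p q : ℝ × ℝ}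
    (hp : ¬ Bornology.IsBounded (connectedComponentIn Kᶜ p))
    (hq : ¬ Bornology.IsBounded (connectedComponentIn Kᶜ q)) :
    connectedComponentIn Kᶜ p = connectedComponentIn Kᶜ q := by
  obtain ⟨r, hr⟩ := hK.isBounded.exists_norm_le
  have hW := isConnected_norm_gt |r| (abs_nonneg r)
  have hWK : {z : ℝ × ℝ | |r| < ‖z‖} ⊆ Kᶜ := fun z hz hzK =>
    absurd (hr z hzK) (not_le.mpr ((le_abs_self r).trans_lt hz))
  have key : ∀ p, ¬ Bornology.IsBounded (connectedComponentIn Kᶜ p) →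
      ∃ z, |r| < ‖z‖ ∧ z ∈ connectedComponentIn Kᶜ p := by
    intro p hp
    by_contra h
    push Not at h
    apply hp
    rw [isBounded_iff_forall_norm_le]
    exact ⟨|r|, fun z hz => not_lt.mp (fun h' => h z h' hz)⟩
  obtain ⟨z, hz, hzp⟩ := key p hp
  obtain ⟨w, hw, hwq⟩ := key q hq
  have h1 : w ∈ connectedComponentIn Kᶜ z := hW.subset_connectedComponentIn hz hWK hw
  rw [connectedComponentIn_eq hzp, connectedComponentIn_eq hwq, connectedComponentIn_eq h1]

lemma exponents_zero {K : Set (ℝ × ℝ)} (hK : IsCompact K) {ι : Type} [Fintype ι]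
    (x : ι → ℝ × ℝ) (m : ι → ℤ) (hx : ∀ i, x i ∉ K) (hsum : ∑ i, m i = 0)
    (hlog : HasLog (fun z => ∏ i, (cx z - cx (x i)) ^ m i) K)
    (hsep : ∀ i j, i ≠ j → connectedComponentIn Kᶜ (x i) ≠ connectedComponentIn Kᶜ (x j))
    (j : ι) : m j = 0 := by
  classical
  have hb : ∀ j, Bornology.IsBounded (connectedComponentIn Kᶜ (x j)) → m j = 0 := by
    intro j hj
    refine eilenberg hK.isClosed x m hx hlog j hj (fun i hij hmem => ?_)
    exact hsep i j hij (connectedComponentIn_eq hmem).symm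
  by_cases hj : Bornology.IsBounded (connectedComponentIn Kᶜ (x j))
  · exact hb j hj
  · rw [Finset.sum_eq_single j] at hsum
    · exact hsum
    · intro i _ hij
      apply hb
      by_contra hi
      exact hsep i j hij (unbounded_unique hK hi hj)
    · simp

lemma same_component_of_hasLog {K : Set (ℝ × ℝ)} (hK : IsCompact K) {p q : ℝ × ℝ}
    (hp : p ∉ K) (hq : q ∉ K) (h : HasLog (ratio p q) K) :
    connectedComponentIn Kᶜ p = connectedComponentIn Kᶜ q := by
  by_contra hne
  have := exponents_zero hK (ι := Bool) (fun b => if b then p else q) (fun b => if b then 1 else -1)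
    (by rintro (_ | _) <;> simpa) (by simp)
    (by
      obtain ⟨φ, h1, h2⟩ := h
      refine ⟨φ, h1, fun z hz => ?_⟩
      rw [← h2 z hz]
      simp [ratio, div_eq_mul_inv])
    (by
      rintro (_ | _) (_ | _) hij
      · simp at hij
      · simpa using fun h => hne h.symm
      · simpa using hne
      · simp at hij) true
  simp at this

/-- Janiszewski-type lemma. -/
lemma janiszewski {A B : Set (ℝ × ℝ)} (hA : IsCompact A) (hB : IsCompact B)
    (hAB : IsPreconnected (A ∩ B)) {p q : ℝ × ℝ} (hp : p ∉ A ∪ B) (hq : q ∉ A ∪ B)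
    (h1 : HasLog (ratio p q) A) (h2 : HasLog (ratio p q) B) :
    connectedComponentIn (A ∪ B)ᶜ p = connectedComponentIn (A ∪ B)ᶜ q :=
  same_component_of_hasLog (hA.union hB) hp hq (h1.union hA.isClosed hB.isClosed hAB h2)

/-- If `T` and `R` meet in a set of at most `n` points, then among more than `n` points which are
separated neither by `T` nor by `R` two are not separated by `T ∪ R`. -/
lemma pigeon {T R : Set (ℝ × ℝ)} (hT : IsCompact T) (hR : IsCompact R) {ι : Type} [Fintype ι]
    (x : ι → ℝ × ℝ) (hx : ∀ i, x i ∉ T ∪ R) (S : Finset (ℝ × ℝ)) (hS : T ∩ R ⊆ S)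
    (hSne : S.Nonempty)
    (hcard : S.card < Fintype.card ι)
    (hlT : ∀ i j, HasLog (ratio (x i) (x j)) T) (hlR : ∀ i j, HasLog (ratio (x i) (x j)) R) :
    ∃ i j, i ≠ j ∧ connectedComponentIn (T ∪ R)ᶜ (x i) = connectedComponentIn (T ∪ R)ᶜ (x j) := by
  classical
  by_contra hsep
  push Not at hsep
  obtain ⟨t0, ht0⟩ := hSne
  have hι : Nonempty ι := Fintype.card_pos_iff.mp (by omega)
  obtain ⟨i0⟩ := hι
  choose φ hφc hφ using fun i => hlT i i0
  choose ψ hψc hψ using fun i => hlR i i0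
  have hIntEq : ∀ i z, ∃ n : ℤ, z ∈ T ∩ R → φ i z = ψ i z + n * (2 * Real.pi * Complex.I) := by
    intro i z
    by_cases hz : z ∈ T ∩ R
    · obtain ⟨n, hn⟩ := Complex.exp_eq_exp_iff_exists_int.mp
        ((hφ i z hz.1).symm.trans (hψ i z hz.2))
      exact ⟨n, fun _ => hn⟩
    · exact ⟨0, fun h => absurd h hz⟩
  choose n hn using hIntEq
  -- discrepancy vectors, relative to `t0`
  let v : {i // i ≠ i0} → ({s // s ∈ S.erase t0} → ℤ) := fun i s => n i s - n i t0
  have hdep : ¬ LinearIndependent ℤ v := by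
    intro h
    have := h.fintype_card_le_finrank
    rw [Module.finrank_fintype_fun_eq_card, Fintype.card_coe, Finset.card_erase_of_mem ht0] at this
    have h2 : Fintype.card {i // i ≠ i0} = Fintype.card ι - 1 := by
      rw [Fintype.card_subtype_compl, Fintype.card_subtype_eq]
    have := Finset.card_pos.mpr ⟨t0, ht0⟩
    omega
  obtain ⟨g, hg, j, hgj⟩ := Fintype.not_linearIndependent_iff.mp hdep
  let m : ι → ℤ := fun i => if h : i ≠ i0 then g ⟨i, h⟩ else - ∑ i, g i
  have hmi : ∀ i : {i // i ≠ i0}, m i = g i := fun i => by simp [m, i.2]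
  have hm0 : m i0 = - ∑ i, g i := by simp [m]
  have hxT : ∀ z ∈ T ∪ R, ∀ i, cx z - cx (x i) ≠ 0 := fun z hz i =>
    cx_sub_ne (fun h => hx i (h ▸ hz))
  have hf : ∀ z ∈ T ∪ R, ∏ i, (cx z - cx (x i)) ^ m i =
      ∏ i : {i // i ≠ i0}, (ratio (x i) (x i0) z) ^ g i := by
    intro z hz
    rw [Fintype.prod_eq_mul_prod_subtype_ne (fun i => (cx z - cx (x i)) ^ m i) i0, hm0]
    simp only [hmi, ratio, div_zpow]
    have hps : ∀ (a : ℂ) (_ : a ≠ 0) (s : Finset {i // i ≠ i0}), ∏ i ∈ s, a ^ g i = a ^ (∑ i ∈ s, g i) := by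
      intro a ha s
      induction s using Finset.induction_on with
      | empty => simp
      | insert i s hi ih => rw [Finset.prod_insert hi, Finset.sum_insert hi, ih, zpow_add₀ ha]
    rw [Finset.prod_div_distrib, hps _ (hxT z hz i0), zpow_neg, div_eq_inv_mul]
  have hlog : HasLog (fun z => ∏ i, (cx z - cx (x i)) ^ m i) (T ∪ R) := by
    refine glue hT.isClosed hR.isClosed
      (φ := fun z => ∑ i : {i // i ≠ i0}, (g i : ℂ) * φ i z)
      (ψ := fun z => ∑ i : {i // i ≠ i0}, (g i : ℂ) * (ψ i z + n i t0 * (2 * Real.pi * Complex.I)))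
      ?_ ?_ ?_ ?_ ?_
    · exact continuousOn_finsetSum _ (fun i _ => continuousOn_const.mul (hφc i))
    · exact continuousOn_finsetSum _ (fun i _ => continuousOn_const.mul
        ((hψc i).add continuousOn_const))
    · intro z hz
      rw [hf z (Or.inl hz), Complex.exp_sum]
      refine Finset.prod_congr rfl (fun i _ => ?_)
      rw [Complex.exp_int_mul, ← hφ i z hz]
    · intro z hz
      rw [hf z (Or.inr hz), Complex.exp_sum]
      refine Finset.prod_congr rfl (fun i _ => ?_)
      rw [Complex.exp_int_mul, Complex.exp_add, Complex.exp_int_mul_two_pi_mul_I, mul_one,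
        ← hψ i z hz]
    · intro z hz
      have e : ∀ i : {i // i ≠ i0}, (g i : ℂ) * φ i z =
          (g i : ℂ) * (ψ i z + n i t0 * (2 * Real.pi * Complex.I)) +
          ((g i * (n i z - n i t0) : ℤ) : ℂ) * (2 * Real.pi * Complex.I) := by
        intro i
        rw [hn i z hz]; push_cast; ring
      rw [Finset.sum_congr rfl (fun i _ => e i), Finset.sum_add_distrib, ← Finset.sum_mul,
        ← Int.cast_sum]
      have : ∑ i : {i // i ≠ i0}, g i * (n i z - n i t0) = 0 := by
        by_cases hz0 : z = t0
        · simp [hz0]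
        · have := congrFun hg ⟨z, Finset.mem_erase.mpr ⟨hz0, hS hz⟩⟩
          simpa [v] using this
      rw [this]; simp
  have := exponents_zero (hT.union hR) x m hx
    (by rw [Fintype.sum_eq_add_sum_subtype_ne _ i0, hm0]; simp [hmi]) hlog
    (fun i j hij h => hsep i j hij h) j
  rw [hmi] at this
  exact hgj this

end OPl

namespace OPl

/-- `F` is a connected component of the complement of `K`. -/
def IsComp (K F : Set (ℝ × ℝ)) : Prop := ∃ p ∉ K, F = connectedComponentIn Kᶜ p

/-- `γ` restricted to `[a, b]` is an arc. -/
def Arc (γ : ℝ → ℝ × ℝ) (a b : ℝ) : Prop := ContinuousOn γ (Icc a b) ∧ InjOn γ (Icc a b)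

section comp
variable {K F : Set (ℝ × ℝ)}

lemma IsComp.isOpen (hK : IsClosed K) (hF : IsComp K F) : IsOpen F := by
  obtain ⟨p, hp, rfl⟩ := hF
  exact hK.isOpen_compl.connectedComponentIn

lemma IsComp.isPreconnected (hF : IsComp K F) : IsPreconnected F := by
  obtain ⟨p, hp, rfl⟩ := hF
  exact isPreconnected_connectedComponentIn

lemma IsComp.nonempty (hF : IsComp K F) : F.Nonempty := by
  obtain ⟨p, hp, rfl⟩ := hF
  exact ⟨p, mem_connectedComponentIn hp⟩

lemma IsComp.not_mem (hF : IsComp K F) {x : ℝ × ℝ} (hx : x ∈ F) : x ∉ K := by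
  obtain ⟨p, hp, rfl⟩ := hF
  exact connectedComponentIn_subset _ _ hx

lemma IsComp.eq (hF : IsComp K F) {x : ℝ × ℝ} (hx : x ∈ F) : F = connectedComponentIn Kᶜ x := by
  obtain ⟨p, hp, rfl⟩ := hF
  exact connectedComponentIn_eq hx

lemma IsComp.eq_of_inter {F' : Set (ℝ × ℝ)} (hF : IsComp K F) (hF' : IsComp K F') {x : ℝ × ℝ}
    (hx : x ∈ F) (hx' : x ∈ F') : F = F' := by
  rw [hF.eq hx, hF'.eq hx']

lemma IsComp.subset (hF : IsComp K F) {S : Set (ℝ × ℝ)} (hS : IsPreconnected S)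
    (hSK : ∀ x ∈ S, x ∉ K) {x : ℝ × ℝ} (hx : x ∈ F) (hxS : x ∈ S) : S ⊆ F := by
  rw [hF.eq hx]
  exact hS.subset_connectedComponentIn hxS hSK

lemma IsComp.closure_subset (hK : IsClosed K) (hF : IsComp K F) {z : ℝ × ℝ} (hz : z ∈ closure F)
    (hzK : z ∉ K) : z ∈ F := by
  have hV : IsOpen (connectedComponentIn Kᶜ z) := hK.isOpen_compl.connectedComponentIn
  have hzV : z ∈ connectedComponentIn Kᶜ z := mem_connectedComponentIn hzK
  obtain ⟨w, hw, hwU⟩ := mem_closure_iff.mp hz _ hV hzV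
  rw [hF.eq hwU, ← connectedComponentIn_eq hw]
  exact hzV

lemma IsComp.mem_frontier (hK : IsClosed K) (hF : IsComp K F) {z : ℝ × ℝ} :
    z ∈ frontier F ↔ z ∈ closure F ∧ z ∈ K := by
  rw [(hF.isOpen hK).frontier_eq]
  constructor
  · rintro ⟨h1, h2⟩
    exact ⟨h1, by_contra fun h => h2 (hF.closure_subset hK h1 h)⟩
  · rintro ⟨h1, h2⟩
    exact ⟨h1, fun h => hF.not_mem h h2⟩

lemma isComp_of_frontier (ho : IsOpen F) (hp : IsPreconnected F) (hne : F.Nonempty)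
    (hFK : ∀ x ∈ F, x ∉ K) (hfr : ∀ x ∈ closure F, x ∉ F → x ∈ K) : IsComp K F := by
  obtain ⟨x, hx⟩ := hne
  refine ⟨x, hFK x hx, Subset.antisymm (hp.subset_connectedComponentIn hx hFK) ?_⟩
  refine isPreconnected_connectedComponentIn.subset_of_closure_inter_subset ho
    ⟨x, mem_connectedComponentIn (hFK x hx), hx⟩ ?_
  rintro z ⟨hz, hzc⟩
  by_contra h
  exact connectedComponentIn_subset _ _ hzc (hfr z hz h)

end comp

lemma Arc.mono {γ : ℝ → ℝ × ℝ} {a b c d : ℝ} (h : Arc γ a b) (hc : a ≤ c) (hd : d ≤ b) :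
    Arc γ c d := ⟨h.1.mono (Icc_subset_Icc hc hd), h.2.mono (Icc_subset_Icc hc hd)⟩

lemma Arc.isCompact {γ : ℝ → ℝ × ℝ} {a b : ℝ} (h : Arc γ a b) : IsCompact (γ '' Icc a b) :=
  isCompact_arc h.1

lemma Arc.isPreconnected {γ : ℝ → ℝ × ℝ} {a b : ℝ} (h : Arc γ a b) :
    IsPreconnected (γ '' Icc a b) := isPreconnected_Icc.image _ h.1

lemma Arc.hasLog_ratio {γ : ℝ → ℝ × ℝ} {a b : ℝ} (h : Arc γ a b) {p q : ℝ × ℝ}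
    (hp : p ∉ γ '' Icc a b) (hq : q ∉ γ '' Icc a b) : HasLog (ratio p q) (γ '' Icc a b) :=
  hasLog_arc h.1 h.2 (continuousOn_ratio hq)
    (fun _ hz => ratio_ne (fun h => hp (h ▸ hz)) (fun h => hq (h ▸ hz)))

lemma exists_ball_disjoint {K : Set (ℝ × ℝ)} (hK : IsClosed K) {p : ℝ × ℝ} (hp : p ∉ K) :
    ∃ r > 0, ∀ x ∈ Metric.ball p r, x ∉ K :=
  Metric.isOpen_iff.mp hK.isOpen_compl p hp

lemma ball_preconn (p : ℝ × ℝ) (r : ℝ) : IsPreconnected (Metric.ball p r) :=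
  (convex_ball p r).isPreconnected

/-- If a face touches an interior point of an edge, it touches all later points. -/
lemma edge_frontier {K0 F : Set (ℝ × ℝ)} {γ : ℝ → ℝ × ℝ} (hK0 : IsCompact K0) (hγ : Arc γ 0 1)
    (hd : ∀ t ∈ Ioo (0 : ℝ) 1, γ t ∉ K0) (hF : IsComp (K0 ∪ γ '' Icc 0 1) F) {t0 : ℝ}
    (ht0 : t0 ∈ Ioo (0 : ℝ) 1) (h : γ t0 ∈ closure F) {s : ℝ} (hs0 : t0 ≤ s) (hs1 : s ≤ 1) :
    γ s ∈ closure F := by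
  by_contra hs
  have hKc : IsClosed (K0 ∪ γ '' Icc 0 1) := (hK0.union hγ.isCompact).isClosed
  have hsub : Icc t0 s ⊆ Icc 0 1 := Icc_subset_Icc ht0.1.le hs1
  have hcomp : IsCompact {t | t ∈ Icc t0 s ∧ γ t ∈ closure F} := by
    have := (hγ.1.mono hsub).preimage_isClosed_of_isClosed isClosed_Icc (isClosed_closure (s := F))
    exact isCompact_Icc.of_isClosed_subset this (fun t ht => ht.1)
  obtain ⟨t1, ⟨⟨ht1a, ht1b⟩, ht1F⟩, hmax⟩ := hcomp.exists_isGreatest ⟨t0, ⟨le_rfl, hs0⟩, h⟩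
  have ht1s : t1 < s := lt_of_le_of_ne ht1b (fun e => hs (e ▸ ht1F))
  have ht1I : t1 ∈ Ioo (0 : ℝ) 1 := ⟨ht0.1.trans_le ht1a, ht1s.trans_le hs1⟩
  have hgap : ∀ t, t1 < t → t ≤ s → γ t ∉ closure F := fun t h1 h2 h3 =>
    absurd (hmax ⟨⟨ht1a.trans h1.le, h2⟩, h3⟩) (not_le.mpr h1)
  have he1 : Arc γ 0 t1 := hγ.mono le_rfl ht1I.2.le
  have he2 : Arc γ s 1 := hγ.mono (ht1I.1.le.trans ht1s.le) le_rfl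
  have hK'' : IsCompact (K0 ∪ γ '' Icc s 1) := hK0.union he2.isCompact
  have hFo := hF.isOpen hKc
  have hsubK : γ '' Icc 0 t1 ∪ (K0 ∪ γ '' Icc s 1) ⊆ K0 ∪ γ '' Icc 0 1 := by
    rintro x (⟨t, ht, rfl⟩ | hx | ⟨t, ht, rfl⟩)
    · exact Or.inr ⟨t, ⟨ht.1, ht.2.trans ht1I.2.le⟩, rfl⟩
    · exact Or.inl hx
    · exact Or.inr ⟨t, ⟨(ht1I.1.trans ht1s).le.trans ht.1, ht.2⟩, rfl⟩
  have hF' : IsComp (γ '' Icc 0 t1 ∪ (K0 ∪ γ '' Icc s 1)) F := by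
    refine isComp_of_frontier hFo hF.isPreconnected hF.nonempty
      (fun x hx hx' => hF.not_mem hx (hsubK hx')) (fun x hx hxF => ?_)
    have hxK : x ∈ K0 ∪ γ '' Icc 0 1 := by_contra fun h' => hxF (hF.closure_subset hKc hx h')
    rcases hxK with hxK | ⟨t, ht, rfl⟩
    · exact Or.inr (Or.inl hxK)
    · rcases le_or_gt t t1 with h1 | h1
      · exact Or.inl ⟨t, ⟨ht.1, h1⟩, rfl⟩
      · rcases le_or_gt s t with h2 | h2
        · exact Or.inr (Or.inr ⟨t, ⟨h2, ht.2⟩, rfl⟩)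
        · exact absurd hx (hgap t h1 h2.le)
  have hqK : γ t1 ∉ K0 ∪ γ '' Icc s 1 := by
    rintro (h' | ⟨t, ht, hte⟩)
    · exact hd t1 ht1I h'
    · have := hγ.2 ⟨(ht1I.1.trans ht1s).le.trans ht.1, ht.2⟩ (Ioo_subset_Icc_self ht1I) hte
      linarith [ht.1]
  obtain ⟨r, hr, hball⟩ := exists_ball_disjoint hK''.isClosed hqK
  obtain ⟨x, hxB, hxF⟩ := mem_closure_iff.mp ht1F _ Metric.isOpen_ball (Metric.mem_ball_self hr)
  -- a later point of the arc in the ball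
  have hcont : ContinuousWithinAt γ (Icc 0 1) t1 := hγ.1 t1 (Ioo_subset_Icc_self ht1I)
  have hev : ∀ᶠ t in nhdsWithin t1 (Icc 0 1), γ t ∈ Metric.ball (γ t1) r :=
    hcont (Metric.ball_mem_nhds _ hr)
  have hnhds : nhdsWithin t1 (Icc (0 : ℝ) 1) = nhds t1 :=
    nhdsWithin_eq_nhds.mpr (Icc_mem_nhds ht1I.1 ht1I.2)
  rw [hnhds] at hev
  obtain ⟨t2, ⟨ht2B, ht2s⟩, ht2⟩ := ((hev.and (gt_mem_nhds ht1s)).filter_mono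
    (nhdsWithin_le_nhds (s := Ioi t1))).and self_mem_nhdsWithin |>.exists
  have ht2' : t1 < t2 := ht2
  have ht2I : t2 ∈ Icc (0 : ℝ) 1 := ⟨(ht1I.1.trans ht2').le, ht2s.le.trans hs1⟩
  have hye : γ t2 ∉ γ '' Icc 0 t1 := by
    rintro ⟨t, ht, hte⟩
    have := hγ.2 ⟨ht.1, ht.2.trans ht1I.2.le⟩ ht2I hte
    linarith [ht.2]
  have hy : γ t2 ∉ γ '' Icc 0 t1 ∪ (K0 ∪ γ '' Icc s 1) := by
    rintro (h' | h')
    · exact hye h'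
    · exact hball _ ht2B h'
  have hx := hF'.not_mem hxF
  have hpre : IsPreconnected (γ '' Icc 0 t1 ∩ (K0 ∪ γ '' Icc s 1)) := by
    have : (γ '' Icc 0 t1 ∩ (K0 ∪ γ '' Icc s 1)) ⊆ {γ 0} := by
      rintro x ⟨⟨t, ht, rfl⟩, (h' | ⟨t', ht', hte⟩)⟩
      · rcases ht.1.eq_or_lt with e | e
        · rw [← e]; rfl
        · exact absurd h' (hd t ⟨e, ht.2.trans_lt ht1I.2⟩)
      · have := hγ.2 ⟨(ht1I.1.trans ht1s).le.trans ht'.1, ht'.2⟩ ⟨ht.1, ht.2.trans ht1I.2.le⟩ hte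
        linarith [ht.2, ht'.1]
    exact (subsingleton_singleton.anti this).isPreconnected
  have := janiszewski he1.isCompact hK'' hpre hx hy
    (he1.hasLog_ratio (fun h => hx (Or.inl h)) hye)
    (hasLog_ratio_of_preconnected hK''.isClosed (ball_preconn _ r)
      (Set.disjoint_left.mpr hball) hxB ht2B)
  rw [← hF'.eq hxF] at this
  have hyF : γ t2 ∈ F := by rw [this]; exact mem_connectedComponentIn hy
  exact hF.not_mem hyF (Or.inr ⟨t2, ht2I, rfl⟩)

/-- An edge borders at most two faces. -/
lemma three_faces {K0 : Set (ℝ × ℝ)} {γ : ℝ → ℝ × ℝ} (hK0 : IsCompact K0) (hγ : Arc γ 0 1)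
    (hd : ∀ t ∈ Ioo (0 : ℝ) 1, γ t ∉ K0) (F : Fin 3 → Set (ℝ × ℝ))
    (hF : ∀ i, IsComp (K0 ∪ γ '' Icc 0 1) (F i)) {t0 : ℝ}
    (ht0 : t0 ∈ Ioo (0 : ℝ) 1) (h : ∀ i, γ t0 ∈ closure (F i)) : ∃ i j, i ≠ j ∧ F i = F j := by
  obtain ⟨r, hr, hball⟩ := exists_ball_disjoint hK0.isClosed (hd t0 ht0)
  have hex : ∀ i, ∃ x ∈ Metric.ball (γ t0) r, x ∈ F i := fun i =>
    mem_closure_iff.mp (h i) _ Metric.isOpen_ball (Metric.mem_ball_self hr)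
  choose x hxB hxF using hex
  have hxK : ∀ i, x i ∉ γ '' Icc 0 1 ∪ K0 := fun i => by
    rw [union_comm]; exact (hF i).not_mem (hxF i)
  obtain ⟨i, j, hij, he⟩ := pigeon (S := {γ 0, γ 1}) hγ.isCompact hK0 x hxK (by
      rintro z ⟨⟨t, ht, rfl⟩, hz⟩
      by_contra hne
      simp only [Finset.coe_insert, Finset.coe_singleton, mem_insert_iff, mem_singleton_iff,
        not_or] at hne
      refine hd t ⟨lt_of_le_of_ne ht.1 ?_, lt_of_le_of_ne ht.2 ?_⟩ hz
      · rintro rfl; exact hne.1 rfl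
      · rintro rfl; exact hne.2 rfl) (by simp)
    (lt_of_le_of_lt Finset.card_le_two (by simp))
    (fun i j => hγ.hasLog_ratio (fun h => hxK i (Or.inl h)) (fun h => hxK j (Or.inl h)))
    (fun i j => hasLog_ratio_of_preconnected hK0.isClosed (ball_preconn _ r)
      (Set.disjoint_left.mpr hball) (hxB i) (hxB j))
  refine ⟨i, j, hij, ?_⟩
  rw [union_comm, ← (hF i).eq (hxF i), ← (hF j).eq (hxF j)] at he
  exact he

/-- Separation lemma. -/
lemma separation {K0 F F' M0 α : Set (ℝ × ℝ)} {γ : ℝ → ℝ × ℝ} (hK0 : IsCompact K0)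
    (hγ : Arc γ 0 1) (hd : ∀ t ∈ Ioo (0 : ℝ) 1, γ t ∉ K0)
    (hF : IsComp (K0 ∪ γ '' Icc 0 1) F) (hF' : IsComp (K0 ∪ γ '' Icc 0 1) F') (hne : F ≠ F')
    {t0 : ℝ} (ht0 : t0 ∈ Ioo (0 : ℝ) 1) (h : γ t0 ∈ closure F) (h' : γ t0 ∈ closure F')
    (hM : IsPreconnected (F ∪ F' ∪ M0)) (hM0 : ∀ x ∈ M0, x ∉ γ '' Icc 0 1)
    (hα : IsCompact α) (hαp : IsPreconnected α) (hαF : ∀ x ∈ α, x ∉ F) (hαF' : ∀ x ∈ α, x ∉ F')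
    (hαp0 : γ t0 ∉ α) (hαM : ∀ x ∈ α, x ∉ M0) (ha : γ 0 ∈ α) (hb : γ 1 ∈ α) : False := by
  obtain ⟨z, hz⟩ := hF.nonempty
  obtain ⟨z', hz'⟩ := hF'.nonempty
  have hz1 := hF.not_mem hz
  have hz1' := hF'.not_mem hz'
  have hL1 : IsPreconnected (F ∪ {γ t0}) := hF.isPreconnected.subset_closure subset_union_left
    (union_subset subset_closure (by simpa using h))
  have hL2 : IsPreconnected (F' ∪ {γ t0}) := hF'.isPreconnected.subset_closure subset_union_left
    (union_subset subset_closure (by simpa using h'))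
  have hL := IsPreconnected.union (γ t0) (Or.inr rfl) (Or.inr rfl) hL1 hL2
  obtain ⟨lam, hlc, hl⟩ := hasLog_ratio_of_preconnected (hK0.union hα).isClosed hL
    (by
      rw [Set.disjoint_left]
      rintro x ((hx | rfl) | (hx | rfl)) (hx' | hx')
      · exact hF.not_mem hx (Or.inl hx')
      · exact hαF x hx' hx
      · exact hd t0 ht0 hx'
      · exact hαp0 hx'
      · exact hF'.not_mem hx (Or.inl hx')
      · exact hαF' x hx' hx
      · exact hd t0 ht0 hx'
      · exact hαp0 hx') (Or.inl (Or.inl hz) : z ∈ _) (Or.inr (Or.inl hz') : z' ∈ _)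
  obtain ⟨ψ, hψc, hψ⟩ := hγ.hasLog_ratio (fun h => hz1 (Or.inr h)) (fun h => hz1' (Or.inr h))
  obtain ⟨μ, hμc, hμ⟩ := hasLog_ratio_of_preconnected (hγ.isCompact.union hα).isClosed hM
    (by
      rw [Set.disjoint_left]
      rintro x ((hx | hx) | hx) (hx' | hx')
      · exact hF.not_mem hx (Or.inr hx')
      · exact hαF x hx' hx
      · exact hF'.not_mem hx (Or.inr hx')
      · exact hαF' x hx' hx
      · exact hM0 x hx hx'
      · exact hαM x hx' hx) (Or.inl (Or.inl hz) : z ∈ _) (Or.inl (Or.inr hz') : z' ∈ _)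
  have ha' : γ 0 ∈ γ '' Icc 0 1 := ⟨0, by simp, rfl⟩
  have hb' : γ 1 ∈ γ '' Icc 0 1 := ⟨1, by simp, rfl⟩
  have e1 := log_const hγ.isPreconnected hψc (hμc.mono subset_union_left)
    (fun x hx => by rw [← hψ x hx, ← hμ x (Or.inl hx)]) ha' hb'
  have e2 := log_const hαp (hlc.mono subset_union_right) (hμc.mono subset_union_right)
    (fun x hx => by rw [← hl x (Or.inr hx), ← hμ x (Or.inr hx)]) ha hb
  have e3 : ψ (γ 1) - lam (γ 1) = ψ (γ 0) - lam (γ 0) := by linear_combination e2 - e1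
  have hlog : HasLog (ratio z z') (K0 ∪ γ '' Icc 0 1) := by
    refine glue hK0.isClosed hγ.isCompact.isClosed
      (φ := fun x => lam x + (ψ (γ 0) - lam (γ 0))) (ψ := ψ)
      ((hlc.mono subset_union_left).add continuousOn_const) hψc ?_ hψ ?_
    · intro x hx
      rw [Complex.exp_add, Complex.exp_sub, ← hl x (Or.inl hx), ← hψ _ ha', ← hl _ (Or.inr ha),
        div_self, mul_one]
      rw [hl _ (Or.inr ha)]; exact Complex.exp_ne_zero _
    · rintro x ⟨hx, ⟨t, ht, rfl⟩⟩
      rcases ht.1.eq_or_lt with e | e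
      · simp [← e]
      · rcases ht.2.eq_or_lt with e' | e'
        · rw [e']; simp only [← e3]; ring
        · exact absurd hx (hd t ⟨e, e'⟩)
  have := same_component_of_hasLog (hK0.union hγ.isCompact) hz1 hz1' hlog
  rw [← hF.eq hz, ← hF'.eq hz'] at this
  exact hne this

end OPl

namespace OPl

lemma arc_not_separate {K F : Set (ℝ × ℝ)} {γ : ℝ → ℝ × ℝ} {a b : ℝ} (hK : IsClosed K)
    (hγ : Arc γ a b)
    (hγK : γ '' Icc a b ⊆ K) (hF : IsComp K F) (hfr : frontier F ⊆ γ '' Icc a b) {y : ℝ × ℝ}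
    (hy : y ∉ γ '' Icc a b) : y ∈ F := by
  have hF' : IsComp (γ '' Icc a b) F := by
    refine isComp_of_frontier (hF.isOpen hK) hF.isPreconnected hF.nonempty
      (fun x hx hx' => hF.not_mem hx (hγK hx')) (fun x hx hxF => hfr ?_)
    rw [(hF.isOpen hK).frontier_eq]; exact ⟨hx, hxF⟩
  obtain ⟨x, hx⟩ := hF.nonempty
  have := same_component_of_hasLog hγ.isCompact (hF'.not_mem hx) hy
    (hγ.hasLog_ratio (hF'.not_mem hx) hy)
  rw [hF'.eq hx, this]
  exact mem_connectedComponentIn hy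

/-- Data of a star centred at `p`, locally exhausting `K`. -/
def Star (K : Set (ℝ × ℝ)) (p : ℝ × ℝ) : Prop :=
  ∃ (ι : Type) (_ : Fintype ι) (K0 : Set (ℝ × ℝ)) (γ : ι → ℝ → ℝ × ℝ),
    IsCompact K0 ∧ p ∉ K0 ∧ (∀ i, Arc (γ i) 0 1) ∧ (∀ i, γ i 0 = p) ∧
    (∀ i, ∀ t ∈ Ioo (0 : ℝ) 1, γ i t ∉ K0) ∧
    (∀ i j, i ≠ j → γ i '' Icc 0 1 ∩ γ j '' Icc 0 1 ⊆ {p}) ∧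
    K = K0 ∪ ({p} ∪ ⋃ i, γ i '' Icc 0 1)

lemma star_hasLog {p : ℝ × ℝ} {ι : Type} (γ : ι → ℝ → ℝ × ℝ) (t : ι → ℝ)
    (hγ : ∀ i, Arc (γ i) 0 (t i))
    (hd : ∀ i j, i ≠ j → γ i '' Icc 0 (t i) ∩ γ j '' Icc 0 (t j) ⊆ {p}) {x y : ℝ × ℝ}
    (hxp : p ≠ x) (hyp : p ≠ y)
    (hx : ∀ i, x ∉ γ i '' Icc 0 (t i)) (hy : ∀ i, y ∉ γ i '' Icc 0 (t i)) (s : Finset ι) :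
    HasLog (ratio x y) ({p} ∪ ⋃ i ∈ s, γ i '' Icc 0 (t i)) := by
  classical
  induction s using Finset.induction_on with
  | empty =>
    refine ⟨fun _ => Complex.log (ratio x y p), continuousOn_const, ?_⟩
    simp [Complex.exp_log (ratio_ne hxp hyp)]
  | insert i s hi ih =>
    rw [Finset.set_biUnion_insert, union_left_comm]
    refine HasLog.union (hγ i).isCompact.isClosed
      (isCompact_singleton.union (s.isCompact_biUnion (fun j _ => (hγ j).isCompact))).isClosed ?_
      ((hγ i).hasLog_ratio (hx i) (hy i)) ih
    have : (γ i '' Icc 0 (t i) ∩ ({p} ∪ ⋃ j ∈ s, γ j '' Icc 0 (t j))) ⊆ {p} := by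
      rintro z ⟨hz, hz' | hz'⟩
      · exact hz'
      simp only [mem_iUnion] at hz'
      obtain ⟨j, hj, hz'⟩ := hz'
      exact hd i j (fun e => hi (e ▸ hj)) ⟨hz, hz'⟩
    exact (subsingleton_singleton.anti this).isPreconnected

lemma Star.local_finite {K : Set (ℝ × ℝ)} {p : ℝ × ℝ} (h : Star K p) {ε : ℝ} (hε : 0 < ε) :
    ∃ δ > 0, ∃ N : ℕ, ∀ x : Fin N → ℝ × ℝ, (∀ i, x i ∈ Metric.ball p δ) → (∀ i, x i ∉ K) →
      ∃ i j, i ≠ j ∧ connectedComponentIn (K ∪ Metric.sphere p ε)ᶜ (x i) =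
        connectedComponentIn (K ∪ Metric.sphere p ε)ᶜ (x j) := by
  classical
  obtain ⟨ι, _, K0, γ, hK0, hpK0, hγ, hγ0, hd, hdis, rfl⟩ := h
  have hex : ∀ i, ∃ t, 0 < t ∧ t < 1 ∧ ∀ s ∈ Icc 0 t, γ i s ∈ Metric.ball p ε := by
    intro i
    have h1 : ∀ᶠ s in nhdsWithin (0 : ℝ) (Icc 0 1), γ i s ∈ Metric.ball p ε := by
      have : ContinuousWithinAt (γ i) (Icc 0 1) 0 := (hγ i).1 0 (by simp)
      apply this
      rw [hγ0]; exact Metric.ball_mem_nhds _ hε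
    rw [eventually_nhdsWithin_iff, Metric.eventually_nhds_iff] at h1
    obtain ⟨r, hr, h1⟩ := h1
    refine ⟨min (r / 2) (1 / 2), by positivity, by
      exact (min_le_right _ _).trans_lt (by norm_num), fun s hs => h1 ?_ ?_⟩
    · rw [Real.dist_eq, sub_zero, abs_of_nonneg hs.1]
      have := hs.2.trans (min_le_left _ _)
      linarith
    · exact ⟨hs.1, hs.2.trans ((min_le_right _ _).trans (by norm_num))⟩
  choose t ht0 ht1 htb using hex
  have hA : ∀ i, Arc (γ i) 0 (t i) := fun i => (hγ i).mono le_rfl (ht1 i).le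
  have hB : ∀ i, Arc (γ i) (t i) 1 := fun i => (hγ i).mono (ht0 i).le le_rfl
  set T : Set (ℝ × ℝ) := {p} ∪ ⋃ i, γ i '' Icc 0 (t i) with hT
  set R : Set (ℝ × ℝ) := K0 ∪ (⋃ i, γ i '' Icc (t i) 1) ∪ Metric.sphere p ε with hR
  have hTc : IsCompact T := isCompact_singleton.union (isCompact_iUnion (fun i => (hA i).isCompact))
  have hRc : IsCompact R := (hK0.union (isCompact_iUnion (fun i => (hB i).isCompact))).union
    (isCompact_sphere _ _)
  have hTR : K0 ∪ ({p} ∪ ⋃ i, γ i '' Icc 0 1) ∪ Metric.sphere p ε = T ∪ R := by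
    have : ({p} ∪ ⋃ i, γ i '' Icc 0 1) = T ∪ ⋃ i, γ i '' Icc (t i) 1 := by
      rw [hT, union_assoc, ← iUnion_union_distrib]
      congr 1
      refine iUnion_congr (fun i => ?_)
      rw [← image_union, Icc_union_Icc_eq_Icc (ht0 i).le (ht1 i).le]
    rw [this, hR]
    ext z; simp only [mem_union]; tauto
  have hpR : p ∉ R := by
    rintro ((h | h) | h)
    · exact hpK0 h
    · simp only [mem_iUnion] at h
      obtain ⟨i, s, hs, he⟩ := h
      rw [← hγ0 i] at he
      have := (hγ i).2 ⟨(ht0 i).le.trans hs.1, hs.2⟩ (by simp) he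
      linarith [ht0 i, hs.1]
    · simp at h; exact hε.ne h
  obtain ⟨δ, hδ, hball⟩ := exists_ball_disjoint hRc.isClosed hpR
  let S : Finset (ℝ × ℝ) := insert p (Finset.univ.image (fun i => γ i (t i)))
  refine ⟨δ, hδ, S.card + 1, fun x hxB hxK => ?_⟩
  have hx : ∀ i, x i ∉ T ∪ R := by
    rintro i (h | h)
    · apply hxK i
      right
      rcases h with h | h
      · exact Or.inl h
      right
      simp only [mem_iUnion] at h ⊢
      obtain ⟨j, s, hs, he⟩ := h
      exact ⟨j, s, ⟨hs.1, hs.2.trans (ht1 j).le⟩, he⟩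
    · exact hball _ (hxB i) h
  rw [hTR]
  refine pigeon hTc hRc x hx S ?_ ⟨p, by simp [S]⟩ (by simp) ?_ ?_
  · rintro z ⟨hzT, hzR⟩
    rcases hzT with hzT | hzT
    · rw [mem_singleton_iff] at hzT
      simp [S, hzT]
    simp only [mem_iUnion] at hzT
    obtain ⟨i, s, hs, rfl⟩ := hzT
    rcases hzR with (h | h) | h
    · rcases hs.1.eq_or_lt with e | e
      · rw [← e, hγ0]; simp [S]
      · exact absurd h (hd i s ⟨e, hs.2.trans_lt (ht1 i)⟩)
    · simp only [mem_iUnion] at h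
      obtain ⟨j, s', hs', he⟩ := h
      by_cases hij : i = j
      · subst hij
        have := (hγ i).2 ⟨(ht0 i).le.trans hs'.1, hs'.2⟩ ⟨hs.1, hs.2.trans (ht1 i).le⟩ he
        have : s = t i := le_antisymm hs.2 (this ▸ hs'.1)
        simp [S, this]
      · have := hdis i j hij ⟨⟨s, ⟨hs.1, hs.2.trans (ht1 i).le⟩, rfl⟩,
          ⟨s', ⟨(ht0 j).le.trans hs'.1, hs'.2⟩, he⟩⟩
        rw [mem_singleton_iff] at this
        simp [S, this]
    · have := htb i s hs
      rw [Metric.mem_sphere] at h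
      rw [Metric.mem_ball] at this
      linarith
  · intro i j
    have := star_hasLog (p := p) γ t hA (fun i j hij z hz => hdis i j hij
      ⟨image_mono (Icc_subset_Icc le_rfl (ht1 i).le) hz.1,
        image_mono (Icc_subset_Icc le_rfl (ht1 j).le) hz.2⟩)
      (x := x i) (y := x j) (fun h => hx i (Or.inl (Or.inl h.symm)))
      (fun h => hx j (Or.inl (Or.inl h.symm)))
      (fun k h => hx i (Or.inl (Or.inr (mem_iUnion.mpr ⟨k, h⟩))))
      (fun k h => hx j (Or.inl (Or.inr (mem_iUnion.mpr ⟨k, h⟩)))) Finset.univ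
    simpa [hT] using this
  · intro i j
    exact hasLog_ratio_of_preconnected hRc.isClosed (ball_preconn _ δ)
      (Set.disjoint_left.mpr hball) (hxB i) (hxB j)

/-- Nested connected pieces of `F` converging to an accessible boundary point. -/
lemma Star.accessible {K F : Set (ℝ × ℝ)} {p : ℝ × ℝ} (h : Star K p) (hK : IsClosed K)
    (hF : IsComp K F) (hp : p ∈ closure F) :
    ∃ U : ℝ → Set (ℝ × ℝ), ∀ ε > 0, IsOpen (U ε) ∧ IsPreconnected (U ε) ∧ U ε ⊆ F ∧
      U ε ⊆ Metric.ball p ε ∧ (∀ δ > 0, (U ε ∩ U δ ∩ Metric.ball p δ).Nonempty) ∧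
      (∀ δ > 0, δ ≤ ε → U δ ⊆ U ε) := by
  classical
  have hne : (nhds p ⊓ Filter.principal F).NeBot := mem_closure_iff_clusterPt.mp hp
  let 𝒰 := Ultrafilter.of (nhds p ⊓ Filter.principal F)
  have h𝒰 : (𝒰 : Filter (ℝ × ℝ)) ≤ nhds p ⊓ Filter.principal F := Ultrafilter.of_le _
  have h𝒰F : F ∈ 𝒰 := h𝒰 (Filter.mem_inf_of_right (Filter.mem_principal_self F))
  have h𝒰B : ∀ ε > 0, Metric.ball p ε ∈ 𝒰 := fun ε hε =>
    h𝒰 (Filter.mem_inf_of_left (Metric.ball_mem_nhds p hε))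
  have hex : ∀ ε > 0, ∃ x, x ∈ F ∧ x ∈ Metric.ball p ε ∧
      connectedComponentIn (K ∪ Metric.sphere p ε)ᶜ x ∈ 𝒰 := by
    intro ε hε
    obtain ⟨δ, hδ, N, hN⟩ := h.local_finite hε
    by_contra hcon
    push Not at hcon
    obtain ⟨f, hf1, hf2⟩ := exists_seq_of_forall_finset_exists
      (fun x => x ∈ F ∧ x ∈ Metric.ball p (min δ ε))
      (fun x y => y ∉ connectedComponentIn (K ∪ Metric.sphere p ε)ᶜ x) (by
        intro s hs
        have : ∀ x ∈ s, (connectedComponentIn (K ∪ Metric.sphere p ε)ᶜ x)ᶜ ∈ 𝒰 := fun x hx =>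
          Ultrafilter.compl_mem_iff_notMem.mpr (hcon x (hs x hx).1
            (Metric.ball_subset_ball (min_le_right _ _) (hs x hx).2))
        have h2 : (⋂ x ∈ s, (connectedComponentIn (K ∪ Metric.sphere p ε)ᶜ x)ᶜ) ∈
            (𝒰 : Filter (ℝ × ℝ)) := (Filter.biInter_finset_mem s).mpr this
        obtain ⟨y, ⟨hy1, hy2⟩, hy3⟩ := 𝒰.neBot.nonempty_of_mem (Filter.inter_mem
          (Filter.inter_mem h𝒰F (h𝒰B (min δ ε) (lt_min hδ hε))) h2)
        refine ⟨y, ⟨hy1, hy2⟩, fun x hx => ?_⟩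
        exact mem_iInter₂.mp hy3 x hx)
    obtain ⟨i, j, hij, he⟩ := hN (fun i => f i)
      (fun i => Metric.ball_subset_ball (min_le_left _ _) (hf1 i).2)
      (fun i => hF.not_mem (hf1 i).1)
    have hmem : ∀ n, f n ∈ (K ∪ Metric.sphere p ε)ᶜ := by
      rintro n (h' | h')
      · exact hF.not_mem (hf1 n).1 h'
      · have := Metric.ball_subset_ball (min_le_right _ _) (hf1 n).2
        rw [Metric.mem_ball] at this
        rw [Metric.mem_sphere] at h'
        linarith
    have hij' : (i : ℕ) ≠ j := fun e => hij (Fin.ext e)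
    rcases lt_or_gt_of_ne hij' with hlt | hlt
    · exact hf2 i j hlt (he ▸ mem_connectedComponentIn (hmem j))
    · exact hf2 j i hlt (he ▸ mem_connectedComponentIn (hmem i))
  choose! x hxF hxB hxU using hex
  let U : ℝ → Set (ℝ × ℝ) := fun ε => connectedComponentIn (K ∪ Metric.sphere p ε)ᶜ (x ε)
  have hU : ∀ ε > 0, U ε ∈ 𝒰 := hxU
  have hmem : ∀ ε > 0, x ε ∈ (K ∪ Metric.sphere p ε)ᶜ := by
    rintro ε hε (h' | h')
    · exact hF.not_mem (hxF ε hε) h'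
    · have := hxB ε hε
      rw [Metric.mem_ball] at this
      rw [Metric.mem_sphere] at h'
      linarith
  have hUp : ∀ ε, IsPreconnected (U ε) := fun ε => isPreconnected_connectedComponentIn
  have hUo : ∀ ε, IsOpen (U ε) := fun ε =>
    (hK.union Metric.isClosed_sphere).isOpen_compl.connectedComponentIn
  have hUK : ∀ ε, ∀ z ∈ U ε, z ∉ K := fun ε z hz hz' =>
    connectedComponentIn_subset _ _ hz (Or.inl hz')
  have hUF : ∀ ε > 0, U ε ⊆ F := fun ε hε =>
    hF.subset (hUp ε) (hUK ε) (hxF ε hε) (mem_connectedComponentIn (hmem ε hε))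
  have hUB : ∀ ε > 0, U ε ⊆ Metric.ball p ε := by
    intro ε hε
    refine (hUp ε).subset_of_closure_inter_subset Metric.isOpen_ball
      ⟨x ε, mem_connectedComponentIn (hmem ε hε), hxB ε hε⟩ ?_
    rintro z ⟨hz, hzU⟩
    have h1 := Metric.closure_ball_subset_closedBall hz
    rw [Metric.mem_closedBall] at h1
    rw [Metric.mem_ball]
    refine lt_of_le_of_ne h1 (fun e => ?_)
    exact connectedComponentIn_subset _ _ hzU (Or.inr e)
  refine ⟨U, fun ε hε => ⟨hUo ε, hUp ε, hUF ε hε, hUB ε hε, fun δ hδ => ?_, fun δ hδ hδε => ?_⟩⟩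
  · exact 𝒰.neBot.nonempty_of_mem
      (Filter.inter_mem (Filter.inter_mem (hU ε hε) (hU δ hδ)) (h𝒰B δ hδ))
  · obtain ⟨z, hz1, hz2⟩ := 𝒰.neBot.nonempty_of_mem (Filter.inter_mem (hU ε hε) (hU δ hδ))
    have : U ε = connectedComponentIn (K ∪ Metric.sphere p ε)ᶜ z := connectedComponentIn_eq hz1
    rw [this]
    refine (hUp δ).subset_connectedComponentIn hz2 ?_
    rintro w hw (h' | h')
    · exact hUK δ w hw h'
    · have := hUB δ hδ hw
      rw [Metric.mem_ball] at this
      rw [Metric.mem_sphere] at h'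
      linarith

end OPl

namespace OPl

/-- `x` and `y` are joined by a (possibly degenerate) arc inside `S`. -/
def J (S : Set (ℝ × ℝ)) (x y : ℝ × ℝ) : Prop :=
  ∃ (γ : ℝ → ℝ × ℝ) (a b : ℝ), a ≤ b ∧ Arc γ a b ∧ γ a = x ∧ γ b = y ∧ γ '' Icc a b ⊆ S

lemma J.refl {S : Set (ℝ × ℝ)} {x : ℝ × ℝ} (hx : x ∈ S) : J S x x :=
  ⟨fun _ => x, 0, 0, le_rfl, ⟨continuousOn_const, by simp⟩, rfl, rfl, by
    rintro _ ⟨t, -, rfl⟩; exact hx⟩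

lemma J.mono {S T : Set (ℝ × ℝ)} {x y : ℝ × ℝ} (h : J S x y) (hST : S ⊆ T) : J T x y := by
  obtain ⟨γ, a, b, hab, h1, h2, h3, h4⟩ := h
  exact ⟨γ, a, b, hab, h1, h2, h3, h4.trans hST⟩

lemma J.symm {S : Set (ℝ × ℝ)} {x y : ℝ × ℝ} (h : J S x y) : J S y x := by
  obtain ⟨γ, a, b, hab, h1, rfl, rfl, h4⟩ := h
  have hm : MapsTo (fun t : ℝ => -t) (Icc (-b) (-a)) (Icc a b) := fun t ht => by
    simp only [mem_Icc] at ht ⊢; constructor <;> linarith [ht.1, ht.2]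
  refine ⟨fun t => γ (-t), -b, -a, by linarith, ⟨h1.1.comp (by fun_prop) hm, ?_⟩, by simp, by simp,
    ?_⟩
  · exact h1.2.comp (neg_injective.injOn) hm
  · rintro _ ⟨t, ht, rfl⟩; exact h4 ⟨-t, hm ht, rfl⟩

lemma J.concat {S : Set (ℝ × ℝ)} {γ σ : ℝ → ℝ × ℝ} {a b c d : ℝ} (hab : a ≤ b) (hcd : c ≤ d)
    (hγ : Arc γ a b) (hσ : Arc σ c d) (he : γ b = σ c)
    (hdis : ∀ s ∈ Icc a b, ∀ t ∈ Icc c d, γ s = σ t → s = b) (h1 : γ '' Icc a b ⊆ S)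
    (h2 : σ '' Icc c d ⊆ S) : J S (γ a) (σ d) := by
  classical
  have hm : MapsTo (fun t : ℝ => t - b + c) (Icc b (b + d - c)) (Icc c d) := fun t ht => by
    simp only [mem_Icc] at ht ⊢; constructor <;> linarith [ht.1, ht.2]
  have hbd : b ≤ b + d - c := by linarith
  let g : ℝ → ℝ × ℝ := fun t => if t ≤ b then γ t else σ (t - b + c)
  have g1 : ∀ t, t ≤ b → g t = γ t := fun t ht => by simp [g, ht]
  have g2 : ∀ t, b ≤ t → g t = σ (t - b + c) := fun t ht => by
    rcases ht.eq_or_lt with rfl | ht'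
    · simp [g, he]
    · simp [g, not_le.mpr ht']
  have hd2 : ∀ s t, s ∈ Icc a (b + d - c) → t ∈ Icc a (b + d - c) → s ≤ b → b ≤ t → g s = g t →
      s = t := by
    intro s t hs ht hsb hbt hst
    rw [g1 s hsb, g2 t hbt] at hst
    have hsb' := hdis s ⟨hs.1, hsb⟩ _ (hm ⟨hbt, ht.2⟩) hst
    subst hsb'
    rw [he] at hst
    have := hσ.2 ⟨le_rfl, hcd⟩ (hm ⟨hbt, ht.2⟩) hst
    simp only at this; linarith
  refine ⟨g, a, b + d - c, by linarith, ⟨?_, ?_⟩, g1 a hab, ?_, ?_⟩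
  · rw [← Icc_union_Icc_eq_Icc hab hbd]
    apply ContinuousOn.union_of_isClosed _ _ isClosed_Icc isClosed_Icc
    · exact hγ.1.congr (fun t ht => g1 t ht.2)
    · exact (hσ.1.comp (by fun_prop) hm).congr (fun t ht => g2 t ht.1)
  · intro s hs t ht hst
    rcases le_total s b with h | h <;> rcases le_total t b with h' | h'
    · rw [g1 s h, g1 t h'] at hst; exact hγ.2 ⟨hs.1, h⟩ ⟨ht.1, h'⟩ hst
    · exact hd2 s t hs ht h h' hst
    · exact (hd2 t s ht hs h' h hst.symm).symm
    · rw [g2 s h, g2 t h'] at hst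
      have := hσ.2 (hm ⟨h, hs.2⟩) (hm ⟨h', ht.2⟩) hst
      simp only at this; linarith
  · rw [g2 _ hbd]; congr 1; ring
  · rintro _ ⟨t, ht, rfl⟩
    rcases le_total t b with h | h
    · rw [g1 t h]; exact h1 ⟨t, ⟨ht.1, h⟩, rfl⟩
    · rw [g2 t h]; exact h2 ⟨_, hm ⟨h, ht.2⟩, rfl⟩

/-- First hitting time of a closed set. -/
lemma first_hit {γ : ℝ → ℝ × ℝ} {a b : ℝ} (hγ : ContinuousOn γ (Icc a b)) {C : Set (ℝ × ℝ)}
    (hC : IsClosed C) (hab : a ≤ b) (hb : γ b ∈ C) :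
    ∃ e ∈ Icc a b, γ e ∈ C ∧ ∀ s, a ≤ s → s < e → γ s ∉ C := by
  have hcomp : IsCompact {t | t ∈ Icc a b ∧ γ t ∈ C} :=
    isCompact_Icc.of_isClosed_subset (hγ.preimage_isClosed_of_isClosed isClosed_Icc hC)
      (fun t ht => ht.1)
  obtain ⟨e, he, hmin⟩ := hcomp.exists_isLeast ⟨b, ⟨hab, le_rfl⟩, hb⟩
  refine ⟨e, he.1, he.2, fun s hs hse h => ?_⟩
  exact absurd (hmin ⟨⟨hs, hse.le.trans he.1.2⟩, h⟩) (not_le.mpr hse)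

lemma J.trans {S : Set (ℝ × ℝ)} {x y z : ℝ × ℝ} (h : J S x y) (h' : J S y z) : J S x z := by
  obtain ⟨γ, a, b, hab, hγ, rfl, rfl, hγS⟩ := h
  obtain ⟨σ, c, d, hcd, hσ, he, rfl, hσS⟩ := h'
  obtain ⟨e, heI, ⟨s, hs, hse⟩, hfirst⟩ := first_hit hγ.1 hσ.isCompact.isClosed hab
    ⟨c, ⟨le_rfl, hcd⟩, he⟩
  refine J.concat (b := e) (c := s) heI.1 hs.2 (hγ.mono le_rfl heI.2) (hσ.mono hs.1 le_rfl)
    hse.symm ?_ ((image_mono (Icc_subset_Icc le_rfl heI.2)).trans hγS)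
    ((image_mono (Icc_subset_Icc hs.1 le_rfl)).trans hσS)
  intro u hu t ht hut
  by_contra hne
  exact hfirst u hu.1 (lt_of_le_of_ne hu.2 hne) ⟨t, ⟨hs.1.trans ht.1, ht.2⟩, hut.symm⟩

lemma J.normal {S : Set (ℝ × ℝ)} {x y : ℝ × ℝ} (h : J S x y) (hxy : x ≠ y) :
    ∃ γ : ℝ → ℝ × ℝ, Arc γ 0 1 ∧ γ 0 = x ∧ γ 1 = y ∧ γ '' Icc 0 1 ⊆ S := by
  obtain ⟨γ, a, b, hab, hγ, rfl, rfl, hγS⟩ := h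
  have hab' : a < b := lt_of_le_of_ne hab (fun e => hxy (by rw [e]))
  have hm : MapsTo (fun t : ℝ => a + t * (b - a)) (Icc 0 1) (Icc a b) := fun t ht => by
    simp only [mem_Icc] at ht ⊢; constructor <;> nlinarith [ht.1, ht.2]
  refine ⟨fun t => γ (a + t * (b - a)), ⟨hγ.1.comp (by fun_prop) hm, ?_⟩, by simp, by simp, ?_⟩
  · intro s hs t ht hst
    have := hγ.2 (hm hs) (hm ht) hst
    simp only at this
    have h2 : (s - t) * (b - a) = 0 := by linarith
    rcases mul_eq_zero.mp h2 with h | h <;> linarith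
  · rintro _ ⟨t, ht, rfl⟩; exact hγS ⟨_, hm ht, rfl⟩

lemma J.of_segment {S : Set (ℝ × ℝ)} {x y : ℝ × ℝ} (h : segment ℝ x y ⊆ S) : J S x y := by
  by_cases hxy : x = y
  · subst hxy; exact J.refl (h (left_mem_segment ℝ x x))
  refine ⟨fun t => AffineMap.lineMap x y t, 0, 1, zero_le_one, ⟨?_, ?_⟩, by simp, by simp, ?_⟩
  · exact AffineMap.lineMap_continuous.continuousOn
  · intro s _ t _ hst
    exact AffineMap.lineMap_injective ℝ hxy hst
  · rw [← segment_eq_image_lineMap]; exact h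

lemma J.of_open {U : Set (ℝ × ℝ)} (hU : IsOpen U) (hp : IsPreconnected U) {x y : ℝ × ℝ}
    (hx : x ∈ U) (hy : y ∈ U) : J U x y := by
  refine hp.induction₂ (J U) ?_ (fun _ _ _ _ _ _ h h' => h.trans h') (fun _ _ _ _ h => h.symm) hx hy
  intro x hx
  obtain ⟨r, hr, hball⟩ := Metric.isOpen_iff.mp hU x hx
  filter_upwards [nhdsWithin_le_nhds (Metric.ball_mem_nhds x hr)] with y hy
  exact J.of_segment (((convex_ball x r).segment_subset (Metric.mem_ball_self hr) hy).trans hball)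

/-- Infinite concatenation of a chain of arcs converging to `p`. -/
lemma chain_arc {S : Set (ℝ × ℝ)} {p : ℝ × ℝ} (hpS : p ∉ S) (σ : ℕ → ℝ → ℝ × ℝ)
    (r : ℕ → ℝ) (hr : Filter.Tendsto r Filter.atTop (nhds 0))
    (hσ : ∀ n, Arc (σ n) 0 1) (he : ∀ n, σ n 1 = σ (n + 1) 0)
    (hS : ∀ n, σ n '' Icc 0 1 ⊆ S)
    (hB : ∀ m n, m ≤ n → σ n '' Icc 0 1 ⊆ Metric.ball p (r m))
    (hdis : ∀ m n, m + 2 ≤ n → Disjoint (σ m '' Icc 0 1) (σ n '' Icc 0 1))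
    (h01 : σ 0 0 ∉ σ 1 '' Icc 0 1) : J (S ∪ {p}) (σ 0 0) p := by
  classical
  have hnext : ∀ (n : ℕ) (s : ℝ), ∃ e s', s ∈ Icc (0 : ℝ) 1 → e ∈ Icc s 1 ∧ s' ∈ Icc (0 : ℝ) 1 ∧
      σ n e = σ (n + 1) s' ∧ ∀ t, s ≤ t → t < e → σ n t ∉ σ (n + 1) '' Icc 0 1 := by
    intro n s
    by_cases hs : s ∈ Icc (0 : ℝ) 1
    · obtain ⟨e, heI, ⟨s', hs', hse⟩, hf⟩ := first_hit ((hσ n).mono hs.1 le_rfl).1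
        (hσ (n + 1)).isCompact.isClosed hs.2 ⟨0, by simp, (he n).symm⟩
      exact ⟨e, s', fun _ => ⟨heI, hs', hse.symm, hf⟩⟩
    · exact ⟨0, 0, fun h => absurd h hs⟩
  choose E S' hES using hnext
  let s : ℕ → ℝ := fun n => Nat.rec 0 (fun n s => S' n s) n
  have hs0 : s 0 = 0 := rfl
  have hsS : ∀ n, s (n + 1) = S' n (s n) := fun n => rfl
  have hsI : ∀ n, s n ∈ Icc (0 : ℝ) 1 := by
    intro n
    induction n with
    | zero => simp [hs0]
    | succ n ih => rw [hsS]; exact (hES n (s n) ih).2.1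
  let e : ℕ → ℝ := fun n => E n (s n)
  have heI : ∀ n, e n ∈ Icc (s n) 1 := fun n => (hES n (s n) (hsI n)).1
  have heq : ∀ n, σ n (e n) = σ (n + 1) (s (n + 1)) := fun n => (hES n (s n) (hsI n)).2.2.1
  have hfirst : ∀ n t, s n ≤ t → t < e n → σ n t ∉ σ (n + 1) '' Icc 0 1 := fun n =>
    (hES n (s n) (hsI n)).2.2.2
  have hse : ∀ n, s n < e n := by
    intro n
    refine lt_of_le_of_ne (heI n).1 (fun h => ?_)
    have h1 : σ n (s n) ∈ σ (n + 1) '' Icc 0 1 := by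
      rw [h, heq]; exact ⟨s (n + 1), hsI (n + 1), rfl⟩
    cases n with
    | zero => exact h01 h1
    | succ n =>
      rw [← heq n] at h1
      exact Set.disjoint_left.mp (hdis n (n + 2) le_rfl)
        ⟨e n, ⟨(hsI n).1.trans (heI n).1, (heI n).2⟩, rfl⟩ h1
  let τ : ℕ → ℝ → ℝ × ℝ := fun n u => σ n (s n + u * (e n - s n))
  have hm : ∀ n, MapsTo (fun u : ℝ => s n + u * (e n - s n)) (Icc 0 1) (Icc (s n) (e n)) :=
    fun n u hu => by
      have := hse n
      simp only [mem_Icc] at hu ⊢; constructor <;> nlinarith [hu.1, hu.2]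
  have hmm : ∀ n, Icc (s n) (e n) ⊆ Icc 0 1 := fun n => Icc_subset_Icc (hsI n).1 (heI n).2
  have hτσ : ∀ n, ∀ u ∈ Icc (0 : ℝ) 1, τ n u ∈ σ n '' Icc 0 1 := fun n u hu =>
    ⟨_, hmm n (hm n hu), rfl⟩
  have hτc : ∀ n, ContinuousOn (τ n) (Icc 0 1) := fun n =>
    ((hσ n).1.mono (hmm n)).comp (by fun_prop) (hm n)
  have hτi : ∀ n, ∀ u ∈ Icc (0 : ℝ) 1, ∀ v ∈ Icc (0 : ℝ) 1, τ n u = τ n v → u = v := by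
    intro n u hu v hv huv
    have := (hσ n).2 (hmm n (hm n hu)) (hmm n (hm n hv)) huv
    simp only at this
    have h2 : (u - v) * (e n - s n) = 0 := by linarith
    rcases mul_eq_zero.mp h2 with h | h
    · linarith
    · linarith [hse n]
  have hτe : ∀ n, τ n 1 = τ (n + 1) 0 := by
    intro n
    have := heq n
    simp only [τ, one_mul, zero_mul, add_zero]
    convert this using 2; ring
  have hτd : ∀ n, ∀ u, 0 ≤ u → u < 1 → τ n u ∉ σ (n + 1) '' Icc 0 1 := by
    intro n u hu hu1
    have := hse n
    exact hfirst n _ (by nlinarith) (by nlinarith)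
  let g : ℝ → ℝ × ℝ := fun t => τ ⌊t⌋₊ (t - ⌊t⌋₊)
  have hgI : ∀ n : ℕ, ∀ t ∈ Icc (n : ℝ) (n + 1), g t = τ n (t - n) := by
    intro n t ht
    rcases ht.2.eq_or_lt with h | h
    · have : ⌊t⌋₊ = n + 1 := by
        rw [h]; exact_mod_cast Nat.floor_natCast (n + 1)
      simp only [g, this]
      rw [h]; push_cast
      rw [sub_self, ← hτe]; congr 1; ring
    · have : ⌊t⌋₊ = n := (Nat.floor_eq_iff ((Nat.cast_nonneg n).trans ht.1)).mpr ⟨ht.1, h⟩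
      simp only [g, this]
  have hgc : ContinuousOn g (Ici 0) := by
    have hloc : ∀ N : ℕ, ContinuousOn g (Icc 0 N) := by
      intro N
      induction N with
      | zero => simp
      | succ N ih =>
        have : Icc (0 : ℝ) ((N + 1 : ℕ) : ℝ) = Icc 0 (N : ℝ) ∪ Icc (N : ℝ) (N + 1) := by
          rw [Icc_union_Icc_eq_Icc (Nat.cast_nonneg N) (by linarith)]; push_cast; rfl
        rw [this]
        apply ContinuousOn.union_of_isClosed ih _ isClosed_Icc isClosed_Icc
        refine ContinuousOn.congr ?_ (hgI N)
        refine (hτc N).comp (by fun_prop) (fun t ht => ?_)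
        simp only [mem_Icc] at ht ⊢; constructor <;> linarith [ht.1, ht.2]
    intro t ht
    obtain ⟨N, hN⟩ := exists_nat_gt t
    refine (hloc N t ⟨ht, hN.le⟩).mono_of_mem_nhdsWithin ?_
    rw [← Ici_inter_Iic]
    exact Filter.inter_mem self_mem_nhdsWithin (nhdsWithin_le_nhds (Iic_mem_nhds hN))
  have hfl : ∀ t : ℝ, 0 ≤ t → t - ⌊t⌋₊ ∈ Ico (0 : ℝ) 1 := fun t ht =>
    ⟨by linarith [Nat.floor_le ht], by linarith [Nat.lt_floor_add_one t]⟩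
  have hgσ : ∀ t, 0 ≤ t → g t ∈ σ ⌊t⌋₊ '' Icc 0 1 := fun t ht =>
    hτσ _ _ ⟨(hfl t ht).1, (hfl t ht).2.le⟩
  have hgi' : ∀ a b, 0 ≤ a → 0 ≤ b → ⌊a⌋₊ < ⌊b⌋₊ → g a ≠ g b := by
    intro a b ha hb hab hgab
    rcases Nat.lt_or_ge (⌊a⌋₊ + 1) ⌊b⌋₊ with h | h
    · exact Set.disjoint_left.mp (hdis _ _ h) (hgσ a ha) (hgab ▸ hgσ b hb)
    · have h2 : ⌊b⌋₊ = ⌊a⌋₊ + 1 := by omega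
      apply hτd ⌊a⌋₊ _ (hfl a ha).1 (hfl a ha).2
      have := hgσ b hb
      rw [h2] at this
      change g a ∈ _
      rw [hgab]; exact this
  have hgi : ∀ a b, 0 ≤ a → 0 ≤ b → g a = g b → a = b := by
    intro a b ha hb hab
    rcases lt_trichotomy ⌊a⌋₊ ⌊b⌋₊ with h | h | h
    · exact absurd hab (hgi' a b ha hb h)
    · have h1 : τ ⌊a⌋₊ (a - ⌊a⌋₊) = τ ⌊a⌋₊ (b - ⌊a⌋₊) := by
        have : g b = τ ⌊a⌋₊ (b - ⌊a⌋₊) := by simp only [g, ← h]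
        rw [← this]; exact hab
      have h2 := hfl b hb
      rw [← h] at h2
      have := hτi _ _ ⟨(hfl a ha).1, (hfl a ha).2.le⟩ _ ⟨h2.1, h2.2.le⟩ h1
      linarith
    · exact absurd hab.symm (hgi' b a hb ha h)
  -- compactify
  let k : ℝ → ℝ := fun u => u / (1 - u)
  have hk0 : ∀ u, 0 ≤ u → u < 1 → 0 ≤ k u := fun u h h' => div_nonneg h (by linarith)
  let f : ℝ → ℝ × ℝ := fun u => if u < 1 then g (k u) else p
  have hf1 : ∀ u, u < 1 → f u = g (k u) := fun u hu => by simp [f, hu]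
  have hf2 : f 1 = p := by simp [f]
  have hgp : ∀ t, 0 ≤ t → g t ≠ p := fun t ht h => hpS (hS _ (h ▸ hgσ t ht))
  refine ⟨f, 0, 1, zero_le_one, ⟨?_, ?_⟩, ?_, hf2, ?_⟩
  · intro u hu
    rcases hu.2.eq_or_lt with rfl | hu1
    · -- continuity at the limit point
      rw [Metric.continuousWithinAt_iff]
      intro ε hε
      rw [Metric.tendsto_atTop] at hr
      obtain ⟨N, hN⟩ := hr ε hε
      have hN' := hN N le_rfl
      rw [Real.dist_eq, sub_zero] at hN'
      refine ⟨1 / (N + 1), by positivity, fun {v} hv hd => ?_⟩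
      rw [hf2]
      rcases hv.2.eq_or_lt with rfl | hv1
      · rw [hf2]; simpa using hε
      · rw [hf1 v hv1]
        rw [Real.dist_eq, abs_sub_comm, abs_of_pos (by linarith)] at hd
        have hkN : (N : ℝ) ≤ k v := by
          rw [lt_div_iff₀ (by positivity)] at hd
          simp only [k]
          rw [le_div_iff₀ (by linarith)]
          nlinarith
        have := hB N ⌊k v⌋₊ (Nat.le_floor hkN) (hgσ _ (hk0 v hv.1 hv1))
        rw [Metric.mem_ball] at this
        exact this.trans_le ((le_abs_self _).trans hN'.le)
    · have hcw : ContinuousWithinAt (fun u => g (k u)) (Ico 0 1) u := by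
        have : ContinuousOn (fun u => g (k u)) (Ico 0 1) := by
          refine hgc.comp ?_ (fun u hu => hk0 u hu.1 hu.2)
          apply ContinuousOn.div (by fun_prop) (by fun_prop)
          intro u hu; linarith [hu.2]
        exact this u ⟨hu.1, hu1⟩
      have h2 : ContinuousWithinAt f (Ico 0 1) u := hcw.congr (fun v hv => hf1 v hv.2) (hf1 u hu1)
      refine h2.mono_of_mem_nhdsWithin ?_
      rw [← Ici_inter_Iio]
      exact Filter.inter_mem (Filter.mem_of_superset self_mem_nhdsWithin (fun v hv => hv.1))
        (nhdsWithin_le_nhds (Iio_mem_nhds hu1))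
  · intro u hu v hv huv
    rcases hu.2.eq_or_lt with rfl | hu1 <;> rcases hv.2.eq_or_lt with rfl | hv1
    · rfl
    · rw [hf2, hf1 v hv1] at huv; exact absurd huv.symm (hgp _ (hk0 v hv.1 hv1))
    · rw [hf2, hf1 u hu1] at huv; exact absurd huv (hgp _ (hk0 u hu.1 hu1))
    · rw [hf1 u hu1, hf1 v hv1] at huv
      have := hgi _ _ (hk0 u hu.1 hu1) (hk0 v hv.1 hv1) huv
      simp only [k] at this
      rw [div_eq_div_iff (by linarith) (by linarith)] at this
      linarith
  · rw [hf1 0 one_pos]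
    simp [k, g, τ, hs0]
  · rintro _ ⟨u, hu, rfl⟩
    rcases hu.2.eq_or_lt with rfl | hu1
    · rw [hf2]; exact Or.inr rfl
    · rw [hf1 u hu1]; exact Or.inl (hS _ (hgσ _ (hk0 u hu.1 hu1)))

lemma J.to_accessible {F : Set (ℝ × ℝ)} {p : ℝ × ℝ} (hp : p ∉ F) (U : ℝ → Set (ℝ × ℝ))
    (hU : ∀ ε > 0, IsOpen (U ε) ∧ IsPreconnected (U ε) ∧ U ε ⊆ F ∧
      U ε ⊆ Metric.ball p ε ∧ (∀ δ > 0, (U ε ∩ U δ ∩ Metric.ball p δ).Nonempty) ∧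
      (∀ δ > 0, δ ≤ ε → U δ ⊆ U ε)) : ∃ x ∈ F, J (F ∪ {p}) x p := by
  classical
  -- state : radius, avoided radius and point
  have hstep : ∀ (q : ℝ × ℝ × (ℝ × ℝ)), ∃ (q' : ℝ × ℝ × (ℝ × ℝ)) (σ : ℝ → ℝ × ℝ),
      0 < q.1 → 0 < q.2.1 → q.2.2 ∈ U q.1 → 0 < q'.1 ∧ q'.1 ≤ q.1 / 2 ∧ q'.1 ≤ q.2.1 ∧ 0 < q'.2.1 ∧
        q'.2.2 ∈ U q'.1 ∧ Arc σ 0 1 ∧ σ 0 = q.2.2 ∧ σ 1 = q'.2.2 ∧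
        σ '' Icc 0 1 ⊆ U q.1 ∧ q.2.2 ∉ Metric.ball p q'.1 ∧
        ∀ z ∈ Metric.ball p q'.2.1, z ∉ σ '' Icc 0 1 := by
    rintro ⟨r, ρ, x⟩
    by_cases h : 0 < r ∧ 0 < ρ ∧ x ∈ U r
    · obtain ⟨hr, hρ, hx⟩ := h
      obtain ⟨ho, hc, hF, hB, hn, hmono⟩ := hU r hr
      have hxp : x ≠ p := fun e => hp (hF (e ▸ hx))
      have hd : 0 < dist x p := dist_pos.mpr hxp
      set r' := min (min (r / 2) ρ) (dist x p) with hr'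
      have hr'0 : 0 < r' := lt_min (lt_min (by linarith) hρ) hd
      obtain ⟨x', ⟨hx'1, hx'2⟩, -⟩ := hn r' hr'0
      have hxb : x ∉ Metric.ball p r' := by
        rw [Metric.mem_ball, not_lt]; exact min_le_right _ _
      have hne : x ≠ x' := fun e => hxb (e ▸ (hU r' hr'0).2.2.2.1 hx'2)
      obtain ⟨σ, h1, h2, h3, h4⟩ := (J.of_open ho hc hx hx'1).normal hne
      obtain ⟨ρ', hρ', hb⟩ := exists_ball_disjoint h1.isCompact.isClosed
        (fun h => hp (hF (h4 h)) : p ∉ σ '' Icc 0 1)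
      exact ⟨(r', ρ', x'), σ, fun _ _ _ => ⟨hr'0, (min_le_left _ _).trans (min_le_left _ _),
        (min_le_left _ _).trans (min_le_right _ _), hρ', hx'2, h1, h2, h3, h4, hxb, hb⟩⟩
    · exact ⟨0, fun _ => 0, fun h1 h2 h3 => absurd ⟨h1, h2, h3⟩ h⟩
  choose nx sg hnx using hstep
  obtain ⟨x0, ⟨hx0, -⟩, -⟩ := (hU 1 one_pos).2.2.2.2.1 1 one_pos
  let q : ℕ → ℝ × ℝ × (ℝ × ℝ) := fun n => Nat.rec (1, 1, x0) (fun _ q => nx q) n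
  have hqS : ∀ n, q (n + 1) = nx (q n) := fun n => rfl
  have hq : ∀ n, 0 < (q n).1 ∧ 0 < (q n).2.1 ∧ (q n).2.2 ∈ U (q n).1 := by
    intro n
    induction n with
    | zero => exact ⟨one_pos, one_pos, hx0⟩
    | succ n ih =>
      have := hnx (q n) ih.1 ih.2.1 ih.2.2
      rw [hqS]; exact ⟨this.1, this.2.2.2.1, this.2.2.2.2.1⟩
  have hh := fun n => hnx (q n) (hq n).1 (hq n).2.1 (hq n).2.2
  have hhalf : ∀ n, (q (n + 1)).1 ≤ (q n).1 / 2 := fun n => (hh n).2.1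
  have hanti : Antitone (fun n => (q n).1) := antitone_nat_of_succ_le (fun n => by
    have := hhalf n; have := (hq n).1; linarith)
  have hpow : ∀ n, (q n).1 ≤ (1 / 2 : ℝ) ^ n := by
    intro n
    induction n with
    | zero => exact le_of_eq (by simp [q])
    | succ n ih => rw [pow_succ]; linarith [hhalf n]
  have htend : Filter.Tendsto (fun n => (q n).1) Filter.atTop (nhds 0) :=
    squeeze_zero (fun n => (hq n).1.le) hpow
      (tendsto_pow_atTop_nhds_zero_of_lt_one (by norm_num) (by norm_num))
  have hσU : ∀ n, sg (q n) '' Icc 0 1 ⊆ U (q n).1 := fun n => (hh n).2.2.2.2.2.2.2.2.1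
  have hσ0 : ∀ n, sg (q n) 0 = (q n).2.2 := fun n => (hh n).2.2.2.2.2.2.1
  have hσ1 : ∀ n, sg (q n) 1 = (q (n + 1)).2.2 := fun n => (hh n).2.2.2.2.2.2.2.1
  have hσB : ∀ m n, m ≤ n → sg (q n) '' Icc 0 1 ⊆ Metric.ball p (q m).1 := fun m n hmn =>
    (hσU n).trans ((hU _ (hq n).1).2.2.2.1.trans (Metric.ball_subset_ball (hanti hmn)))
  have h := chain_arc (S := F) hp (fun n => sg (q n)) (fun n => (q n).1) htend
    (fun n => (hh n).2.2.2.2.2.1) (fun n => (hσ1 n).trans (hσ0 (n + 1)).symm)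
    (fun n => (hσU n).trans (hU _ (hq n).1).2.2.1) hσB
    (fun m n hmn => by
      rw [Set.disjoint_left]
      intro z hz hz'
      refine (hh m).2.2.2.2.2.2.2.2.2.2 z ?_ hz
      exact Metric.ball_subset_ball (hh (m + 1)).2.2.1 (hσB (m + 2) n hmn hz'))
    (fun h => by
      refine (hh 0).2.2.2.2.2.2.2.2.2.1 ?_
      exact (hσ0 0) ▸ hσB 1 1 le_rfl h)
  refine ⟨sg (q 0) 0, ?_, h⟩
  rw [hσ0]
  exact (hU 1 one_pos).2.2.1 hx0

/-- Two accessible boundary points of a face are joined by an arc inside the face. -/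
lemma J.face {K F : Set (ℝ × ℝ)} (hK : IsClosed K) (hF : IsComp K F) {p q : ℝ × ℝ}
    (hp : Star K p) (hq : Star K q) (hpF : p ∈ frontier F) (hqF : q ∈ frontier F) :
    J (F ∪ {p, q}) p q := by
  have hpF' := (hF.mem_frontier hK).mp hpF
  have hqF' := (hF.mem_frontier hK).mp hqF
  obtain ⟨U, hU⟩ := hp.accessible hK hF hpF'.1
  obtain ⟨U', hU'⟩ := hq.accessible hK hF hqF'.1
  obtain ⟨x, hx, h1⟩ := J.to_accessible (fun h => hF.not_mem h hpF'.2) U hU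
  obtain ⟨y, hy, h2⟩ := J.to_accessible (fun h => hF.not_mem h hqF'.2) U' hU'
  have h3 := J.of_open (hF.isOpen hK) hF.isPreconnected hx hy
  refine (h1.symm.mono ?_).trans ((h3.mono subset_union_left).trans (h2.mono ?_))
  · exact union_subset_union_right _ (by simp)
  · exact union_subset_union_right _ (by simp)

end OPl

namespace OPl

variable {V : Type} {G : SimpleGraph V}

lemma arc_param (D : Drawing G) {u v : V} (h : G.Adj u v) : ∃ γ : ℝ → ℝ × ℝ, Arc γ 0 1 ∧
    γ 0 = D.pos u ∧ γ 1 = D.pos v ∧ D.arc h = γ '' Icc 0 1 ∧ D.arcInt h = γ '' Ioo 0 1 := by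
  obtain ⟨γ, h1, h2, h3, h4, h5⟩ := D.arc_isArc h
  refine ⟨γ, ⟨h1, h2⟩, h3, h4, h5, ?_⟩
  unfold Drawing.arcInt
  rw [h5, ← h3, ← h4]
  ext p
  constructor
  · rintro ⟨⟨t, ht, rfl⟩, hn⟩
    refine ⟨t, ⟨lt_of_le_of_ne ht.1 ?_, lt_of_le_of_ne ht.2 ?_⟩, rfl⟩
    · rintro rfl; exact hn (by simp)
    · rintro rfl; exact hn (by simp)
  · rintro ⟨t, ht, rfl⟩
    refine ⟨⟨t, ⟨ht.1.le, ht.2.le⟩, rfl⟩, ?_⟩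
    rintro (hh | hh)
    · have := h2 ⟨ht.1.le, ht.2.le⟩ (by simp) hh; linarith [ht.1]
    · have := h2 ⟨ht.1.le, ht.2.le⟩ (by simp) hh; linarith [ht.2]

lemma arcInt_symm (D : Drawing G) {u v : V} (h : G.Adj u v) : D.arcInt h.symm = D.arcInt h := by
  unfold Drawing.arcInt; rw [D.arc_symm h, pair_comm]

lemma edgeInt_eq (D : Drawing G) {u v : V} (h : G.Adj u v) : D.edgeInt s(u, v) = D.arcInt h := by
  ext p
  constructor
  · rintro ⟨x, y, hxy, he, hp⟩
    rcases Sym2.eq_iff.mp he with ⟨rfl, rfl⟩ | ⟨rfl, rfl⟩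
    · exact hp
    · rw [arcInt_symm] at hp; exact hp
  · intro hp; exact ⟨u, v, h, rfl, hp⟩

lemma edgeInt_mem (D : Drawing G) {e : Sym2 V} {p : ℝ × ℝ} (h : p ∈ D.edgeInt e) :
    e ∈ G.edgeSet := by
  obtain ⟨u, v, h, rfl, -⟩ := h; exact h

lemma arc_eq (D : Drawing G) {u v : V} (h : G.Adj u v) :
    D.arc h = {D.pos u, D.pos v} ∪ D.edgeInt s(u, v) := by
  rw [edgeInt_eq D h]
  unfold Drawing.arcInt
  rw [union_sdiff_cancel']
  · exact subset_rfl
  · obtain ⟨γ, h1, h2, h3, h4, h5⟩ := arc_param D h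
    rw [h4, ← h2, ← h3]
    rintro _ (rfl | rfl)
    · exact ⟨0, by simp, rfl⟩
    · exact ⟨1, by simp, rfl⟩

/-- the full arc of an abstract edge -/
def edgeArc (D : Drawing G) (e : Sym2 V) : Set (ℝ × ℝ) :=
  {p | ∃ (u v : V) (h : G.Adj u v), e = s(u, v) ∧ p ∈ D.arc h}

lemma edgeArc_eq (D : Drawing G) {u v : V} (h : G.Adj u v) : edgeArc D s(u, v) = D.arc h := by
  ext p
  constructor
  · rintro ⟨x, y, hxy, he, hp⟩
    rcases Sym2.eq_iff.mp he with ⟨rfl, rfl⟩ | ⟨rfl, rfl⟩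
    · exact hp
    · rw [D.arc_symm] at hp; exact hp
  · intro hp; exact ⟨u, v, h, rfl, hp⟩

lemma mem_edgeArc (D : Drawing G) {e : Sym2 V} (he : e ∈ G.edgeSet) {p : ℝ × ℝ} :
    p ∈ edgeArc D e ↔ (∃ v ∈ e, p = D.pos v) ∨ p ∈ D.edgeInt e := by
  induction e with | _ u v =>
  rw [edgeArc_eq D he, arc_eq D he]
  simp [or_and_right, exists_or]

lemma isCompact_part [Finite V] (D : Drawing G) (P : Set V) (E : Set (Sym2 V)) :
    IsCompact (D.pos '' P ∪ ⋃ e ∈ E, edgeArc D e) := by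
  refine (P.toFinite.image _).isCompact.union ?_
  refine E.toFinite.isCompact_biUnion fun e _ => ?_
  induction e with | _ u v =>
  by_cases h : G.Adj u v
  · rw [edgeArc_eq D h]
    obtain ⟨γ, h1, -, -, h4, -⟩ := arc_param D h
    rw [h4]; exact h1.isCompact
  · have : edgeArc D s(u, v) = ∅ := by
      ext p
      simp only [mem_empty_iff_false, iff_false]
      rintro ⟨x, y, hxy, he, hp⟩
      apply h
      have : s(x, y) ∈ G.edgeSet := hxy
      rw [← he] at this; exact this
    rw [this]; exact isCompact_empty

lemma mem_drawingSet (D : Drawing G) {p : ℝ × ℝ} :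
    p ∈ D.drawingSet ↔ (∃ v, p = D.pos v) ∨ ∃ e, p ∈ D.edgeInt e := by
  unfold Drawing.drawingSet
  constructor
  · rintro (⟨v, rfl⟩ | h)
    · exact Or.inl ⟨v, rfl⟩
    · simp only [mem_iUnion] at h
      obtain ⟨u, v, h, hp⟩ := h
      rw [arc_eq] at hp
      rcases hp with (rfl | rfl) | hp
      · exact Or.inl ⟨_, rfl⟩
      · exact Or.inl ⟨_, rfl⟩
      · exact Or.inr ⟨_, hp⟩
  · rintro (⟨v, rfl⟩ | ⟨e, u, v, h, rfl, hp⟩)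
    · exact Or.inl ⟨v, rfl⟩
    · right; simp only [mem_iUnion]; exact ⟨u, v, h, hp.1⟩

lemma restrict_edgeInt (D : Drawing G) {H : SimpleGraph V} (hle : H ≤ G) {e : Sym2 V} {p : ℝ × ℝ} :
    p ∈ (D.restrict hle).edgeInt e ↔ e ∈ H.edgeSet ∧ p ∈ D.edgeInt e := by
  constructor
  · rintro ⟨u, v, h, rfl, hp⟩
    exact ⟨h, u, v, hle h, rfl, hp⟩
  · rintro ⟨he, hp⟩
    induction e with | _ u v =>
    rw [edgeInt_eq (D.restrict hle) he]
    rw [edgeInt_eq D (hle he)] at hp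
    exact hp

lemma mem_K (D : Drawing G) {H : SimpleGraph V} (hle : H ≤ G) {p : ℝ × ℝ} :
    p ∈ (D.restrict hle).drawingSet ↔
      (∃ v, p = D.pos v) ∨ ∃ e ∈ H.edgeSet, p ∈ D.edgeInt e := by
  rw [mem_drawingSet]
  simp only [restrict_edgeInt]
  rfl

/-- the standing assumptions -/
structure Setup (D : Drawing G) {H : SimpleGraph V} (hle : H ≤ G) : Prop where
  fin : Finite V
  max : D.IsMaximalOnePlane
  skel : D.IsPlanarSkeleton hle

variable {D : Drawing G} {H : SimpleGraph V} {hle : H ≤ G}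

lemma pos_notMem (hg : D.IsGood) {w : V} {e : Sym2 V} : D.pos w ∉ D.edgeInt e := by
  rintro ⟨u, v, h, rfl, hp⟩
  rcases hg.1 w h hp.1 with rfl | rfl
  · exact hp.2 (by simp)
  · exact hp.2 (by simp)

lemma good_incident (hg : D.IsGood) {u : V} {e f : Sym2 V} (hue : u ∈ e) (huf : u ∈ f)
    (hef : e ≠ f) {p : ℝ × ℝ} (he : p ∈ D.edgeInt e) (hf : p ∈ D.edgeInt f) : False := by
  obtain ⟨v, rfl⟩ := hue
  obtain ⟨w, rfl⟩ := huf
  have h1 := edgeInt_mem D he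
  have h2 := edgeInt_mem D hf
  rw [edgeInt_eq D h1] at he
  rw [edgeInt_eq D h2] at hf
  have := hg.2.2 h1 h2 (by rintro rfl; exact hef rfl)
  have h3 : p ∈ D.arcInt h1 ∩ D.arcInt h2 := ⟨he, hf⟩
  rw [this] at h3; exact h3

namespace Setup


lemma good (S : Setup D hle) : D.IsGood := S.max.1

lemma disj (S : Setup D hle) {e f : Sym2 V} (he : e ∈ H.edgeSet) (hf : f ∈ H.edgeSet) (hef : e ≠ f) {p : ℝ × ℝ}
    (hpe : p ∈ D.edgeInt e) (hpf : p ∈ D.edgeInt f) : False :=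
  (S.skel.1 e f ⟨hef, p, hpe, hpf⟩).mp he hf

lemma K_isCompact (S : Setup D hle) : IsCompact (D.restrict hle).drawingSet := by
  have := S.fin
  have := isCompact_part D (univ : Set V) H.edgeSet
  convert this using 1
  ext p
  rw [mem_K]
  constructor
  · rintro (⟨v, rfl⟩ | ⟨e, he, hp⟩)
    · exact Or.inl ⟨v, trivial, rfl⟩
    · right; simp only [mem_iUnion]
      exact ⟨e, he, (mem_edgeArc D (SimpleGraph.edgeSet_mono hle he)).mpr (Or.inr hp)⟩
  · rintro (⟨v, -, rfl⟩ | h)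
    · exact Or.inl ⟨v, rfl⟩
    · simp only [mem_iUnion] at h
      obtain ⟨e, he, hp⟩ := h
      rcases (mem_edgeArc D (SimpleGraph.edgeSet_mono hle he)).mp hp with ⟨v, -, rfl⟩ | hp
      · exact Or.inl ⟨v, rfl⟩
      · exact Or.inr ⟨e, he, hp⟩

lemma K_isClosed (S : Setup D hle) : IsClosed (D.restrict hle).drawingSet := S.K_isCompact.isClosed

/-- decomposition of the drawing along an edge -/
lemma edge_decomp (S : Setup D hle) {a b : V} (hab : H.Adj a b) : ∃ (K0 : Set (ℝ × ℝ)) (γ : ℝ → ℝ × ℝ),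
    IsCompact K0 ∧ Arc γ 0 1 ∧ (∀ t ∈ Ioo (0 : ℝ) 1, γ t ∉ K0) ∧
    (D.restrict hle).drawingSet = K0 ∪ γ '' Icc 0 1 ∧ γ 0 = D.pos a ∧ γ 1 = D.pos b ∧
    γ '' Icc 0 1 = D.arc (hle hab) ∧ D.edgeInt s(a, b) = γ '' Ioo 0 1 := by
  have := S.fin
  obtain ⟨γ, h1, h2, h3, h4, h5⟩ := arc_param D (hle hab)
  have hK0 := isCompact_part D (univ : Set V) (H.edgeSet \ {s(a, b)})
  rw [← edgeInt_eq] at h5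
  refine ⟨_, γ, hK0, h1, ?_, ?_, h2, h3, h4.symm, h5⟩
  · intro t ht
    have htp : γ t ∈ D.edgeInt s(a, b) := h5 ▸ ⟨t, ht, rfl⟩
    rintro (⟨v, -, hv⟩ | h)
    · rw [← hv] at htp; exact pos_notMem S.good htp
    · simp only [mem_iUnion] at h
      obtain ⟨e, he, hp⟩ := h
      rcases (mem_edgeArc D (SimpleGraph.edgeSet_mono hle he.1)).mp hp with ⟨v, -, hv⟩ | hp
      · rw [hv] at htp; exact pos_notMem S.good htp
      · exact S.disj he.1 hab he.2 hp htp
  · rw [← h4, arc_eq D (hle hab)]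
    ext p
    rw [mem_K]
    constructor
    · rintro (⟨v, rfl⟩ | ⟨e, he, hp⟩)
      · exact Or.inl (Or.inl ⟨v, trivial, rfl⟩)
      · by_cases hea : e = s(a, b)
        · subst hea; exact Or.inr (Or.inr hp)
        · left; right; simp only [mem_iUnion]
          exact ⟨e, ⟨he, hea⟩, (mem_edgeArc D (SimpleGraph.edgeSet_mono hle he)).mpr (Or.inr hp)⟩
    · rintro ((⟨v, -, rfl⟩ | h) | ((rfl | rfl) | h))
      · exact Or.inl ⟨v, rfl⟩
      · simp only [mem_iUnion] at h
        obtain ⟨e, he, hp⟩ := h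
        rcases (mem_edgeArc D (SimpleGraph.edgeSet_mono hle he.1)).mp hp with ⟨v, -, rfl⟩ | hp
        · exact Or.inl ⟨v, rfl⟩
        · exact Or.inr ⟨e, he.1, hp⟩
      · exact Or.inl ⟨_, rfl⟩
      · exact Or.inl ⟨_, rfl⟩
      · exact Or.inr ⟨_, hab, h⟩

end Setup

end OPl

namespace OPl

variable {V : Type} {G : SimpleGraph V} {D : Drawing G} {H : SimpleGraph V} {hle : H ≤ G}

namespace Setup

lemma star_vertex (S : Setup D hle) (v : V) : Star (D.restrict hle).drawingSet (D.pos v) := by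
  classical
  have := S.fin
  have hG : ∀ {e}, e ∈ H.edgeSet → e ∈ G.edgeSet := fun he => SimpleGraph.edgeSet_mono hle he
  have hp := fun w : {w // H.Adj v w} => arc_param D (hle w.2)
  choose γ h1 h2 h3 h4 h5 using hp
  have hIntEq : ∀ (i : {w // H.Adj v w}) (t : ℝ), t ∈ Ioo (0 : ℝ) 1 →
      γ i t ∈ D.edgeInt s(v, i) := fun i t ht => by
    rw [edgeInt_eq D (hle i.2), h5]; exact ⟨t, ht, rfl⟩
  refine ⟨{w // H.Adj v w}, Fintype.ofFinite _, _, γ,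
    isCompact_part D {v}ᶜ {e | e ∈ H.edgeSet ∧ v ∉ e}, ?_, h1, h2, ?_, ?_, ?_⟩
  · rintro (⟨w, hw, hwv⟩ | h)
    · exact hw (D.pos_inj hwv)
    · simp only [mem_iUnion] at h
      obtain ⟨e, he, hp⟩ := h
      rcases (mem_edgeArc D (hG he.1)).mp hp with ⟨w, hw, hwv⟩ | hp
      · exact he.2 (D.pos_inj hwv ▸ hw)
      · exact pos_notMem S.good hp
  · intro i t ht
    have htp := hIntEq i t ht
    rintro (⟨w, hw, hwv⟩ | h)
    · rw [← hwv] at htp; exact pos_notMem S.good htp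
    · simp only [mem_iUnion] at h
      obtain ⟨e, he, hp⟩ := h
      rcases (mem_edgeArc D (hG he.1)).mp hp with ⟨w, hw, hwv⟩ | hp
      · rw [hwv] at htp; exact pos_notMem S.good htp
      · refine S.disj he.1 i.2 ?_ hp htp
        rintro rfl; exact he.2 (by simp)
  · rintro i j hij p ⟨hi, hj⟩
    rw [← h4, arc_eq D] at hi hj
    have hne : s(v, i.1) ≠ s(v, j.1) := by
      intro h; exact hij (Subtype.ext (Sym2.congr_right.mp h))
    rcases hi with (rfl | rfl) | hi
    · rfl
    · rcases hj with (hj | hj) | hj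
      · exact hj
      · exact absurd (Subtype.ext (D.pos_inj hj)) hij
      · exact absurd hj (pos_notMem S.good)
    · rcases hj with (rfl | rfl) | hj
      · rfl
      · exact absurd hi (pos_notMem S.good)
      · exact (S.disj i.2 j.2 hne hi hj).elim
  · ext p
    rw [mem_K]
    constructor
    · rintro (⟨w, rfl⟩ | ⟨e, he, hp⟩)
      · by_cases hw : w = v
        · subst hw; right; left; rfl
        · left; left; exact ⟨w, hw, rfl⟩
      · by_cases hv : v ∈ e
        · obtain ⟨w, rfl⟩ := hv
          right; right; simp only [mem_iUnion]
          refine ⟨⟨w, he⟩, ?_⟩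
          rw [← h4, arc_eq D]; exact Or.inr hp
        · left; right; simp only [mem_iUnion]
          exact ⟨e, ⟨he, hv⟩, (mem_edgeArc D (hG he)).mpr (Or.inr hp)⟩
    · rintro ((⟨w, hw, rfl⟩ | h) | (rfl | h))
      · exact Or.inl ⟨_, rfl⟩
      · simp only [mem_iUnion] at h
        obtain ⟨e, he, hp⟩ := h
        rcases (mem_edgeArc D (hG he.1)).mp hp with ⟨w, hw, hwv⟩ | hp
        · exact Or.inl ⟨w, hwv⟩
        · exact Or.inr ⟨e, he.1, hp⟩
      · exact Or.inl ⟨_, rfl⟩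
      · simp only [mem_iUnion] at h
        obtain ⟨i, hp⟩ := h
        rw [← h4, arc_eq D] at hp
        rcases hp with (rfl | rfl) | hp
        · exact Or.inl ⟨_, rfl⟩
        · exact Or.inl ⟨_, rfl⟩
        · exact Or.inr ⟨_, i.2, hp⟩

lemma star_edge (S : Setup D hle) {a b : V} (hab : H.Adj a b) {p : ℝ × ℝ}
    (hp : p ∈ D.edgeInt s(a, b)) : Star (D.restrict hle).drawingSet p := by
  obtain ⟨K0, γ, hK0, hγ, hd, hK, -, -, -, hIntEq⟩ := S.edge_decomp hab
  rw [hIntEq] at hp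
  obtain ⟨t0, ht0, rfl⟩ := hp
  have h0 := ht0.1
  have h1 := ht0.2
  let φ : Bool → ℝ → ℝ := fun i s => if i then t0 * (1 - s) else t0 + (1 - t0) * s
  have hφc : ∀ i, Continuous (φ i) := by
    intro i; cases i
    · change Continuous fun s => t0 + (1 - t0) * s; fun_prop
    · change Continuous fun s => t0 * (1 - s); fun_prop
  have hφ1 : ∀ s, φ true s = t0 * (1 - s) := fun s => rfl
  have hφ2 : ∀ s, φ false s = t0 + (1 - t0) * s := fun s => rfl
  have hm : ∀ i, MapsTo (φ i) (Icc 0 1) (Icc 0 1) := by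
    rintro (_ | _) s ⟨hs, hs'⟩
    · rw [hφ2]; constructor <;> nlinarith
    · rw [hφ1]; constructor <;> nlinarith
  have hinj : ∀ i, Function.Injective (φ i) := by
    rintro (_ | _) s s' h
    · rw [hφ2, hφ2] at h
      exact mul_left_cancel₀ (show (1 - t0) ≠ 0 by linarith) (by linarith)
    · rw [hφ1, hφ1] at h
      have := mul_left_cancel₀ h0.ne' h
      linarith
  refine ⟨Bool, inferInstance, K0, fun i => γ ∘ φ i, hK0, hd _ ht0, ?_, ?_, ?_, ?_, ?_⟩
  · intro i
    exact ⟨hγ.1.comp (hφc i).continuousOn (hm i), hγ.2.comp (hinj i).injOn (hm i)⟩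
  · rintro (_ | _)
    · simp [hφ2]
    · simp [hφ1]
  · rintro (_ | _) s ⟨hs, hs'⟩
    · apply hd; rw [hφ2]; constructor <;> nlinarith
    · apply hd; rw [hφ1]; constructor <;> nlinarith
  · have key : (fun i => γ ∘ φ i) true '' Icc 0 1 ∩ (fun i => γ ∘ φ i) false '' Icc 0 1 ⊆ {γ t0} := by
      rintro _ ⟨⟨s, hs, rfl⟩, ⟨s', hs', h⟩⟩
      have := hγ.2 (hm _ hs') (hm _ hs) h
      rw [hφ1, hφ2] at this
      have h2 : t0 * (1 - s) = t0 := by nlinarith [hs.1, hs'.1]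
      simp only [Function.comp, hφ1, h2]; rfl
    rintro (_ | _) (_ | _) hij
    · exact absurd rfl hij
    · rw [inter_comm]; exact key
    · exact key
    · exact absurd rfl hij
  · rw [hK]
    have : γ '' Icc 0 1 = {γ t0} ∪ ⋃ i, (fun i => γ ∘ φ i) i '' Icc 0 1 := by
      ext p
      constructor
      · rintro ⟨t, ht, rfl⟩
        right
        simp only [mem_iUnion]
        rcases le_total t t0 with h | h
        · refine ⟨true, 1 - t / t0, ⟨?_, ?_⟩, ?_⟩
          · have := div_le_one_of_le₀ h h0.le; linarith
          · have := div_nonneg ht.1 h0.le; linarith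
          · simp only [Function.comp, hφ1]; congr 1; field_simp; ring
        · have h3 : 0 < 1 - t0 := by linarith
          refine ⟨false, (t - t0) / (1 - t0), ⟨?_, ?_⟩, ?_⟩
          · exact div_nonneg (by linarith) h3.le
          · exact div_le_one_of_le₀ (by linarith [ht.2]) h3.le
          · simp only [Function.comp, hφ2]; congr 1; field_simp; ring
      · rintro (rfl | h)
        · exact ⟨t0, ⟨h0.le, h1.le⟩, rfl⟩
        · simp only [mem_iUnion] at h
          obtain ⟨i, s, hs, rfl⟩ := h
          exact ⟨_, hm i hs, rfl⟩
    rw [this]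

lemma frontier_edge (S : Setup D hle) {F : Set (ℝ × ℝ)} (hF : IsComp (D.restrict hle).drawingSet F)
    {a b : V} (hab : H.Adj a b) {p : ℝ × ℝ} (hp : p ∈ D.edgeInt s(a, b)) (hpF : p ∈ frontier F) :
    D.arc (hle hab) ⊆ frontier F := by
  obtain ⟨K0, γ, hK0, hγ, hd, hK, -, -, harc, hIntEq⟩ := S.edge_decomp hab
  have hcl := S.K_isClosed
  rw [← harc]
  intro q hq
  rw [hF.mem_frontier hcl]
  refine ⟨?_, hK ▸ Or.inr hq⟩
  have hpc := ((hF.mem_frontier hcl).mp hpF).1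
  rw [hIntEq] at hp
  obtain ⟨t0, ht0, rfl⟩ := hp
  obtain ⟨t, ht, rfl⟩ := hq
  rw [hK] at hF
  rcases le_total t0 t with h | h
  · exact edge_frontier hK0 hγ hd hF ht0 hpc h ht.2
  · have hm : MapsTo (fun s : ℝ => 1 - s) (Icc 0 1) (Icc 0 1) := fun s hs => by
      simp only [mem_Icc] at hs ⊢; constructor <;> linarith [hs.1, hs.2]
    have hγ' : Arc (fun s => γ (1 - s)) 0 1 :=
      ⟨hγ.1.comp (by fun_prop) hm, hγ.2.comp (fun x _ y _ h => by simpa using h) hm⟩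
    have him : (fun s => γ (1 - s)) '' Icc 0 1 = γ '' Icc 0 1 := by
      ext q; constructor
      · rintro ⟨s, hs, rfl⟩; exact ⟨_, hm hs, rfl⟩
      · rintro ⟨s, hs, rfl⟩; exact ⟨1 - s, hm hs, by simp⟩
    rw [← him] at hF
    have := edge_frontier (t0 := 1 - t0) (s := 1 - t) hK0 hγ'
      (fun s hs => hd _ ⟨by linarith [hs.2], by linarith [hs.1]⟩) hF
      ⟨by linarith [ht0.2], by linarith [ht0.1]⟩ (by simpa using hpc) (by linarith)
      (by linarith [ht.1])
    simpa using this

end Setup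

/-- blue faces -/
def Blue (D : Drawing G) {H : SimpleGraph V} (hle : H ≤ G) (F : Set (ℝ × ℝ)) : Prop :=
  (D.restrict hle).IsFace F ∧ D.IsTrueFace F

lemma Blue.comp {F : Set (ℝ × ℝ)} (h : Blue D hle F) : IsComp (D.restrict hle).drawingSet F := h.1

lemma Blue.not_pos {F : Set (ℝ × ℝ)} (h : Blue D hle F) {v : V} : D.pos v ∉ F := fun hv =>
  h.comp.not_mem hv ((mem_K D hle).mpr (Or.inl ⟨v, rfl⟩))

lemma Blue.not_edge {F : Set (ℝ × ℝ)} (h : Blue D hle F) {e : Sym2 V} {p : ℝ × ℝ}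
    (hp : p ∈ D.edgeInt e) : p ∉ F := fun hv =>
  IsComp.not_mem (K := D.drawingSet) h.2.1 hv ((mem_drawingSet D).mpr (Or.inr ⟨e, hp⟩))

lemma Setup.frontier_K (S : Setup D hle) {F : Set (ℝ × ℝ)} (h : Blue D hle F) {p : ℝ × ℝ}
    (hp : p ∈ frontier F) : (∃ v, p = D.pos v) ∨ ∃ e ∈ H.edgeSet, p ∈ D.edgeInt e :=
  (mem_K D hle).mp ((h.comp.mem_frontier S.K_isClosed).mp hp).2

lemma Setup.clean (_S : Setup D hle) {F : Set (ℝ × ℝ)} (h : Blue D hle F) {a b : V}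
    (hab : H.Adj a b) (hs : D.arc (hle hab) ⊆ frontier F) (f : Sym2 V) : ¬ D.Cross s(a, b) f := by
  rintro ⟨hne, q, hq1, hq2⟩
  refine h.2.2 q ⟨_, _, hne, hq1, hq2⟩ (hs ?_)
  rw [arc_eq]; exact Or.inr hq1

lemma Setup.clean_of_frontier (S : Setup D hle) {F : Set (ℝ × ℝ)} (h : Blue D hle F) {e : Sym2 V}
    (he : e ∈ H.edgeSet) {p : ℝ × ℝ} (hp : p ∈ D.edgeInt e) (hpF : p ∈ frontier F) (f : Sym2 V) :
    ¬ D.Cross e f := by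
  induction e with | _ a b =>
  exact S.clean h he (S.frontier_edge h.comp he hp hpF) f

/-- blue faces `F`, `F'` share the edge `ab` -/
structure Sh (D : Drawing G) {H : SimpleGraph V} (hle : H ≤ G) (F F' : Set (ℝ × ℝ)) (a b : V) :
    Prop where
  adj : H.Adj a b
  blue : Blue D hle F
  blue' : Blue D hle F'
  ne : F ≠ F'
  sub : D.arc (hle adj) ⊆ frontier F
  sub' : D.arc (hle adj) ⊆ frontier F'

lemma Sh.symm {F F' : Set (ℝ × ℝ)} {a b : V} (h : Sh D hle F F' a b) : Sh D hle F' F a b :=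
  ⟨h.adj, h.blue', h.blue, h.ne.symm, h.sub', h.sub⟩

lemma Sh.swap {F F' : Set (ℝ × ℝ)} {a b : V} (h : Sh D hle F F' a b) : Sh D hle F F' b a :=
  ⟨h.adj.symm, h.blue, h.blue', h.ne, by rw [D.arc_symm (hle h.adj)]; exact h.sub,
    by rw [D.arc_symm (hle h.adj)]; exact h.sub'⟩

lemma Sh.gadj {F F' : Set (ℝ × ℝ)} {a b : V} (h : Sh D hle F F' a b) : G.Adj a b := hle h.adj

lemma Sh.left {F F' : Set (ℝ × ℝ)} {a b : V} (h : Sh D hle F F' a b) : D.pos a ∈ frontier F :=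
  h.sub (by rw [arc_eq]; simp)

lemma Sh.clean {F F' : Set (ℝ × ℝ)} {a b : V} (S : Setup D hle) (h : Sh D hle F F' a b)
    (f : Sym2 V) : ¬ D.Cross s(a, b) f := S.clean h.blue h.adj h.sub f

lemma Setup.exists_sh (S : Setup D hle) {F F' : Set (ℝ × ℝ)} (h : Blue D hle F)
    (h' : Blue D hle F') (hA : (D.restrict hle).FaceAdj F F') : ∃ a b, Sh D hle F F' a b := by
  obtain ⟨hne, p, hp, hp', hpr, -⟩ := hA
  rcases S.frontier_K h hp with ⟨v, rfl⟩ | ⟨e, he, hpe⟩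
  · exact absurd ⟨v, rfl⟩ hpr
  · induction e with | _ a b =>
    exact ⟨a, b, he, h, h', hne, S.frontier_edge h.comp he hpe hp,
      S.frontier_edge h'.comp he hpe hp'⟩

lemma Setup.third (S : Setup D hle) {F : Set (ℝ × ℝ)} (h : Blue D hle F) {a b : V}
    (hab : H.Adj a b) {c0 : V} (ha : c0 ≠ a) (hb : c0 ≠ b) :
    ∃ c, c ≠ a ∧ c ≠ b ∧ D.pos c ∈ frontier F := by
  by_contra hcon
  push Not at hcon
  have hv : ∀ v, D.pos v ∈ frontier F → v = a ∨ v = b := by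
    intro v hv; by_contra hh; push Not at hh; exact hcon v hh.1 hh.2 hv
  obtain ⟨K0, γ, hK0, hγ, hd, hK, -, -, harc, hIntEq⟩ := S.edge_decomp hab
  have hfr : frontier F ⊆ γ '' Icc 0 1 := by
    intro z hz
    rw [harc, arc_eq]
    rcases S.frontier_K h hz with ⟨v, rfl⟩ | ⟨e, he, hpe⟩
    · rcases hv v hz with rfl | rfl <;> simp
    · right
      induction e with | _ x y =>
      have hs := S.frontier_edge h.comp he hpe hz
      have hx := hv x (hs (by rw [arc_eq]; simp))
      have hy := hv y (hs (by rw [arc_eq]; simp))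
      have hne : x ≠ y := SimpleGraph.Adj.ne he
      have : s(x, y) = s(a, b) := by
        rcases hx with rfl | rfl <;> rcases hy with rfl | rfl
        · exact absurd rfl hne
        · rfl
        · exact Sym2.eq_swap
        · exact absurd rfl hne
      rw [← this]; exact hpe
  have hc0 : D.pos c0 ∉ γ '' Icc 0 1 := by
    rw [harc]; intro hh
    rcases S.good.1 c0 _ hh with rfl | rfl
    · exact ha rfl
    · exact hb rfl
  exact h.not_pos (arc_not_separate S.K_isClosed hγ (hK ▸ subset_union_right) h.comp hfr hc0)

lemma Setup.sh_unique (S : Setup D hle) {F F1 F2 : Set (ℝ × ℝ)} {a b : V}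
    (h1 : Sh D hle F F1 a b) (h2 : Sh D hle F F2 a b) : F1 = F2 := by
  obtain ⟨K0, γ, hK0, hγ, hd, hK, -, -, harc, hIntEq⟩ := S.edge_decomp h1.adj
  have ht : (1 / 2 : ℝ) ∈ Ioo (0 : ℝ) 1 := by constructor <;> norm_num
  have hm : γ (1 / 2) ∈ D.arc (hle h1.adj) := harc ▸ ⟨_, ⟨ht.1.le, ht.2.le⟩, rfl⟩
  obtain ⟨i, j, hij, he⟩ := three_faces hK0 hγ hd ![F, F1, F2]
    (by
      intro i
      rw [← hK]
      fin_cases i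
      · exact h1.blue.comp
      · exact h1.blue'.comp
      · exact h2.blue'.comp) ht
    (by
      intro i
      fin_cases i
      · exact frontier_subset_closure (h1.sub hm)
      · exact frontier_subset_closure (h1.sub' hm)
      · exact frontier_subset_closure (h2.sub' hm))
  have n1 := h1.ne
  have n2 := h2.ne
  fin_cases i <;> fin_cases j <;> simp_all

end OPl

namespace OPl

variable {V : Type} {G : SimpleGraph V} {D : Drawing G} {H : SimpleGraph V} {hle : H ≤ G}

lemma adj_sup {v w x y : V} (h : (G ⊔ SimpleGraph.fromEdgeSet {s(v, w)}).Adj x y)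
    (hn : ¬ G.Adj x y) : s(x, y) = s(v, w) := by
  rcases (SimpleGraph.sup_adj _ _ _ _).mp h with h | h
  · exact absurd h hn
  · rw [SimpleGraph.fromEdgeSet_adj] at h; exact h.1

lemma exists_addEdge (D : Drawing G) {v w : V} (hna : ¬ G.Adj v w) (hvw : v ≠ w)
    {γ : ℝ → ℝ × ℝ} (hγ : Arc γ 0 1) (h0 : γ 0 = D.pos v) (h1 : γ 1 = D.pos w) :
    ∃ D' : Drawing (G ⊔ SimpleGraph.fromEdgeSet {s(v, w)}), D'.pos = D.pos ∧
      (∀ ⦃x y : V⦄ (h : G.Adj x y),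
        D'.arc ((SimpleGraph.sup_adj _ _ _ _).mpr (Or.inl h)) = D.arc h) ∧
      (∀ h : (G ⊔ SimpleGraph.fromEdgeSet {s(v, w)}).Adj v w, D'.arc h = γ '' Icc 0 1) := by
  classical
  let D' : Drawing (G ⊔ SimpleGraph.fromEdgeSet {s(v, w)}) :=
    { pos := D.pos
      pos_inj := D.pos_inj
      arc := fun x y _ => if hxy : G.Adj x y then D.arc hxy else γ '' Icc 0 1
      arc_symm := by
        intro x y h
        by_cases hxy : G.Adj x y
        · rw [dif_pos hxy, dif_pos hxy.symm, D.arc_symm hxy]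
        · rw [dif_neg hxy, dif_neg (fun h => hxy h.symm)]
      arc_isArc := by
        intro x y h
        by_cases hxy : G.Adj x y
        · simp only [dif_pos hxy]
          exact D.arc_isArc hxy
        · simp only [dif_neg hxy]
          rcases Sym2.eq_iff.mp (adj_sup h hxy) with ⟨rfl, rfl⟩ | ⟨rfl, rfl⟩
          · exact ⟨γ, hγ.1, hγ.2, h0, h1, rfl⟩
          · have hm : MapsTo (fun s : ℝ => 1 - s) (Icc 0 1) (Icc 0 1) := fun s hs => by
              simp only [mem_Icc] at hs ⊢; constructor <;> linarith [hs.1, hs.2]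
            refine ⟨fun s => γ (1 - s), hγ.1.comp (by fun_prop) hm,
              hγ.2.comp (fun x _ y _ h => by simpa using h) hm, by simpa using h1,
              by simpa using h0, ?_⟩
            ext q; constructor
            · rintro ⟨s, hs, rfl⟩; exact ⟨1 - s, hm hs, by simp⟩
            · rintro ⟨s, hs, rfl⟩; exact ⟨_, hm hs, rfl⟩ }
  refine ⟨D', rfl, ?_, ?_⟩
  · intro x y h; exact dif_pos h
  · intro h; exact dif_neg hna

lemma add_edge (hmax : D.IsMaximalOnePlane) {v w : V} (hvw : v ≠ w) (hna : ¬ G.Adj v w)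
    {γ : ℝ → ℝ × ℝ} (hγ : Arc γ 0 1) (h0 : γ 0 = D.pos v) (h1 : γ 1 = D.pos w)
    (n1 : ∀ u, D.pos u ∈ γ '' Icc 0 1 → u = v ∨ u = w) (e0 : Sym2 V)
    (n2 : ∀ e, ∀ p ∈ γ '' Icc 0 1, p ∈ D.edgeInt e →
      e = e0 ∧ v ∉ e0 ∧ w ∉ e0 ∧ ∀ f, ¬ D.Cross e0 f)
    (n4 : (γ '' Icc 0 1 ∩ D.edgeInt e0).Subsingleton) : False := by
  have hg := hmax.1
  obtain ⟨D', hpos, hold, hnew⟩ := exists_addEdge D hna hvw hγ h0 h1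
  have hadj' : (G ⊔ SimpleGraph.fromEdgeSet {s(v, w)}).Adj v w := by
    simp [hvw]
  have hempty : ∀ p, p ∉ D.edgeInt s(v, w) := fun p hp => hna (edgeInt_mem D hp)
  have hIntEq : ∀ e p, p ∈ D'.edgeInt e → p ∈ D.edgeInt e ∨ (e = s(v, w) ∧ p ∈ γ '' Icc 0 1) := by
    rintro e p ⟨x, y, h, rfl, hp⟩
    by_cases hxy : G.Adj x y
    · left
      refine ⟨x, y, hxy, rfl, ?_⟩
      unfold Drawing.arcInt at hp ⊢
      rw [hpos, hold hxy] at hp; exact hp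
    · right
      have he := adj_sup h hxy
      refine ⟨he, ?_⟩
      have hp' : p ∈ D'.edgeInt s(x, y) := ⟨x, y, h, rfl, hp⟩
      rw [he, edgeInt_eq D' hadj'] at hp'
      rw [← hnew hadj']; exact hp'.1
  have hcr : ∀ e f p, e ≠ f → p ∈ D'.edgeInt e → p ∈ D'.edgeInt f →
      (p ∈ D.edgeInt e ∧ p ∈ D.edgeInt f ∧ e ≠ s(v, w) ∧ f ≠ s(v, w)) ∨
      (e = s(v, w) ∧ f = e0 ∧ p ∈ γ '' Icc 0 1 ∩ D.edgeInt e0) ∨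
      (f = s(v, w) ∧ e = e0 ∧ p ∈ γ '' Icc 0 1 ∩ D.edgeInt e0) := by
    intro e f p hef he hf
    rcases hIntEq e p he with he | ⟨he, hp⟩ <;> rcases hIntEq f p hf with hf | ⟨hf, hp'⟩
    · left; refine ⟨he, hf, ?_, ?_⟩ <;> rintro rfl
      · exact hempty _ he
      · exact hempty _ hf
    · right; right
      obtain ⟨rfl, -⟩ := n2 e p hp' he
      exact ⟨hf, rfl, hp', he⟩
    · right; left
      obtain ⟨rfl, -⟩ := n2 f p hp hf
      exact ⟨he, rfl, hp, hf⟩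
    · exact absurd (he.trans hf.symm) hef
  refine hmax.2.2 v w hvw hna D' hpos hold ⟨⟨?_, ?_, ?_⟩, ?_⟩
  · intro u x y h hu
    rw [hpos] at hu
    by_cases hxy : G.Adj x y
    · rw [hold hxy] at hu; exact hg.1 u hxy hu
    · rcases Sym2.eq_iff.mp (adj_sup h hxy) with ⟨rfl, rfl⟩ | ⟨rfl, rfl⟩
      · rw [hnew] at hu; exact n1 u hu
      · rw [D'.arc_symm hadj', hnew] at hu; exact (n1 u hu).symm
  · rintro e f hef p ⟨hp1, hp2⟩ q ⟨hq1, hq2⟩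
    rcases hcr e f p hef hp1 hp2 with ⟨a1, a2, a3, a4⟩ | ⟨a1, a2, a3⟩ | ⟨a1, a2, a3⟩ <;>
    rcases hcr e f q hef hq1 hq2 with ⟨b1, b2, b3, b4⟩ | ⟨b1, b2, b3⟩ | ⟨b1, b2, b3⟩
    · exact hg.2.1 e f hef ⟨a1, a2⟩ ⟨b1, b2⟩
    · exact absurd b1 a3
    · exact absurd b1 a4
    · exact absurd a1 b3
    · exact n4 a3 b3
    · exact n4 a3 b3
    · exact absurd a1 b4
    · exact n4 a3 b3
    · exact n4 a3 b3
  · intro u x y h1 h2 hxy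
    rw [← edgeInt_eq D' h1, ← edgeInt_eq D' h2]
    rw [eq_empty_iff_forall_notMem]
    rintro p ⟨hp1, hp2⟩
    have hne : s(u, x) ≠ s(u, y) := fun h => hxy (Sym2.congr_right.mp h)
    have key : ∀ e f : Sym2 V, u ∈ e → u ∈ f → e = s(v, w) → f = e0 →
        p ∈ γ '' Icc 0 1 ∩ D.edgeInt e0 → False := by
      rintro e f hue huf rfl rfl ⟨hp, hp'⟩
      obtain ⟨-, hv, hw, -⟩ := n2 _ p hp hp'
      rcases Sym2.mem_iff.mp hue with rfl | rfl
      · exact hv huf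
      · exact hw huf
    rcases hcr _ _ p hne hp1 hp2 with ⟨a1, a2, a3, a4⟩ | ⟨a1, a2, a3⟩ | ⟨a1, a2, a3⟩
    · exact good_incident hg (u := u) (by simp) (by simp) hne a1 a2
    · exact key s(u, x) s(u, y) (by simp) (by simp) a1 a2 a3
    · exact key s(u, y) s(u, x) (by simp) (by simp) a1 a2 a3
  · rintro e f ⟨hf, p, hp1, hp2⟩ f' ⟨hf', q, hq1, hq2⟩
    rcases hcr e f p hf hp1 hp2 with ⟨a1, a2, a3, a4⟩ | ⟨a1, a2, a3⟩ | ⟨a1, a2, a3⟩ <;>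
    rcases hcr e f' q hf' hq1 hq2 with ⟨b1, b2, b3, b4⟩ | ⟨b1, b2, b3⟩ | ⟨b1, b2, b3⟩
    · exact hmax.2.1 e ⟨hf, p, a1, a2⟩ ⟨hf', q, b1, b2⟩
    · exact absurd b1 a3
    · subst b2
      exact ((n2 _ q b3.1 b3.2).2.2.2 f ⟨hf, p, a1, a2⟩).elim
    · exact absurd a1 b3
    · exact a2.trans b2.symm
    · exact absurd (a1.trans b1.symm) hf'
    · subst a2
      exact ((n2 _ p a3.1 a3.2).2.2.2 f' ⟨hf', q, b1, b2⟩).elim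
    · exact absurd (b1.trans a1.symm) hf
    · exact a1.trans b1.symm

/-- two vertices of a blue face are adjacent -/
lemma Setup.face_clique (S : Setup D hle) {F : Set (ℝ × ℝ)} (h : Blue D hle F) {v w : V}
    (hv : D.pos v ∈ frontier F) (hw : D.pos w ∈ frontier F) (hvw : v ≠ w) : G.Adj v w := by
  by_contra hna
  have hJ := J.face S.K_isClosed h.comp (S.star_vertex v) (S.star_vertex w) hv hw
  obtain ⟨γ, hγ, h0, h1, hs⟩ := hJ.normal (fun hh => hvw (D.pos_inj hh))
  refine add_edge S.max hvw hna hγ h0 h1 ?_ s(v, w) ?_ ?_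
  · intro u hu
    rcases hs hu with hu | hu | hu
    · exact (h.not_pos hu).elim
    · exact Or.inl (D.pos_inj hu)
    · exact Or.inr (D.pos_inj hu)
  · intro e p hp hpe
    rcases hs hp with hu | rfl | rfl
    · exact (h.not_edge hpe hu).elim
    · exact (pos_notMem S.good hpe).elim
    · exact (pos_notMem S.good hpe).elim
  · rintro p ⟨-, hp⟩
    exact (hna (edgeInt_mem D hp)).elim

/-- vertices opposite to a common edge of two blue faces are adjacent -/
lemma Setup.opp_adj (S : Setup D hle) {F F' : Set (ℝ × ℝ)} {a b : V} (h : Sh D hle F F' a b)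
    {c d : V} (hc : D.pos c ∈ frontier F) (hca : c ≠ a) (hcb : c ≠ b)
    (hd : D.pos d ∈ frontier F') (hda : d ≠ a) (hdb : d ≠ b) (hcd : c ≠ d) : G.Adj c d := by
  by_contra hna
  obtain ⟨K0, γ, hK0, hγ, -, hK, -, -, harc, hIntEq⟩ := S.edge_decomp h.adj
  have hpi : γ (1 / 2) ∈ D.edgeInt s(a, b) := hIntEq ▸ ⟨1 / 2, by constructor <;> norm_num, rfl⟩
  generalize γ (1 / 2) = p at hpi
  have hpa : p ∈ D.arc (hle h.adj) := by rw [arc_eq]; exact Or.inr hpi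
  have hsp := S.star_edge h.adj hpi
  have hJ1 := J.face S.K_isClosed h.blue.comp (S.star_vertex c) hsp hc (h.sub hpa)
  have hJ2 := J.face S.K_isClosed h.blue'.comp hsp (S.star_vertex d) (h.sub' hpa) hd
  have hJ := (hJ1.mono (T := F ∪ F' ∪ {p, D.pos c, D.pos d}) (by
    rintro x (hx | rfl | rfl) <;> simp [*])).trans (hJ2.mono (by
    rintro x (hx | rfl | rfl) <;> simp [*]))
  obtain ⟨γ, hγ, h0, h1, hs⟩ := hJ.normal (fun hh => hcd (D.pos_inj hh))
  have hE : ∀ e q, q ∈ γ '' Icc 0 1 → q ∈ D.edgeInt e → q = p := by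
    intro e q hq hqe
    rcases hs hq with (hx | hx) | rfl | rfl | rfl
    · exact (h.blue.not_edge hqe hx).elim
    · exact (h.blue'.not_edge hqe hx).elim
    · rfl
    · exact (pos_notMem S.good hqe).elim
    · exact (pos_notMem S.good hqe).elim
  refine add_edge S.max hcd hna hγ h0 h1 ?_ s(a, b) ?_ ?_
  · intro u hu
    rcases hs hu with (hu | hu) | hu | hu | hu
    · exact (h.blue.not_pos hu).elim
    · exact (h.blue'.not_pos hu).elim
    · rw [← hu] at hpi; exact (pos_notMem S.good hpi).elim
    · exact Or.inl (D.pos_inj hu)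
    · exact Or.inr (D.pos_inj hu)
  · intro e q hq hqe
    obtain rfl := hE e q hq hqe
    refine ⟨?_, by simp [hca, hcb], by simp [hda, hdb], h.clean S⟩
    by_contra hne
    exact h.clean S e ⟨Ne.symm hne, q, hpi, hqe⟩
  · rintro q ⟨hq, hqe⟩ q' ⟨hq', hqe'⟩
    rw [hE _ q hq hqe, hE _ q' hq' hqe']

end OPl

namespace OPl

variable {V : Type} {G : SimpleGraph V} {D : Drawing G} {H : SimpleGraph V} {hle : H ≤ G}

lemma arc_compact (D : Drawing G) {u v : V} (h : G.Adj u v) : IsCompact (D.arc h) := by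
  obtain ⟨γ, h1, -, -, h4, -⟩ := arc_param D h
  rw [h4]; exact h1.isCompact

lemma arc_preconn (D : Drawing G) {u v : V} (h : G.Adj u v) : IsPreconnected (D.arc h) := by
  obtain ⟨γ, h1, -, -, h4, -⟩ := arc_param D h
  rw [h4]; exact h1.isPreconnected

lemma Blue.arc_disj {F : Set (ℝ × ℝ)} (h : Blue D hle F) {u v : V} (huv : G.Adj u v) {x : ℝ × ℝ}
    (hx : x ∈ D.arc huv) : x ∉ F := by
  rw [arc_eq] at hx
  rcases hx with (rfl | rfl) | hx
  · exact h.not_pos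
  · exact h.not_pos
  · exact h.not_edge hx

lemma Setup.gcut (S : Setup D hle) {F F' M0 : Set (ℝ × ℝ)} {a b : V} (h : Sh D hle F F' a b)
    (hM : IsPreconnected (F ∪ F' ∪ M0)) (hM0 : ∀ x ∈ M0, x ∉ D.arc h.gadj) :
    ∃ A : Set V, a ∈ A ∧ b ∉ A ∧ (∀ v ∈ A, D.pos v ∉ M0) ∧
      (∀ v ∈ A, ∀ w, ∀ hvw : G.Adj v w, ¬ (v = a ∧ w = b) → (∀ x ∈ D.arc hvw, x ∉ M0) → w ∈ A) ∧
      (∀ F2, Blue D hle F2 → F2 ≠ F → F2 ≠ F' → ∀ v ∈ A, ∀ w, D.pos v ∈ frontier F2 →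
        D.pos w ∈ frontier F2 → (∀ x ∈ F2 ∪ {D.pos v, D.pos w}, x ∉ M0) → w ∈ A) := by
  obtain ⟨K0, γ, hK0, hγ, hd, hK, hγ0, hγ1, harc, hIntEq⟩ := S.edge_decomp h.adj
  have ht : (1 / 2 : ℝ) ∈ Ioo (0 : ℝ) 1 := by constructor <;> norm_num
  have hpi : γ (1 / 2) ∈ D.edgeInt s(a, b) := hIntEq ▸ ⟨1 / 2, ht, rfl⟩
  have hpa : γ (1 / 2) ∈ D.arc h.gadj := by rw [arc_eq]; exact Or.inr hpi
  have hsep := fun (α : Set (ℝ × ℝ)) => separation (α := α) hK0 hγ hd (hK ▸ h.blue.comp)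
    (hK ▸ h.blue'.comp) h.ne ht (frontier_subset_closure (h.sub hpa))
    (frontier_subset_closure (h.sub' hpa)) hM (by rw [harc]; exact hM0)
  generalize γ (1 / 2) = p at *
  let ok : Set (ℝ × ℝ) → Prop := fun α => (∀ x ∈ α, x ∉ F) ∧ (∀ x ∈ α, x ∉ F') ∧ p ∉ α ∧
    ∀ x ∈ α, x ∉ M0
  let A : Set V := {v | ∃ α : Set (ℝ × ℝ), IsCompact α ∧ IsPreconnected α ∧ ok α ∧
    D.pos a ∈ α ∧ D.pos v ∈ α}
  have hb : b ∉ A := by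
    rintro ⟨α, h1, h2, ⟨h3, h4, h5, h6⟩, h7, h8⟩
    exact hsep α h1 h2 h3 h4 h5 h6 (hγ0 ▸ h7) (hγ1 ▸ h8)
  have hstep : ∀ v ∈ A, ∀ w, ∀ β : Set (ℝ × ℝ), IsCompact β → IsPreconnected β → ok β →
      D.pos v ∈ β → D.pos w ∈ β → w ∈ A := by
    rintro v ⟨α, h1, h2, ⟨h3, h4, h5, h6⟩, h7, h8⟩ w β g1 g2 ⟨g3, g4, g5, g6⟩ g7 g8
    refine ⟨α ∪ β, h1.union g1, h2.union _ h8 g7 g2, ⟨?_, ?_, ?_, ?_⟩, Or.inl h7, Or.inr g8⟩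
    · rintro x (hx | hx)
      exacts [h3 x hx, g3 x hx]
    · rintro x (hx | hx)
      exacts [h4 x hx, g4 x hx]
    · rintro (hx | hx)
      exacts [h5 hx, g5 hx]
    · rintro x (hx | hx)
      exacts [h6 x hx, g6 x hx]
  have hpos : ∀ v, D.pos v ≠ p := fun v hv => pos_notMem S.good (hv ▸ hpi)
  refine ⟨A, ?_, hb, ?_, ?_, ?_⟩
  · refine ⟨{D.pos a}, isCompact_singleton, isPreconnected_singleton, ⟨?_, ?_, ?_, ?_⟩, rfl, rfl⟩
    · rintro x rfl; exact h.blue.not_pos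
    · rintro x rfl; exact h.blue'.not_pos
    · exact fun hh => hpos a hh.symm
    · rintro x rfl hh; exact hM0 _ hh (by rw [arc_eq]; simp)
  · rintro v ⟨α, h1, h2, ⟨h3, h4, h5, h6⟩, h7, h8⟩
    exact h6 _ h8
  · intro v hv w hvw hne hdis
    refine hstep v hv w (D.arc hvw) (arc_compact D hvw) (arc_preconn D hvw)
      ⟨fun x => h.blue.arc_disj hvw, fun x => h.blue'.arc_disj hvw, ?_, hdis⟩
      (by rw [arc_eq]; simp) (by rw [arc_eq]; simp)
    rw [arc_eq]
    rintro ((hh | hh) | hh)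
    · exact hpos _ hh.symm
    · exact hpos _ hh.symm
    · by_cases hs : s(v, w) = s(a, b)
      · rcases Sym2.eq_iff.mp hs with hs | ⟨rfl, rfl⟩
        · exact hne hs
        · exact hb hv
      · exact h.clean S _ ⟨Ne.symm hs, p, hpi, hh⟩
  · intro F2 hF2 hn hn' v hv w hvF hwF hdis
    by_cases hvw : v = w
    · rw [← hvw]; exact hv
    have hJ := J.face S.K_isClosed hF2.comp (S.star_vertex v) (S.star_vertex w) hvF hwF
    obtain ⟨σ, hσ, h0, h1, hs⟩ := hJ.normal (fun hh => hvw (D.pos_inj hh))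
    refine hstep v hv w (σ '' Icc 0 1) hσ.isCompact hσ.isPreconnected ⟨?_, ?_, ?_, ?_⟩
      ⟨0, by simp, h0⟩ ⟨1, by simp, h1⟩
    · intro x hx hxF
      rcases hs hx with hx | rfl | rfl
      · exact hn (hF2.comp.eq_of_inter h.blue.comp hx hxF)
      · exact h.blue.not_pos hxF
      · exact h.blue.not_pos hxF
    · intro x hx hxF
      rcases hs hx with hx | rfl | rfl
      · exact hn' (hF2.comp.eq_of_inter h.blue'.comp hx hxF)
      · exact h.blue'.not_pos hxF
      · exact h.blue'.not_pos hxF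
    · intro hx
      rcases hs hx with hx | hx | hx
      · exact hF2.not_edge hpi hx
      · exact hpos _ hx.symm
      · exact hpos _ hx.symm
    · intro x hx; exact hdis x (hs hx)

lemma preconn_insert {F : Set (ℝ × ℝ)} (hF : IsPreconnected F) {T : Set (ℝ × ℝ)}
    (hT : T ⊆ frontier F) : IsPreconnected (F ∪ T) :=
  hF.subset_closure subset_union_left
    (union_subset subset_closure (hT.trans frontier_subset_closure))

lemma Setup.cutA (S : Setup D hle) {F F' : Set (ℝ × ℝ)} {a b c : V} (h : Sh D hle F F' a b)
    (hc : D.pos c ∈ frontier F) (hc' : D.pos c ∈ frontier F') (hca : c ≠ a) (hcb : c ≠ b) :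
    ∃ A : Set V, a ∈ A ∧ b ∉ A ∧ c ∉ A ∧ ∀ v ∈ A, ∀ w, w ∉ A → G.Adj v w →
      (v = a ∧ w = b) ∨ w = c := by
  obtain ⟨A, h1, h2, h3, h4, -⟩ := S.gcut h (M0 := {D.pos c})
    (by
      have e : F ∪ F' ∪ {D.pos c} = (F ∪ {D.pos c}) ∪ (F' ∪ {D.pos c}) := by
        ext; simp; tauto
      rw [e]
      exact (preconn_insert h.blue.comp.isPreconnected (by simpa using hc)).union (D.pos c)
        (by simp) (by simp) (preconn_insert h.blue'.comp.isPreconnected (by simpa using hc')))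
    (by
      rintro x rfl hx
      rcases S.good.1 _ _ hx with hh | hh
      exacts [hca hh, hcb hh])
  refine ⟨A, h1, h2, fun hcA => h3 c hcA rfl, ?_⟩
  intro v hv w hw hvw
  by_contra hcon
  push Not at hcon
  refine hw (h4 v hv w hvw (fun hh => hcon.1 hh.1 hh.2) ?_)
  rintro x hx rfl
  rcases S.good.1 _ _ hx with hh | hh
  · exact h3 v hv (by rw [← hh]; rfl)
  · exact hcon.2 hh.symm

lemma Setup.cutB (S : Setup D hle) {F F' F2 : Set (ℝ × ℝ)} {a b c d : V} (h : Sh D hle F F' a b)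
    (hF2 : Blue D hle F2)
    (hc : D.pos c ∈ frontier F) (hc2 : D.pos c ∈ frontier F2) (hd2 : D.pos d ∈ frontier F2)
    (hd : D.pos d ∈ frontier F') (hca : c ≠ a) (hcb : c ≠ b) (hda : d ≠ a) (hdb : d ≠ b) :
    ∃ A : Set V, a ∈ A ∧ b ∉ A ∧ c ∉ A ∧ d ∉ A ∧ ∀ v ∈ A, ∀ w, w ∉ A → G.Adj v w →
      (v = a ∧ w = b) ∨ w = c ∨ w = d := by
  obtain ⟨A, h1, h2, h3, h4, -⟩ := S.gcut h (M0 := F2 ∪ {D.pos c, D.pos d})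
    (by
      have e : F ∪ F' ∪ (F2 ∪ {D.pos c, D.pos d}) =
          ((F ∪ {D.pos c}) ∪ (F2 ∪ {D.pos c, D.pos d})) ∪ (F' ∪ {D.pos d}) := by
        ext; simp; tauto
      rw [e]
      exact ((preconn_insert h.blue.comp.isPreconnected (by simpa using hc)).union (D.pos c)
        (by simp) (by simp) (preconn_insert hF2.comp.isPreconnected (by
          rintro x (rfl | rfl); exacts [hc2, hd2]))).union (D.pos d) (by simp) (by simp)
          (preconn_insert h.blue'.comp.isPreconnected (by simpa using hd)))
    (by
      rintro x (hx | rfl | rfl) hx'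
      · exact hF2.arc_disj _ hx' hx
      · rcases S.good.1 _ _ hx' with hh | hh
        exacts [hca hh, hcb hh]
      · rcases S.good.1 _ _ hx' with hh | hh
        exacts [hda hh, hdb hh])
  refine ⟨A, h1, h2, fun hcA => h3 c hcA (by simp), fun hcA => h3 d hcA (by simp), ?_⟩
  intro v hv w hw hvw
  by_contra hcon
  push Not at hcon
  refine hw (h4 v hv w hvw (fun hh => hcon.1 hh.1 hh.2) ?_)
  rintro x hx (hx' | rfl | rfl)
  · exact hF2.arc_disj _ hx hx'
  · rcases S.good.1 _ _ hx with hh | hh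
    · exact h3 v hv (by rw [← hh]; simp)
    · exact hcon.2.1 hh.symm
  · rcases S.good.1 _ _ hx with hh | hh
    · exact h3 v hv (by rw [← hh]; simp)
    · exact hcon.2.2 hh.symm

lemma Setup.cutC (S : Setup D hle) {F F' : Set (ℝ × ℝ)} {a b x d : V} (h : Sh D hle F F' a b)
    (hx : D.pos x ∈ frontier F) (hd : D.pos d ∈ frontier F')
    (hxa : x ≠ a) (hxb : x ≠ b) (hda : d ≠ a) (hdb : d ≠ b) (hxd : G.Adj x d) :
    ∃ A : Set V, a ∈ A ∧ b ∉ A ∧ x ∉ A ∧ d ∉ A ∧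
      (∀ v ∈ A, ∀ w, w ∉ A → w ≠ x → w ≠ d → G.Adj v w →
        (v = a ∧ w = b) ∨ D.Cross s(x, d) s(v, w)) ∧
      (∀ F2, Blue D hle F2 → F2 ≠ F → F2 ≠ F' → ∀ v ∈ A, ∀ w, w ∉ A → D.pos v ∈ frontier F2 →
        D.pos w ∈ frontier F2 → w = x ∨ w = d) := by
  have hmx : D.pos x ∈ D.arc hxd := by rw [arc_eq]; simp
  have hmd : D.pos d ∈ D.arc hxd := by rw [arc_eq]; simp
  obtain ⟨A, h1, h2, h3, h4, h5⟩ := S.gcut h (M0 := D.arc hxd)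
    (by
      have e : F ∪ F' ∪ D.arc hxd = ((F ∪ {D.pos x}) ∪ D.arc hxd) ∪ (F' ∪ {D.pos d}) := by
        ext p
        simp only [mem_union, mem_singleton_iff]
        constructor
        · tauto
        · rintro (((h | rfl) | h) | h | rfl) <;> tauto
      rw [e]
      exact ((preconn_insert h.blue.comp.isPreconnected (by simpa using hx)).union (D.pos x)
        (by simp) hmx (arc_preconn D hxd)).union (D.pos d) (Or.inr hmd) (by simp)
          (preconn_insert h.blue'.comp.isPreconnected (by simpa using hd)))
    (by
      intro p hp hp'
      rw [arc_eq] at hp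
      rcases hp with (rfl | rfl) | hp
      · rcases S.good.1 _ _ hp' with hh | hh
        exacts [hxa hh, hxb hh]
      · rcases S.good.1 _ _ hp' with hh | hh
        exacts [hda hh, hdb hh]
      · rw [arc_eq] at hp'
        rcases hp' with (rfl | rfl) | hp'
        · exact pos_notMem S.good hp
        · exact pos_notMem S.good hp
        · refine h.clean S s(x, d) ⟨?_, p, hp', hp⟩
          intro hs
          rcases Sym2.eq_iff.mp hs with ⟨rfl, rfl⟩ | ⟨rfl, rfl⟩
          · exact hxa rfl
          · exact hxb rfl)
  have hxA : x ∉ A := fun hh => h3 x hh hmx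
  have hdA : d ∉ A := fun hh => h3 d hh hmd
  refine ⟨A, h1, h2, hxA, hdA, ?_, ?_⟩
  · intro v hv w hw hwx hwd hvw
    by_contra hcon
    push Not at hcon
    refine hw (h4 v hv w hvw (fun hh => hcon.1 hh.1 hh.2) ?_)
    intro p hp hp'
    rw [arc_eq] at hp
    rcases hp with (rfl | rfl) | hp
    · exact h3 v hv hp'
    · rcases S.good.1 _ _ hp' with hh | hh
      exacts [hwx hh, hwd hh]
    · rw [arc_eq] at hp'
      rcases hp' with (rfl | rfl) | hp'
      · exact pos_notMem S.good hp
      · exact pos_notMem S.good hp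
      · refine hcon.2 ⟨?_, p, hp', hp⟩
        intro hs
        rcases Sym2.eq_iff.mp hs with ⟨rfl, rfl⟩ | ⟨rfl, rfl⟩
        · exact hwd rfl
        · exact hwx rfl
  · intro F2 hF2 hn hn' v hv w hw hvF hwF
    by_contra hcon
    push Not at hcon
    refine hw (h5 F2 hF2 hn hn' v hv w hvF hwF ?_)
    rintro p (hp | rfl | rfl) hp'
    · exact hF2.arc_disj _ hp' hp
    · exact h3 v hv hp'
    · rcases S.good.1 _ _ hp' with hh | hh
      exacts [hcon.1 hh, hcon.2 hh]

/-- an edge leaving a vertex set in a highly connected graph -/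
lemma kconn [Finite V] {k : ℕ} (hk : KConnected G k) {T A : Set V} (hT : T.ncard < k)
    (hA : ∃ v ∈ A, v ∉ T) (hB : ∃ v, v ∉ A ∧ v ∉ T) :
    ∃ v ∈ A, v ∉ T ∧ ∃ w, w ∉ A ∧ w ∉ T ∧ G.Adj v w := by
  obtain ⟨v, hv, hvT⟩ := hA
  obtain ⟨w, hw, hwT⟩ := hB
  by_contra hcon
  push Not at hcon
  obtain ⟨p⟩ := (hk T hT).preconnected ⟨v, hvT⟩ ⟨w, hwT⟩
  have key : ∀ (x y : (Tᶜ : Set V)) (p : (G.induce Tᶜ).Walk x y), x.1 ∈ A → y.1 ∈ A := by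
    intro x y p
    induction p with
    | nil => exact id
    | @cons x y z hxy p ih =>
      intro hx
      apply ih
      by_contra hy
      exact hcon x.1 hx x.2 y.1 hy y.2 hxy
  exact hw (key _ _ p hv)

end OPl

namespace OPl

variable {V : Type} {G : SimpleGraph V} {D : Drawing G} {H : SimpleGraph V} {hle : H ≤ G}

lemma nc2 (a b : V) : ({a, b} : Set V).ncard ≤ 2 :=
  (ncard_insert_le _ _).trans (by rw [ncard_singleton])

lemma nc3 (a b c : V) : ({a, b, c} : Set V).ncard ≤ 3 :=
  (ncard_insert_le _ _).trans (by have := nc2 b c; omega)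

lemma nc4 (a b c d : V) : ({a, b, c, d} : Set V).ncard ≤ 4 :=
  (ncard_insert_le _ _).trans (by have := nc3 b c d; omega)

lemma nc5 (a b c d e : V) : ({a, b, c, d, e} : Set V).ncard ≤ 5 :=
  (ncard_insert_le _ _).trans (by have := nc4 b c d e; omega)

lemma avoid [Finite V] {T : Set V} (h : T.ncard < Nat.card V) : ∃ v, v ∉ T := by
  by_contra hcon
  push Not at hcon
  rw [eq_univ_of_forall hcon, ncard_univ] at h
  exact lt_irrefl _ h

/-- vertices opposite to a common edge are distinct -/
lemma Setup.opp_ne (S : Setup D hle) {k : ℕ} (hc : KConnected G k) (hk : 3 ≤ k)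
    (hn : 4 ≤ Nat.card V) {F F' : Set (ℝ × ℝ)} {a b c d : V} (h : Sh D hle F F' a b)
    (hcF : D.pos c ∈ frontier F) (hca : c ≠ a) (hcb : c ≠ b) (hdF : D.pos d ∈ frontier F') :
    c ≠ d := by
  have := S.fin
  rintro rfl
  obtain ⟨A, ha, hb, hcA, hA⟩ := S.cutA h hcF hdF hca hcb
  have h1 : ∀ v ∈ A, v = a := by
    by_contra hcon
    push Not at hcon
    obtain ⟨v, hv, hva⟩ := hcon
    obtain ⟨v, hv, hvT, w, hw, hwT, hvw⟩ := kconn hc (T := {a, c}) (A := A)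
      (by have := nc2 a c; omega) ⟨v, hv, by rintro (rfl | rfl); exacts [hva rfl, hcA hv]⟩
      ⟨b, hb, by rintro (h1 | h1); exacts [h.gadj.ne h1.symm, hcb h1.symm]⟩
    rcases hA v hv w hw hvw with ⟨rfl, rfl⟩ | rfl
    · exact hvT (by simp)
    · exact hwT (by simp)
  obtain ⟨w, hw⟩ := avoid (T := {a, b, c}) (by have := nc3 a b c; omega)
  simp only [mem_insert_iff, mem_singleton_iff, not_or] at hw
  obtain ⟨v, hv, hvT, w, hw, hwT, hvw⟩ := kconn hc (T := {b, c}) (A := A)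
      (by have := nc2 b c; omega) ⟨a, ha, by rintro (h1 | h1); exacts [h.gadj.ne h1, hca h1.symm]⟩
      ⟨w, fun hh => hw.1 (h1 w hh), by rintro (rfl | rfl); exacts [hw.2.1 rfl, hw.2.2 rfl]⟩
  rcases hA v hv w hw hvw with ⟨rfl, rfl⟩ | rfl
  · exact hwT (by simp)
  · exact hwT (by simp)

/-- two adjacent blue triangles with a common apex -/
lemma Setup.common_apex (S : Setup D hle) {k : ℕ} (hc : KConnected G k) (hk : 3 ≤ k)
    {F F1 F2 : Set (ℝ × ℝ)} {a b c d : V} (h1 : Sh D hle F F1 a b) (h2 : Sh D hle F F2 a c)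
    (hbc : b ≠ c) (hd1 : D.pos d ∈ frontier F1) (hd2 : D.pos d ∈ frontier F2)
    (hda : d ≠ a) (hdb : d ≠ b) (hdc : d ≠ c) {w : V} (haw : G.Adj a w) :
    w = b ∨ w = c ∨ w = d := by
  have := S.fin
  have hab := h1.gadj.ne
  have hac := h2.gadj.ne
  obtain ⟨A, ha, hb, hcA, hdA, hA⟩ := S.cutB h1 h2.blue' h2.swap.left h2.symm.swap.left hd2 hd1
    hac.symm hbc.symm hda hdb
  obtain ⟨B, ha', hc', hb', hd', hB⟩ := S.cutB h2 h1.blue' h1.swap.left h1.symm.swap.left hd1 hd2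
    hab.symm hbc hda hdc
  by_contra hcon
  push Not at hcon
  have hwA : w ∈ A := by
    by_contra hh
    rcases hA a ha w hh haw with ⟨-, hh⟩ | hh | hh
    exacts [hcon.1 hh, hcon.2.1 hh, hcon.2.2 hh]
  have hwB : w ∈ B := by
    by_contra hh
    rcases hB a ha' w hh haw with ⟨-, hh⟩ | hh | hh
    exacts [hcon.2.1 hh, hcon.1 hh, hcon.2.2 hh]
  obtain ⟨v, ⟨hv1, hv2⟩, hvT, w, hw, hwT, hvw⟩ := kconn hc (T := {a, d}) (A := A ∩ B)
    (by have := nc2 a d; omega)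
    ⟨w, ⟨hwA, hwB⟩, by rintro (rfl | rfl); exacts [haw.ne rfl, hdA hwA]⟩
    ⟨b, fun hh => hb hh.1, by rintro (hh | hh); exacts [hab hh.symm, hdb hh.symm]⟩
  simp only [mem_insert_iff, mem_singleton_iff, not_or] at hvT hwT
  by_cases hwA : w ∈ A
  · have hwB : w ∉ B := fun hh => hw ⟨hwA, hh⟩
    rcases hB v hv2 w hwB hvw with ⟨hh, -⟩ | hh | hh
    · exact hvT.1 hh
    · exact hb (hh ▸ hwA)
    · exact hwT.2 hh
  · rcases hA v hv1 w hwA hvw with ⟨hh, -⟩ | hh | hh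
    · exact hvT.1 hh
    · have hwB : w ∉ B := hh ▸ hc'
      rcases hB v hv2 w hwB hvw with ⟨hh', -⟩ | hh' | hh'
      · exact hvT.1 hh'
      · exact hbc (hh'.symm.trans hh)
      · exact hwT.2 hh'
    · exact hwT.2 hh

lemma one_cross (S : Setup D hle) {e f g : Sym2 V} (h1 : D.Cross e f) (h2 : D.Cross e g) : f = g :=
  S.max.2.1 e h1 h2

lemma Setup.third' (S : Setup D hle) (hn : 4 ≤ Nat.card V) {F F' : Set (ℝ × ℝ)} {a b : V}
    (h : Sh D hle F F' a b) : ∃ c, c ≠ a ∧ c ≠ b ∧ D.pos c ∈ frontier F' := by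
  have := S.fin
  obtain ⟨w, hw⟩ := avoid (T := {a, b}) (by have := nc2 a b; omega)
  simp only [mem_insert_iff, mem_singleton_iff, not_or] at hw
  exact S.third h.blue' h.adj hw.1 hw.2

/-- the shared edges are not disjoint -/
lemma Setup.not_disjoint (S : Setup D hle) {k : ℕ} (hc : KConnected G k) (hk : 3 ≤ k)
    (hn : 4 ≤ Nat.card V) {F F1 F2 : Set (ℝ × ℝ)} {a b u v : V} (h1 : Sh D hle F F1 a b)
    (h2 : Sh D hle F F2 u v) (hF : F1 ≠ F2) (hua : u ≠ a) (hub : u ≠ b) (hva : v ≠ a)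
    (hvb : v ≠ b) : False := by
  have huv := h2.gadj.ne
  have hab := h1.gadj.ne
  obtain ⟨d, hda, hdb, hd⟩ := S.third' hn h1
  obtain ⟨e, heu, hev, he⟩ := S.third' hn h2
  have hud : u ≠ d := S.opp_ne hc hk hn h1 h2.left hua hub hd
  have hvd : v ≠ d := S.opp_ne hc hk hn h1 h2.swap.left hva hvb hd
  have hae : a ≠ e := S.opp_ne hc hk hn h2 h1.left hua.symm hva.symm he
  have hbe : b ≠ e := S.opp_ne hc hk hn h2 h1.swap.left hub.symm hvb.symm he
  have hav : G.Adj a v := S.face_clique h1.blue h1.left h2.swap.left hva.symm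
  have hvb' : G.Adj v b := S.face_clique h1.blue h2.swap.left h1.swap.left hvb
  by_cases hde : d = e
  · subst hde
    obtain ⟨A, ha, hb, huA, hdA, hA⟩ := S.cutB h1 h2.blue' h2.left h2.symm.left he hd
      hua hub hda hdb
    have hvA : v ∈ A := by
      by_contra hh
      rcases hA a ha v hh hav with ⟨-, hh⟩ | hh | hh
      exacts [hvb hh, huv hh.symm, hvd hh]
    rcases hA v hvA b hb hvb' with ⟨hh, -⟩ | hh | hh
    exacts [hva hh, hub hh.symm, hdb hh.symm]
  · have hadj : G.Adj u d := S.opp_adj h1 h2.left hua hub hd hda hdb hud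
    have hea : G.Adj a e := S.opp_adj h2 h1.left hua.symm hva.symm he heu hev hae
    have heb : G.Adj e b := (S.opp_adj h2 h1.swap.left hub.symm hvb.symm he heu hev hbe).symm
    obtain ⟨A, ha, hb, huA, hdA, hA, hA2⟩ := S.cutC h1 h2.left hd hua hub hda hdb hadj
    by_cases hvA : v ∈ A
    · have heA : e ∈ A := by
        by_contra hh
        rcases hA2 F2 h2.blue' h2.ne.symm hF.symm v hvA e hh h2.symm.swap.left he with hh | hh
        exacts [heu hh, hde hh.symm]
      rcases hA v hvA b hb hub.symm hdb.symm hvb' with ⟨hh, -⟩ | c1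
      · exact hva hh
      rcases hA e heA b hb hub.symm hdb.symm heb with ⟨hh, -⟩ | c2
      · exact hae hh.symm
      exact hev (Sym2.congr_left.mp (one_cross S c1 c2)).symm
    · have heA : e ∉ A := by
        intro hh
        rcases hA2 F2 h2.blue' h2.ne.symm hF.symm e hh v hvA he h2.symm.swap.left with hh | hh
        exacts [huv hh.symm, hvd hh]
      rcases hA a ha v hvA huv.symm hvd hav with ⟨-, hh⟩ | c1
      · exact hvb hh
      rcases hA a ha e heA heu (Ne.symm hde) hea with ⟨-, hh⟩ | c2
      · exact hbe hh.symm
      exact hev (Sym2.congr_right.mp (one_cross S c1 c2)).symm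

/-- the shared edges share an endpoint -/
lemma Setup.share (S : Setup D hle) {k : ℕ} (hc : KConnected G k) (hk : 3 ≤ k)
    (hn : 4 ≤ Nat.card V) {F F1 F2 : Set (ℝ × ℝ)} {a b u v : V} (h1 : Sh D hle F F1 a b)
    (h2 : Sh D hle F F2 u v) (hF : F1 ≠ F2) :
    ∃ x y z, y ≠ z ∧ Sh D hle F F1 x y ∧ Sh D hle F F2 x z := by
  have key : ∃ x y z, Sh D hle F F1 x y ∧ Sh D hle F F2 x z := by
    by_contra hcon
    push Not at hcon
    refine S.not_disjoint hc hk hn h1 h2 hF ?_ ?_ ?_ ?_ <;> rintro rfl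
    · exact hcon _ _ _ h1 h2
    · exact hcon _ _ _ h1.swap h2
    · exact hcon _ _ _ h1 h2.swap
    · exact hcon _ _ _ h1.swap h2.swap
  obtain ⟨x, y, z, g1, g2⟩ := key
  refine ⟨x, y, z, ?_, g1, g2⟩
  rintro rfl
  exact hF (S.sh_unique g1 g2)

lemma Setup.share_cross (S : Setup D hle) {k : ℕ} (hc : KConnected G k) (hk : 3 ≤ k)
    (hn : 4 ≤ Nat.card V) {F F1 F2 : Set (ℝ × ℝ)} {a b c d1 d2 x : V} (h1 : Sh D hle F F1 a b)
    (h2 : Sh D hle F F2 a c) (hF : F1 ≠ F2) (hbc : b ≠ c) (hd1 : D.pos d1 ∈ frontier F1)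
    (hd1a : d1 ≠ a) (hd1b : d1 ≠ b) (hd2 : D.pos d2 ∈ frontier F2) (hd2a : d2 ≠ a) (hd2c : d2 ≠ c)
    (hdd : d1 ≠ d2) (hx : D.pos x ∈ frontier F) (hxa : x ≠ a) (hxb : x ≠ b) :
    D.Cross s(x, d1) s(d2, b) := by
  have hab := h1.gadj.ne
  have hac := h2.gadj.ne
  have hxd : x ≠ d1 := S.opp_ne hc hk hn h1 hx hxa hxb hd1
  have hadj : G.Adj x d1 := S.opp_adj h1 hx hxa hxb hd1 hd1a hd1b hxd
  have hbd2 : b ≠ d2 := S.opp_ne hc hk hn h2 h1.swap.left hab.symm hbc hd2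
  have hadj2 : G.Adj b d2 := S.opp_adj h2 h1.swap.left hab.symm hbc hd2 hd2a hd2c hbd2
  have hxd2 : x ≠ d2 := by
    by_cases hxc : x = c
    · rw [hxc]; exact hd2c.symm
    · exact S.opp_ne hc hk hn h2 hx hxa hxc hd2
  obtain ⟨A, ha, hb, hxA, hdA, hA, hA2⟩ := S.cutC h1 hx hd1 hxa hxb hd1a hd1b hadj
  have hd2A : d2 ∈ A := by
    by_contra hh
    rcases hA2 F2 h2.blue' h2.ne.symm hF.symm a ha d2 hh h2.symm.left hd2 with hh | hh
    exacts [hxd2 hh.symm, hdd hh.symm]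
  rcases hA d2 hd2A b hb hxb.symm hd1b.symm hadj2.symm with ⟨hh, -⟩ | c1
  · exact absurd hh hd2a
  · exact c1

lemma cross_symm {e f : Sym2 V} (h : D.Cross e f) : D.Cross f e :=
  ⟨h.1.symm, by rw [inter_comm]; exact h.2⟩

lemma Setup.no_star (S : Setup D hle) {k : ℕ} (hc : KConnected G k) (hk : 3 ≤ k)
    (hn : 4 ≤ Nat.card V) {F F1 F2 F3 : Set (ℝ × ℝ)} {a b c x : V} (h1 : Sh D hle F F1 a b)
    (h2 : Sh D hle F F2 a c) (h3 : Sh D hle F F3 a x) (hF : F1 ≠ F2) (hF13 : F1 ≠ F3)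
    (hF23 : F2 ≠ F3) : False := by
  have hbc : b ≠ c := by rintro rfl; exact hF (S.sh_unique h1 h2)
  have hbx : b ≠ x := by rintro rfl; exact hF13 (S.sh_unique h1 h3)
  have hcx : c ≠ x := by rintro rfl; exact hF23 (S.sh_unique h2 h3)
  have hab := h1.gadj.ne
  have hac := h2.gadj.ne
  have hax := h3.gadj.ne
  obtain ⟨d1, hd1a, hd1b, hd1⟩ := S.third' hn h1
  obtain ⟨d2, hd2a, hd2c, hd2⟩ := S.third' hn h2
  by_cases hdd : d1 = d2
  · subst hdd
    rcases S.common_apex hc hk h1 h2 hbc hd1 hd2 hd1a hd1b hd2c h3.gadj with hh | hh | hh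
    · exact hbx hh.symm
    · exact hcx hh.symm
    · exact S.opp_ne hc hk hn h1 h3.swap.left hax.symm hbx.symm hd1 hh
  · have c1 := S.share_cross hc hk hn h1 h2 hF hbc hd1 hd1a hd1b hd2 hd2a hd2c hdd h2.swap.left
      hac.symm hbc.symm
    have c2 := S.share_cross hc hk hn h1 h2 hF hbc hd1 hd1a hd1b hd2 hd2a hd2c hdd h3.swap.left
      hax.symm hbx.symm
    exact hcx (Sym2.congr_left.mp (one_cross S (cross_symm c1) (cross_symm c2)))

lemma Setup.no_triangle_aux (S : Setup D hle) {k : ℕ} (hc : KConnected G k) (hk : 3 ≤ k)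
    (hn : 5 ≤ Nat.card V) {F F1 F2 F3 : Set (ℝ × ℝ)} {a b c d d3 : V} (h1 : Sh D hle F F1 a b)
    (h2 : Sh D hle F F2 a c) (h3 : Sh D hle F F3 b c)
    (hd1 : D.pos d ∈ frontier F1)
    (hda : d ≠ a) (hdb : d ≠ b) (hd2 : D.pos d ∈ frontier F2) (hdc : d ≠ c)
    (hd3 : D.pos d3 ∈ frontier F3) (hd3b : d3 ≠ b) (hd3c : d3 ≠ c) : False := by
  have := S.fin
  have hab := h1.gadj.ne
  have hac := h2.gadj.ne
  have hbc := h3.gadj.ne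
  have hNa := fun {w} => S.common_apex hc hk (w := w) h1 h2 hbc hd1 hd2 hda hdb hdc
  have had3 : a ≠ d3 := S.opp_ne hc hk (by omega) h3 h1.left hab hac hd3
  have hadj : G.Adj a d3 := S.opp_adj h3 h1.left hab hac hd3 hd3b hd3c had3
  have hdd : d3 = d := by
    rcases hNa hadj with hh | hh | hh
    exacts [absurd hh hd3b, absurd hh hd3c, hh]
  subst hdd
  have hNb := fun {w} => S.common_apex hc hk (w := w) h1.swap h3 hac hd1 hd3 hdb hda hdc
  have hNc := fun {w} => S.common_apex hc hk (w := w) h2.swap h3.swap hab hd2 hd3 hdc hda hdb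
  obtain ⟨w, hw⟩ := avoid (T := {a, b, c, d3}) (by have := nc4 a b c d3; omega)
  simp only [mem_insert_iff, mem_singleton_iff, not_or] at hw
  obtain ⟨v, hv, hvT, w, hw, hwT, hvw⟩ := kconn hc (T := {d3}) (A := {a, b, c})
    (by rw [ncard_singleton]; omega) ⟨a, by simp, by simpa using had3⟩
    ⟨w, by simp [hw], by simp [hw]⟩
  simp only [mem_insert_iff, mem_singleton_iff, not_or] at hw hwT hv
  rcases hv with rfl | rfl | rfl
  · have := hNa hvw; tauto
  · have := hNb hvw; tauto
  · have := hNc hvw; tauto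

lemma Setup.no_triangle (S : Setup D hle) {k : ℕ} (hc : KConnected G k) (hk : 3 ≤ k)
    (hn : 5 ≤ Nat.card V) {F F1 F2 F3 : Set (ℝ × ℝ)} {a b c : V} (h1 : Sh D hle F F1 a b)
    (h2 : Sh D hle F F2 a c) (h3 : Sh D hle F F3 b c) (hF12 : F1 ≠ F2) (hF13 : F1 ≠ F3) :
    False := by
  have hn4 : 4 ≤ Nat.card V := by omega
  have hab := h1.gadj.ne
  have hac := h2.gadj.ne
  have hbc := h3.gadj.ne
  obtain ⟨d1, hd1a, hd1b, hd1⟩ := S.third' hn4 h1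
  obtain ⟨d2, hd2a, hd2c, hd2⟩ := S.third' hn4 h2
  obtain ⟨d3, hd3b, hd3c, hd3⟩ := S.third' hn4 h3
  by_cases h12 : d1 = d2
  · subst h12
    exact S.no_triangle_aux hc hk hn h1 h2 h3 hd1 hd1a hd1b hd2 hd2c hd3 hd3b hd3c
  by_cases h13 : d1 = d3
  · subst h13
    exact S.no_triangle_aux hc hk hn h1.swap h3 h2 hd1 hd1b hd1a hd3 hd3c hd2 hd2a hd2c
  have c1 := S.share_cross hc hk hn4 h1 h2 hF12 hbc hd1 hd1a hd1b hd2 hd2a hd2c h12 h2.swap.left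
      hac.symm hbc.symm
  have c2 := S.share_cross hc hk hn4 h1.swap h3 hF13 hac hd1 hd1b hd1a hd3 hd3b hd3c h13
      h2.swap.left hbc.symm hac.symm
  rcases Sym2.eq_iff.mp (one_cross S c1 c2) with ⟨-, hh⟩ | ⟨hh, -⟩
  · exact hab hh.symm
  · exact hd2a hh

lemma Setup.case3 (S : Setup D hle) {k : ℕ} (hc : KConnected G k) (hk : 3 ≤ k)
    (hn : 5 ≤ Nat.card V) {F F1 F2 F3 : Set (ℝ × ℝ)} {a1 b1 a2 b2 a3 b3 : V}
    (h1 : Sh D hle F F1 a1 b1) (h2 : Sh D hle F F2 a2 b2) (h3 : Sh D hle F F3 a3 b3)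
    (hF12 : F1 ≠ F2) (hF13 : F1 ≠ F3) (hF23 : F2 ≠ F3) : False := by
  have hn4 : 4 ≤ Nat.card V := by omega
  obtain ⟨a, b, c, hbc, g1, g2⟩ := S.share hc hk hn4 h1 h2 hF12
  obtain ⟨x, y, z, hyz, g4, g3⟩ := S.share hc hk hn4 g1 h3 hF13
  have n1 : x ≠ a := by rintro rfl; exact S.no_star hc hk hn4 g1 g2 g3 hF12 hF13 hF23
  have n2 : z ≠ a := by rintro rfl; exact S.no_star hc hk hn4 g1 g2 g3.swap hF12 hF13 hF23
  by_cases hxb : x = b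
  · subst hxb
    by_cases hzc : z = c
    · subst hzc
      exact S.no_triangle hc hk hn g1 g2 g3 hF12 hF13
    · exact S.not_disjoint hc hk hn4 g2 g3 hF23 n1 hbc n2 hzc
  · by_cases hzb : z = b
    · subst hzb
      by_cases hxc : x = c
      · subst hxc
        exact S.no_triangle hc hk hn g1 g2 g3.swap hF12 hF13
      · exact S.not_disjoint hc hk hn4 g2 g3 hF23 n1 hxc n2 hbc
    · exact S.not_disjoint hc hk hn4 g1 g3 hF13 n1 hxb n2 hzb

lemma Setup.nb4 (S : Setup D hle) {k : ℕ} (hc : KConnected G k) (hk : 4 ≤ k)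
    (hn : 4 ≤ Nat.card V) {F F1 F2 : Set (ℝ × ℝ)} {a b c d1 d2 : V} (h1 : Sh D hle F F1 a b)
    (h2 : Sh D hle F F2 a c) (hF : F1 ≠ F2) (hbc : b ≠ c) (hd1 : D.pos d1 ∈ frontier F1)
    (hd1a : d1 ≠ a) (hd1b : d1 ≠ b) (hd2 : D.pos d2 ∈ frontier F2) (hd2a : d2 ≠ a) (hd2c : d2 ≠ c)
    (hdd : d1 ≠ d2) {w : V} (hbw : G.Adj b w) : w = a ∨ w = c ∨ w = d1 ∨ w = d2 := by
  have := S.fin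
  have hk3 : 3 ≤ k := by omega
  have hab := h1.gadj.ne
  have hac := h2.gadj.ne
  have hcd1 : c ≠ d1 := S.opp_ne hc hk3 hn h1 h2.swap.left hac.symm hbc.symm hd1
  have hadj : G.Adj c d1 := S.opp_adj h1 h2.swap.left hac.symm hbc.symm hd1 hd1a hd1b hcd1
  have cr := S.share_cross hc hk3 hn h1 h2 hF hbc hd1 hd1a hd1b hd2 hd2a hd2c hdd h2.swap.left
      hac.symm hbc.symm
  obtain ⟨A, ha, hb, hcA, hdA, hA, -⟩ := S.cutC h1 h2.swap.left hd1 hac.symm hbc.symm hd1a hd1b hadj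
  have hout : ∀ v ∈ A, ∀ w, w ∉ A → w ≠ c → w ≠ d1 → G.Adj v w → w = b ∧ (v = a ∨ v = d2) := by
    intro v hv w hw hwc hwd hvw
    rcases hA v hv w hw hwc hwd hvw with ⟨rfl, rfl⟩ | c1
    · exact ⟨rfl, Or.inl rfl⟩
    · rcases Sym2.eq_iff.mp (one_cross S c1 cr) with ⟨rfl, rfl⟩ | ⟨rfl, rfl⟩
      · exact ⟨rfl, Or.inr rfl⟩
      · exact absurd hv hb
  by_contra hcon
  push Not at hcon
  by_cases hwA : w ∈ A
  · rcases hout w hwA b hb hbc hd1b.symm hbw.symm with ⟨-, hh | hh⟩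
    exacts [hcon.1 hh, hcon.2.2.2 hh]
  · obtain ⟨v, hv, hvT, w, hw, hwT, hvw⟩ := kconn hc (T := {b, c, d1}) (A := A)
      (by have := nc3 b c d1; omega)
      ⟨a, ha, by rintro (hh | hh | hh); exacts [hab hh, hac hh, hd1a hh.symm]⟩
      ⟨w, hwA, by
        rintro (hh | hh | hh); exacts [hbw.ne hh.symm, hcon.2.1 hh, hcon.2.2.1 hh]⟩
    simp only [mem_insert_iff, mem_singleton_iff, not_or] at hwT
    exact hwT.1 (hout v hv w hw hwT.2.1 hwT.2.2 hvw).1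

lemma Setup.case4 (S : Setup D hle) {k : ℕ} (hc : KConnected G k) (hk : 4 ≤ k)
    (hn : 6 ≤ Nat.card V) {F F1 F2 : Set (ℝ × ℝ)} {a1 b1 a2 b2 : V}
    (h1 : Sh D hle F F1 a1 b1) (h2 : Sh D hle F F2 a2 b2) (hF : F1 ≠ F2) : False := by
  have := S.fin
  have hn4 : 4 ≤ Nat.card V := by omega
  have hk3 : 3 ≤ k := by omega
  obtain ⟨a, b, c, hbc, h1, h2⟩ := S.share hc hk3 hn4 h1 h2 hF
  have hab := h1.gadj.ne
  have hac := h2.gadj.ne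
  obtain ⟨d1, hd1a, hd1b, hd1⟩ := S.third' hn4 h1
  obtain ⟨d2, hd2a, hd2c, hd2⟩ := S.third' hn4 h2
  have hcd1 : c ≠ d1 := S.opp_ne hc hk3 hn4 h1 h2.swap.left hac.symm hbc.symm hd1
  have hbd2 : b ≠ d2 := S.opp_ne hc hk3 hn4 h2 h1.swap.left hab.symm hbc hd2
  by_cases hdd : d1 = d2
  · subst hdd
    obtain ⟨w, hw⟩ := avoid (T := {a, b, c, d1}) (by have := nc4 a b c d1; omega)
    simp only [mem_insert_iff, mem_singleton_iff, not_or] at hw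
    obtain ⟨v, hv, hvT, w, hw, hwT, hvw⟩ := kconn hc (T := {b, c, d1}) (A := {a})
      (by have := nc3 b c d1; omega) ⟨a, rfl, by
        rintro (hh | hh | hh); exacts [hab hh, hac hh, hd1a hh.symm]⟩
      ⟨w, by simp [hw], by simp [hw]⟩
    obtain rfl : v = a := hv
    exact hwT (S.common_apex hc hk3 h1 h2 hbc hd1 hd2 hd1a hd1b hd2c hvw)
  · have hb := fun {w} => S.nb4 hc hk hn4 (w := w) h1 h2 hF hbc hd1 hd1a hd1b hd2 hd2a hd2c hdd
    have hcc := fun {w} => S.nb4 hc hk hn4 (w := w) h2 h1 hF.symm hbc.symm hd2 hd2a hd2c hd1 hd1a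
      hd1b (Ne.symm hdd)
    obtain ⟨w, hw⟩ := avoid (T := {a, b, c, d1, d2}) (by have := nc5 a b c d1 d2; omega)
    simp only [mem_insert_iff, mem_singleton_iff, not_or] at hw
    obtain ⟨v, hv, hvT, w, hw, hwT, hvw⟩ := kconn hc (T := {a, d1, d2}) (A := {b, c})
      (by have := nc3 a d1 d2; omega) ⟨b, by simp, by
        rintro (hh | hh | hh); exacts [hab hh.symm, hd1b hh.symm, hbd2 hh]⟩
      ⟨w, by simp [hw], by simp [hw]⟩
    simp only [mem_insert_iff, mem_singleton_iff, not_or] at hw hwT hv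
    rcases hv with rfl | rfl
    · have := hb hvw; tauto
    · have := hcc hvw; tauto

lemma Setup.case5 (S : Setup D hle) {k : ℕ} (hc : KConnected G k) (hk : 5 ≤ k)
    (hn : 6 ≤ Nat.card V) {F F1 : Set (ℝ × ℝ)} {a b : V}
    (h1 : Sh D hle F F1 a b) : False := by
  have := S.fin
  have hn4 : 4 ≤ Nat.card V := by omega
  have hk3 : 3 ≤ k := by omega
  have hab := h1.gadj.ne
  obtain ⟨d, hda, hdb, hd⟩ := S.third' hn4 h1
  obtain ⟨c, hca, hcb, hcF⟩ := S.third' hn4 h1.symm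
  have hcd : c ≠ d := S.opp_ne hc hk3 hn4 h1 hcF hca hcb hd
  have hadj : G.Adj c d := S.opp_adj h1 hcF hca hcb hd hda hdb hcd
  obtain ⟨A, ha, hb, hcA, hdA, hA, -⟩ := S.cutC h1 hcF hd hca hcb hda hdb hadj
  obtain ⟨x, y, hx, hy, hyc, hyd, hout⟩ : ∃ x y, x ∈ A ∧ y ∉ A ∧ y ≠ c ∧ y ≠ d ∧
      ∀ v ∈ A, ∀ w, w ∉ A → w ≠ c → w ≠ d → G.Adj v w → (v = a ∧ w = b) ∨ (v = x ∧ w = y) := by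
    by_cases hex : ∃ x y, x ∈ A ∧ y ∉ A ∧ y ≠ c ∧ y ≠ d ∧ D.Cross s(c, d) s(x, y)
    · obtain ⟨x, y, hx, hy, hyc, hyd, hcr⟩ := hex
      refine ⟨x, y, hx, hy, hyc, hyd, fun v hv w hw hwc hwd hvw => ?_⟩
      rcases hA v hv w hw hwc hwd hvw with h | c1
      · exact Or.inl h
      · rcases Sym2.eq_iff.mp (one_cross S c1 hcr) with h | ⟨rfl, rfl⟩
        · exact Or.inr h
        · exact absurd hv hy
    · push Not at hex
      refine ⟨a, b, ha, hb, hcb.symm, hdb.symm, fun v hv w hw hwc hwd hvw => ?_⟩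
      rcases hA v hv w hw hwc hwd hvw with h | c1
      · exact Or.inl h
      · exact absurd c1 (hex v w hv hw hwc hwd)
  by_cases hAa : ∀ v ∈ A, v = a
  · obtain ⟨w, hw⟩ := avoid (T := {a, b, c, d, y}) (by have := nc5 a b c d y; omega)
    simp only [mem_insert_iff, mem_singleton_iff, not_or] at hw
    obtain ⟨v, hv, hvT, w, hw, hwT, hvw⟩ := kconn hc (T := {b, c, d, y}) (A := A)
      (by have := nc4 b c d y; omega) ⟨a, ha, by
        rintro (hh | hh | hh | hh)
        exacts [hab hh, hca hh.symm, hda hh.symm, hy (hh ▸ ha)]⟩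
      ⟨w, fun hh => hw.1 (hAa w hh), by simp [hw]⟩
    simp only [mem_insert_iff, mem_singleton_iff, not_or] at hwT
    rcases hout v hv w hw hwT.2.1 hwT.2.2.1 hvw with h | h
    · exact hwT.1 h.2
    · exact hwT.2.2.2 h.2
  · push Not at hAa
    obtain ⟨v0, hv0, hv0a⟩ := hAa
    have hcomp : ∀ w, w ∉ A → w = c ∨ w = d ∨ w = y := by
      by_contra hcon
      push Not at hcon
      obtain ⟨w, hw, hwc, hwd, hwy⟩ := hcon
      obtain ⟨v, hv, hvT, w, hw, hwT, hvw⟩ := kconn hc (T := {c, d, a, y}) (A := A)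
        (by have := nc4 c d a y; omega) ⟨v0, hv0, by
          rintro (hh | hh | hh | hh)
          exacts [hcA (hh ▸ hv0), hdA (hh ▸ hv0), hv0a hh, hy (hh ▸ hv0)]⟩
        ⟨w, hw, by
          rintro (hh | hh | hh | hh)
          exacts [hwc hh, hwd hh, hw (hh ▸ ha), hwy hh]⟩
      simp only [mem_insert_iff, mem_singleton_iff, not_or] at hwT hvT
      rcases hout v hv w hw hwT.1 hwT.2.1 hvw with h | h
      · exact hvT.2.2.1 h.1
      · exact hwT.2.2.2 h.2
    have hby : b = y := by
      rcases hcomp b hb with hh | hh | hh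
      exacts [absurd hh.symm hcb, absurd hh.symm hdb, hh]
    subst hby
    obtain ⟨w, hw⟩ := avoid (T := {a, b, c, d, x}) (by have := nc5 a b c d x; omega)
    simp only [mem_insert_iff, mem_singleton_iff, not_or] at hw
    obtain ⟨v, hv, hvT, w, hw, hwT, hvw⟩ := kconn hc (T := {a, c, d, x}) (A := {b})
      (by have := nc4 a c d x; omega) ⟨b, rfl, by
        rintro (hh | hh | hh | hh)
        exacts [hab hh.symm, hcb hh.symm, hdb hh.symm, hb (hh ▸ hx)]⟩
      ⟨w, by simp [hw], by simp [hw]⟩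
    obtain rfl : v = b := hv
    simp only [mem_insert_iff, mem_singleton_iff, not_or] at hwT hw
    have hwA : w ∈ A := by
      by_contra hh
      rcases hcomp w hh with h | h | h
      exacts [hwT.2.1 h, hwT.2.2.1 h, hw h]
    rcases hout w hwA v hb hyc hyd hvw.symm with h | h
    exacts [hwT.1 h.1, hwT.2.2.2 h.1]

end OPl

/-- Let `G` be a `k`-connected maximal 1-plane graph, `3 ≤ k ≤ 5`,
immovable if `k = 3`, with `n ≥ 5` if `k = 3` and `n ≥ 6` if `k ≥ 4`. Then every blue
vertex of the dual `G_P^*` (equivalently, every blue face of `G_P`, i.e. a face of `G_P`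
that is a true face of `G^×`) is adjacent to at most `5 - k` blue vertices of `G_P^*`. -/
theorem stmt_12 {V : Type} [Fintype V] {G : SimpleGraph V} (D : Drawing G) (k : ℕ)
    (hk3 : 3 ≤ k) (hk5 : k ≤ 5)
    (hmax : D.IsMaximalOnePlane) (hconn : KConnected G k)
    (himm : k = 3 → D.Immovable)
    (hn3 : k = 3 → 5 ≤ Fintype.card V)
    (hn4 : 4 ≤ k → 6 ≤ Fintype.card V)
    (H : SimpleGraph V) (hle : H ≤ G) (hskel : D.IsPlanarSkeleton hle) :
    ∀ F : Set (ℝ × ℝ), (D.restrict hle).IsFace F → D.IsTrueFace F →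
      {F' : Set (ℝ × ℝ) | ((D.restrict hle).IsFace F' ∧ D.IsTrueFace F') ∧
        (D.restrict hle).FaceAdj F F'}.ncard ≤ 5 - k := by
  intro F hF hF'
  have S : OPl.Setup D hle := ⟨inferInstance, hmax, hskel⟩
  have hB : OPl.Blue D hle F := ⟨hF, hF'⟩
  rw [← Nat.card_eq_fintype_card] at hn3 hn4
  by_contra hcon
  push Not at hcon
  have hsh := fun (F1 : Set (ℝ × ℝ)) (h : ((D.restrict hle).IsFace F1 ∧ D.IsTrueFace F1) ∧
    (D.restrict hle).FaceAdj F F1) => S.exists_sh hB h.1 h.2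
  obtain rfl | rfl | rfl : k = 3 ∨ k = 4 ∨ k = 5 := by omega
  · obtain ⟨F1, F2, F3, m1, m2, m3, n12, n13, n23⟩ :=
      (Set.two_lt_ncard_iff (Set.finite_of_ncard_pos (by omega))).mp hcon
    obtain ⟨a1, b1, h1⟩ := hsh F1 m1
    obtain ⟨a2, b2, h2⟩ := hsh F2 m2
    obtain ⟨a3, b3, h3⟩ := hsh F3 m3
    exact S.case3 hconn le_rfl (hn3 rfl) h1 h2 h3 n12 n13 n23
  · obtain ⟨F1, F2, m1, m2, n12⟩ :=
      (Set.one_lt_ncard_iff (Set.finite_of_ncard_pos (by omega))).mp hcon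
    obtain ⟨a1, b1, h1⟩ := hsh F1 m1
    obtain ⟨a2, b2, h2⟩ := hsh F2 m2
    exact S.case4 hconn le_rfl (hn4 le_rfl) h1 h2 n12
  · obtain ⟨F1, m1⟩ := Set.nonempty_of_ncard_ne_zero (Nat.pos_iff_ne_zero.mp hcon)
    obtain ⟨a1, b1, h1⟩ := hsh F1 m1
    exact S.case5 hconn le_rfl (hn4 (by omega)) h1
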